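/- arXiv:2005.09269 — 4 statements merged into one kernel-verified Lean document; each statement's English description precedes it below -/
import Mathlib

section
/- Let H = {rrr, rby} (the patterns: a monochromatic red triangle, and a rainbow triangle with one edge of each color). Then there exist constants C1, C2 > 0 and an integer n0 such that for all n ≥ n0, C1·n^{2/3}/(log n)^{3/2} ≤ h_2(n, H) ≤ C2·n^{2/3}·√(log n), where log denotes the base-2 logarithm. -/
/-- The three edge colors: red, blue, yellow. -/
inductive Col : Type
  | r | b | y
  deriving DecidableEq

/-- A (symmetric) 3-edge-coloring of the complete graph `K_n` on vertex set `Fin n`. -/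
structure Coloring (n : ℕ) where
  col : Fin n → Fin n → Col
  symm : ∀ i j, col i j = col j i

/-- The pattern (multiset of edge colors) of the triangle on vertices `u, v, w`. -/
def triPattern {n : ℕ} (c : Coloring n) (u v w : Fin n) : Multiset Col :=
  {c.col u v, c.col v w, c.col u w}

/-- The coloring `c` contains the pattern `P`: some triangle has color multiset `P`. -/
def Contains {n : ℕ} (c : Coloring n) (P : Multiset Col) : Prop :=
  ∃ u v w : Fin n, u ≠ v ∧ v ≠ w ∧ u ≠ w ∧ triPattern c u v w = P

/-- The coloring `c` avoids every pattern in the family `H`. -/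
def Avoids {n : ℕ} (c : Coloring n) (H : Set (Multiset Col)) : Prop :=
  ∀ P ∈ H, ¬ Contains c P

/-- A vertex set `S` is two-colored under `c`: the edges inside `S` use at most
two of the three colors, i.e. some color is missing on the edges inside `S`. -/
def TwoColored {n : ℕ} (c : Coloring n) (S : Finset (Fin n)) : Prop :=
  ∃ x : Col, ∀ i ∈ S, ∀ j ∈ S, i ≠ j → c.col i j ≠ x

/-- `h2 c` is the maximum size of a vertex set whose induced edges use at most
two of the three colors. -/
noncomputable def h2 {n : ℕ} (c : Coloring n) : ℕ :=
  sSup {k | ∃ S : Finset (Fin n), TwoColored c S ∧ S.card = k}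

/-- `h2n n H = min { h2 c : c a 3-edge-coloring of K_n avoiding all patterns in H }`. -/
noncomputable def h2n (n : ℕ) (H : Set (Multiset Col)) : ℕ :=
  sInf {m | ∃ c : Coloring n, Avoids c H ∧ h2 c = m}

/-- Pattern abbreviations. -/
def Prrr : Multiset Col := {Col.r, Col.r, Col.r}
def Pbbb : Multiset Col := {Col.b, Col.b, Col.b}
def Pyyy : Multiset Col := {Col.y, Col.y, Col.y}
def Prrb : Multiset Col := {Col.r, Col.r, Col.b}
def Prry : Multiset Col := {Col.r, Col.r, Col.y}
def Pbbr : Multiset Col := {Col.b, Col.b, Col.r}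
def Pbby : Multiset Col := {Col.b, Col.b, Col.y}
def Pyyr : Multiset Col := {Col.y, Col.y, Col.r}
def Pyyb : Multiset Col := {Col.y, Col.y, Col.b}
def Prby : Multiset Col := {Col.r, Col.b, Col.y}

set_option linter.unusedSectionVars false
set_option linter.unusedVariables false
set_option linter.constructorNameAsVariable false
set_option linter.unusedSectionVars false
set_option linter.unusedVariables false
/-! ## Lower bound -/

/-- proper colouring of a triangle-free graph on a finset -/
theorem tf_colour {α : Type*} [DecidableEq α] (R : α → α → Prop) (hs : ∀ a b, R a b → R b a)
    (ht : ∀ a b c, R a b → R b c → R a c → False) (k : ℕ) (hk : 1 ≤ k) :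
    ∀ (N : ℕ) (U : Finset α), U.card = N → ∃ f : α → ℕ, (∀ u ∈ U, f u < k + U.card / k) ∧
      ∀ u ∈ U, ∀ v ∈ U, R u v → f u ≠ f v := by
  classical
  intro N
  induction N using Nat.strong_induction_on with
  | _ N ih =>
  intro U hU
  rcases U.eq_empty_or_nonempty with rfl | hne
  · exact ⟨fun _ => 0, by simp, by simp⟩
  by_cases hd : ∃ v ∈ U, k ≤ (U.filter (fun u => R v u)).card
  · obtain ⟨v, hv, hvk⟩ := hd
    set W := U.filter (fun u => R v u) with hW
    have hWU : W ⊆ U := Finset.filter_subset _ _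
    have hc : (U \ W).card = U.card - W.card := Finset.card_sdiff_of_subset hWU
    have hcle := Finset.card_le_card hWU
    obtain ⟨f, hf1, hf2⟩ := ih (U \ W).card (by omega) (U \ W) rfl
    have hdiv : (U \ W).card / k + 1 ≤ U.card / k := by
      have h1 : (U \ W).card ≤ U.card - k := by omega
      have h2 : (U \ W).card / k ≤ (U.card - k) / k := Nat.div_le_div_right h1
      have h3 : U.card / k = (U.card - k) / k + 1 := by
        rw [← Nat.add_div_right _ (by omega : 0 < k)]
        congr 1; omega
      omega
    refine ⟨fun u => if u ∈ W then k + (U \ W).card / k else f u, ?_, ?_⟩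
    · intro u hu
      by_cases h : u ∈ W
      · simp only [h, if_true]; omega
      · simp only [h, if_false]
        have := hf1 u (by simp [hu, h])
        omega
    · intro a ha b hb hab
      by_cases h : a ∈ W <;> by_cases h' : b ∈ W <;> simp only [h, h', if_true, if_false]
      · exfalso
        have h1 := (Finset.mem_filter.1 h).2
        have h2 := (Finset.mem_filter.1 h').2
        exact ht v a b h1 hab h2
      · have := hf1 b (by simp [hb, h']); omega
      · have := hf1 a (by simp [ha, h]); omega
      · exact hf2 a (by simp [ha, h]) b (by simp [hb, h']) hab
  · push Not at hd
    obtain ⟨v, hv⟩ := hne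
    have hc : (U.erase v).card = U.card - 1 := Finset.card_erase_of_mem hv
    have hpos : 0 < U.card := Finset.card_pos.2 ⟨v, hv⟩
    obtain ⟨f, hf1, hf2⟩ := ih (U.erase v).card (by omega) (U.erase v) rfl
    have hdiv : (U.erase v).card / k ≤ U.card / k := Nat.div_le_div_right (by omega)
    have hex : ∃ c ∈ Finset.range k, c ∉ (U.filter (fun u => R v u)).image f := by
      by_contra hcon
      push Not at hcon
      have h1 : Finset.range k ⊆ (U.filter (fun u => R v u)).image f := fun c hc => hcon c hc
      have h2 := Finset.card_le_card h1
      have h3 := (Finset.card_image_le (s := U.filter (fun u => R v u)) (f := f))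
      have := hd v hv
      simp at h2; omega
    obtain ⟨c, hck, hcn⟩ := hex
    have hck : c < k := by simpa using hck
    have hirr : ∀ a, ¬ R a a := fun a h => ht a a a h h h
    refine ⟨fun u => if u = v then c else f u, ?_, ?_⟩
    · intro u hu
      by_cases h : u = v
      · simp only [h, if_true]; exact lt_of_lt_of_le hck (Nat.le_add_right _ _)
      · simp only [h, if_false]
        have := hf1 u (by simp [hu, h]); omega
    · intro a ha b hb hab
      by_cases h : a = v <;> by_cases h' : b = v <;> simp only [h, h', if_true, if_false]
      · subst h; subst h'; exact absurd hab (hirr _)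
      · subst h
        intro he
        exact hcn (Finset.mem_image.2 ⟨b, by simp [hb, hab], he.symm⟩)
      · subst h'
        intro he
        exact hcn (Finset.mem_image.2 ⟨a, by simp [ha, hs _ _ hab], he⟩)
      · exact hf2 a (by simp [ha, h]) b (by simp [hb, h']) hab

/-- adjacency in colour `x` inside `S` -/
def RR {α : Type*} (col : α → α → Col) (x : Col) (S : Finset α) (u v : α) : Prop :=
  u ∈ S ∧ v ∈ S ∧ u ≠ v ∧ col u v = x

/-- connectivity in colour `x` inside `S` -/
def Cn {α : Type*} (col : α → α → Col) (x : Col) (S : Finset α) : α → α → Prop :=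
  Relation.ReflTransGen (RR col x S)

/-- no rainbow triangle -/
def NoRb {α : Type*} (col : α → α → Col) : Prop :=
  ∀ u v w, u ≠ v → v ≠ w → u ≠ w →
    ¬ (col u v ≠ col v w ∧ col v w ≠ col u w ∧ col u v ≠ col u w)

section gallai
variable {α : Type*} [DecidableEq α] {col : α → α → Col}

theorem Cn.symm' (hs : ∀ i j, col i j = col j i) {x : Col} {S : Finset α} {u v : α}
    (h : Cn col x S u v) : Cn col x S v u := by
  have : Std.Symm (RR col x S) :=
    ⟨fun a b h => ⟨h.2.1, h.1, h.2.2.1.symm, by rw [hs]; exact h.2.2.2⟩⟩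
  exact (Relation.ReflTransGen.stdSymm (r := RR col x S)).symm _ _ h

theorem Cn.trans' {x : Col} {S : Finset α} {u v w : α}
    (h : Cn col x S u v) (h' : Cn col x S v w) : Cn col x S u w :=
  Relation.ReflTransGen.trans h h'

theorem Cn.mem' {x : Col} {S : Finset α} {u v : α}
    (h : Cn col x S u v) (hu : u ∈ S) : v ∈ S := by
  induction h with
  | refl => exact hu
  | tail _ h2 _ => exact h2.2.1

theorem cn_mono (hs : ∀ i j, col i j = col j i) (hr : NoRb col) {x : Col} {S : Finset α}
    {u w w' : α} (hu : u ∈ S) (hw : w ∈ S) (hn : ¬ Cn col x S w u) (h : Cn col x S w w') :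
    col u w = col u w' := by
  induction h with
  | refl => rfl
  | @tail a b h1 h2 ih =>
    rw [ih]
    by_contra hne
    have hua : ¬ Cn col x S w b → True := fun _ => trivial
    have key : ∀ c, Cn col x S w c → c ∈ S → u ≠ c ∧ col u c ≠ x := by
      intro c hc hcS
      have h3 : u ≠ c := by rintro rfl; exact hn hc
      refine ⟨h3, fun hx => hn (hc.trans' (Relation.ReflTransGen.single ⟨hcS, hu, h3.symm, ?_⟩))⟩
      rw [hs]; exact hx
    obtain ⟨k1, k2⟩ := key a h1 h2.1
    obtain ⟨k3, k4⟩ := key b (Relation.ReflTransGen.tail h1 h2) h2.2.1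
    exact hr u a b k1 h2.2.2.1 k3 ⟨by rw [h2.2.2.2]; exact k2, by rw [h2.2.2.2]; exact k4.symm, hne⟩

theorem third (x : Col) : ∃ y z : Col, y ≠ x ∧ z ≠ x ∧ y ≠ z := by
  cases x
  · exact ⟨.b, .y, by decide, by decide, by decide⟩
  · exact ⟨.r, .y, by decide, by decide, by decide⟩
  · exact ⟨.b, .r, by decide, by decide, by decide⟩

theorem gallai (hs : ∀ i j, col i j = col j i) (hr : NoRb col) :
    ∀ (N : ℕ) (S : Finset α), S.card = N + 2 → ∃ x : Col, ∃ u ∈ S, ∃ v ∈ S, ¬ Cn col x S u v := by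
  intro N
  induction N with
  | zero =>
    intro S hS
    obtain ⟨a, b, hab, rfl⟩ := Finset.card_eq_two.1 hS
    obtain ⟨y, _, hy, _⟩ := third (col a b)
    refine ⟨y, a, by simp, b, by simp, fun h => ?_⟩
    have : ∀ c, Cn col y {a, b} a c → c = a := by
      intro c hc
      induction hc with
      | refl => rfl
      | tail _ h2 ih =>
        subst ih
        obtain ⟨_, h3, h4, h5⟩ := h2
        simp only [Finset.mem_insert, Finset.mem_singleton] at h3
        rcases h3 with h3 | h3
        · exact h3
        · subst h3; exact absurd h5.symm hy
    exact hab (this b h).symm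
  | succ N ih =>
    intro S hS
    obtain ⟨v, hv⟩ : S.Nonempty := Finset.card_pos.1 (by omega)
    obtain ⟨x, p, hp, q, hq, hpq⟩ := ih (S.erase v) (by rw [Finset.card_erase_of_mem hv]; omega)
    by_contra hcon
    push Not at hcon
    set S' := S.erase v with hS'
    have hsub : ∀ a, a ∈ S' → a ∈ S ∧ a ≠ v := fun a ha =>
      ⟨Finset.mem_of_mem_erase ha, Finset.ne_of_mem_erase ha⟩
    have c1 : ∀ a ∈ S', ∃ a' ∈ S', Cn col x S' a a' ∧ col v a' = x := by
      intro a ha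
      have h := hcon x a (hsub a ha).1 v hv
      have : ∀ b, Cn col x S a b → (b ∈ S' ∧ Cn col x S' a b) ∨
          ∃ a' ∈ S', Cn col x S' a a' ∧ col v a' = x := by
        intro b hb
        induction hb with
        | refl => exact Or.inl ⟨ha, Relation.ReflTransGen.refl⟩
        | @tail b c h1 h2 ih =>
          rcases ih with ⟨hb, hbc⟩ | h
          · by_cases hc : c = v
            · subst hc
              exact Or.inr ⟨b, hb, hbc, by rw [hs]; exact h2.2.2.2⟩
            · have hcS : c ∈ S' := Finset.mem_erase.2 ⟨hc, h2.2.1⟩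
              exact Or.inl ⟨hcS, hbc.trans' (Relation.ReflTransGen.single ⟨hb, hcS, h2.2.2⟩)⟩
          · exact Or.inr h
      rcases this v h with h | h
      · exact absurd rfl (hsub v h.1).2
      · exact h
    have c2 : ∀ y : Col, ∃ a ∈ S', col v a = y := by
      intro y
      have h := hcon y p (hsub p hp).1 v hv
      rcases Relation.ReflTransGen.cases_tail h with h | ⟨b, _, h2⟩
      · exact absurd h.symm (hsub p hp).2
      · exact ⟨b, Finset.mem_erase.2 ⟨h2.2.2.1, h2.1⟩, by rw [hs]; exact h2.2.2.2⟩
    have c3 : ∀ y, y ≠ x → ∀ a ∈ S', col v a = y → ∀ b ∈ S', ¬ Cn col x S' a b → col a b = y := by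
      intro y hy a ha hva b hb hab
      obtain ⟨b', hb', hbb, hvb⟩ := c1 b hb
      have hab' : ¬ Cn col x S' b a := fun h => hab (h.symm' hs)
      rw [cn_mono hs hr ha hb hab' hbb]
      have hne : a ≠ b' := by rintro rfl; exact hab' hbb
      have hnx : col a b' ≠ x := fun h => hab'
        (hbb.trans' (Relation.ReflTransGen.single ⟨hb', ha, hne.symm, by rw [hs]; exact h⟩))
      by_contra hne2
      exact hr v a b' (hsub a ha).2.symm hne (hsub b' hb').2.symm
        ⟨by rw [hva]; exact fun h => hne2 h.symm, by rw [hvb]; exact hnx, by rw [hva, hvb]; exact hy⟩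
    obtain ⟨y, z, hy, hz, hyz⟩ := third x
    obtain ⟨a, ha, hva⟩ := c2 y
    obtain ⟨b, hb, hvb⟩ := c2 z
    by_cases hab : Cn col x S' a b
    · have : ∃ d ∈ S', ¬ Cn col x S' a d := by
        by_contra h
        push Not at h
        exact hpq (((h p hp).symm' hs).trans' (h q hq))
      obtain ⟨d, hd, had⟩ := this
      have hbd : ¬ Cn col x S' b d := fun h => had (hab.trans' h)
      have e1 := c3 y hy a ha hva d hd had
      have e2 := c3 z hz b hb hvb d hd hbd
      have e3 := cn_mono hs hr hd ha had hab
      rw [hs d a, hs d b, e1, e2] at e3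
      exact hyz e3
    · have e1 := c3 y hy a ha hva b hb hab
      have e2 := c3 z hz b hb hvb a ha (fun h => hab (h.symm' hs))
      rw [hs, e1] at e2
      exact hyz e2

variable [Fintype α]

/-- Red graph can be properly coloured with few colours. -/
theorem comp_colour (hs : ∀ i j, col i j = col j i) (hr : NoRb col)
    (hred : ∀ u v w, u ≠ v → v ≠ w → u ≠ w → col u v = .r → col v w = .r → col u w = .r → False)
    (X k : ℕ) (hk : 1 ≤ k)
    (hX : ∀ (S : Finset α) (x : Col), (∀ i ∈ S, ∀ j ∈ S, i ≠ j → col i j ≠ x) → S.card ≤ X)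
    (S : Finset α) (hS : ∀ u ∈ S, ∀ v ∈ S, Cn col .r S u v) :
    ∃ f : α → ℕ, (∀ u ∈ S, f u < k + X / k) ∧
      ∀ u ∈ S, ∀ v ∈ S, u ≠ v → col u v = .r → f u ≠ f v := by
  classical
  by_cases hc : S.card < 2
  · refine ⟨fun _ => 0, fun u _ => Nat.lt_of_lt_of_le hk (Nat.le_add_right _ _), fun u hu v hv huv => ?_⟩
    exact absurd (Finset.card_le_one.1 (by omega) u hu v hv) huv
  obtain ⟨x, p, hp, q, hq, hpq⟩ := gallai hs hr (S.card - 2) S (by omega)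
  have hxr : x ≠ .r := by rintro rfl; exact hpq (hS p hp q hq)
  -- representatives
  let st : Setoid α := ⟨Cn col x S, fun _ => Relation.ReflTransGen.refl,
    fun h => h.symm' hs, fun h h' => h.trans' h'⟩
  let ρ : α → α := fun u => (Quotient.mk st u).out
  have hρ : ∀ u, Cn col x S u (ρ u) := fun u =>
    Cn.symm' hs (Quotient.exact (Quotient.out_eq (Quotient.mk st u)))
  have hρe : ∀ u v, Cn col x S u v → ρ u = ρ v := by
    intro u v h
    have : Quotient.mk st u = Quotient.mk st v := Quotient.sound h
    simp only [ρ, this]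
  set U := S.image ρ with hU
  have hUS : ∀ u ∈ U, u ∈ S := by
    intro u hu
    obtain ⟨a, ha, rfl⟩ := Finset.mem_image.1 hu
    exact (hρ a).mem' ha
  have hUX : U.card ≤ X := by
    apply hX U x
    intro i hi j hj hij hx
    obtain ⟨a, ha, rfl⟩ := Finset.mem_image.1 hi
    obtain ⟨b, hb, rfl⟩ := Finset.mem_image.1 hj
    have : Cn col x S (ρ a) (ρ b) :=
      Relation.ReflTransGen.single ⟨hUS _ hi, hUS _ hj, hij, hx⟩
    exact hij (hρe a b (((hρ a).trans' this).trans' ((hρ b).symm' hs)))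
  obtain ⟨f, hf1, hf2⟩ := tf_colour (fun u v => u ≠ v ∧ col u v = .r)
    (fun a b h => ⟨h.1.symm, by rw [hs]; exact h.2⟩)
    (fun a b c h1 h2 h3 => hred a b c h1.1 h2.1 h3.1 h1.2 h2.2 h3.2) k hk _ U rfl
  refine ⟨fun u => f (ρ u), ?_, ?_⟩
  · intro u hu
    have h1 := hf1 (ρ u) (Finset.mem_image_of_mem _ hu)
    have : U.card / k ≤ X / k := Nat.div_le_div_right hUX
    show f (ρ u) < _
    omega
  · intro u hu v hv huv hcol
    have hn : ¬ Cn col x S u v := by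
      intro huv'
      have h0 : ∃ w ∈ S, ¬ Cn col x S u w := by
        by_contra h
        push Not at h
        exact hpq (((h p hp).symm' hs).trans' (h q hq))
      obtain ⟨w, hw, huw⟩ := h0
      have hex : ∀ c, Cn col .r S u c → Cn col x S u c ∨
          ∃ a b, a ∈ S ∧ b ∈ S ∧ Cn col x S u a ∧ ¬ Cn col x S u b ∧ col a b = .r := by
        intro c hc
        induction hc with
        | refl => exact Or.inl Relation.ReflTransGen.refl
        | @tail a b h1 h2 ih =>
          rcases ih with ih | ih
          · by_cases hb : Cn col x S u b
            · exact Or.inl hb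
            · exact Or.inr ⟨a, b, h2.1, h2.2.1, ih, hb, h2.2.2.2⟩
          · exact Or.inr ih
      rcases hex w (hS u hu w hw) with h | ⟨a, b, ha, hb, hua, hub, hab⟩
      · exact huw h
      · have e1 := cn_mono hs hr hb hu hub hua
        have e2 := cn_mono hs hr hb hu hub huv'
        have hbu : b ≠ u := by rintro rfl; exact hub Relation.ReflTransGen.refl
        have hbv : b ≠ v := by rintro rfl; exact hub huv'
        rw [hs b a, hab] at e1
        rw [e1] at e2
        exact hred b u v hbu huv hbv e1 hcol e2.symm
    have hn' : ¬ Cn col x S v u := fun h => hn (h.symm' hs)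
    have e1 := cn_mono hs hr hu hv hn' (hρ v)
    have hn2 : ¬ Cn col x S u (ρ v) := fun h => hn (h.trans' ((hρ v).symm' hs))
    have e2 := cn_mono hs hr ((hρ v).mem' hv) hu hn2 (hρ u)
    have e3 : col (ρ u) (ρ v) = .r := by
      rw [hs, ← e2, hs, ← e1, hcol]
    have hne : ρ u ≠ ρ v := by
      intro h
      exact hn ((hρ u).trans' (h ▸ (hρ v).symm' hs))
    exact hf2 _ (Finset.mem_image_of_mem _ hu) _ (Finset.mem_image_of_mem _ hv) ⟨hne, e3⟩

theorem lower_nat (hs : ∀ i j, col i j = col j i) (hr : NoRb col)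
    (hred : ∀ u v w, u ≠ v → v ≠ w → u ≠ w → col u v = .r → col v w = .r → col u w = .r → False)
    (X k : ℕ) (hk : 1 ≤ k)
    (hX : ∀ (S : Finset α) (x : Col), (∀ i ∈ S, ∀ j ∈ S, i ≠ j → col i j ≠ x) → S.card ≤ X) :
    Fintype.card α ≤ (k + X / k) * X := by
  classical
  let comp : α → Finset α := fun v => Finset.univ.filter (fun u => Cn col .r Finset.univ v u)
  have hmem : ∀ v u, u ∈ comp v ↔ Cn col .r Finset.univ v u := by intro v u; simp [comp]
  have hcomp : ∀ v, ∀ a ∈ comp v, ∀ b ∈ comp v, Cn col .r (comp v) a b := by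
    intro v
    have h1 : ∀ b, Cn col .r Finset.univ v b → Cn col .r (comp v) v b := by
      intro b hb
      induction hb with
      | refl => exact Relation.ReflTransGen.refl
      | @tail a b h1 h2 ih =>
        exact Relation.ReflTransGen.tail ih ⟨(hmem v a).2 h1,
          (hmem v b).2 (Relation.ReflTransGen.tail h1 h2), h2.2.2⟩
    intro a ha b hb
    exact ((h1 a ((hmem v a).1 ha)).symm' hs).trans' (h1 b ((hmem v b).1 hb))
  have H : ∀ S : Finset α, ∃ f : α → ℕ, (∀ u ∈ S, ∀ v ∈ S, Cn col .r S u v) →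
      (∀ u ∈ S, f u < k + X / k) ∧
      ∀ u ∈ S, ∀ v ∈ S, u ≠ v → col u v = .r → f u ≠ f v := by
    intro S
    by_cases h : ∀ u ∈ S, ∀ v ∈ S, Cn col .r S u v
    · obtain ⟨f, hf⟩ := comp_colour hs hr hred X k hk hX S h
      exact ⟨f, fun _ => hf⟩
    · exact ⟨fun _ => 0, fun h' => absurd h' h⟩
  choose F hF using H
  let f : α → ℕ := fun v => F (comp v) v
  have hself : ∀ v, v ∈ comp v := fun v => (hmem v v).2 Relation.ReflTransGen.refl
  have hf1 : ∀ v, f v < k + X / k := fun v => (hF (comp v) (hcomp v)).1 v (hself v)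
  have hf2 : ∀ u v, u ≠ v → col u v = .r → f u ≠ f v := by
    intro u v huv hc
    have huv' : Cn col .r Finset.univ u v :=
      Relation.ReflTransGen.single ⟨Finset.mem_univ _, Finset.mem_univ _, huv, hc⟩
    have he : comp u = comp v := by
      ext w
      rw [hmem, hmem]
      exact ⟨fun h => (huv'.symm' hs).trans' h, fun h => huv'.trans' h⟩
    have := (hF (comp u) (hcomp u)).2 u (hself u) v ((hmem u v).2 huv') huv hc
    simpa only [f, ← he] using this
  have := Finset.card_eq_sum_card_fiberwise (s := (Finset.univ : Finset α)) (f := f)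
    (t := Finset.range (k + X / k)) (fun v _ => by simpa using hf1 v)
  rw [Finset.card_univ] at this
  rw [this]
  calc _ ≤ ∑ _i ∈ Finset.range (k + X / k), X := by
        apply Finset.sum_le_sum
        intro i _
        apply hX _ .r
        intro a ha b hb hab hc
        simp only [Finset.mem_filter] at ha hb
        exact hf2 a b hab hc (ha.2.trans hb.2.symm)
    _ = _ := by simp
end gallai

theorem h2n_le_of {n : ℕ} {H : Set (Multiset Col)} (c : Coloring n) (hc : Avoids c H) (B : ℕ)
    (hB : ∀ S : Finset (Fin n), TwoColored c S → S.card ≤ B) : h2n n H ≤ B := by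
  have h1 : h2 c ≤ B := by
    apply csSup_le'
    rintro k ⟨S, hS, rfl⟩
    exact hB S hS
  have h2 : h2n n H ≤ h2 c := Nat.sInf_le (m := h2 c) ⟨c, hc, rfl⟩
  exact h2.trans h1

theorem exists_h2n (n : ℕ) : ∃ c : Coloring n, Avoids c {Prrr, Prby} ∧
    ∀ S : Finset (Fin n), TwoColored c S → S.card ≤ h2n n {Prrr, Prby} := by
  have hne : {m | ∃ c : Coloring n, Avoids c {Prrr, Prby} ∧ h2 c = m}.Nonempty := by
    refine ⟨_, Coloring.mk (fun _ _ => .b) (fun _ _ => rfl), ?_, rfl⟩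
    intro P hP
    rintro ⟨u, v, w, _, _, _, h⟩
    simp only [Set.mem_insert_iff, Set.mem_singleton_iff] at hP
    rcases hP with rfl | rfl
    · exact absurd h (show ¬ (({Col.b, Col.b, Col.b} : Multiset Col) = {Col.r, Col.r, Col.r}) by decide)
    · exact absurd h (show ¬ (({Col.b, Col.b, Col.b} : Multiset Col) = {Col.r, Col.b, Col.y}) by decide)
  obtain ⟨c, hc, he⟩ := Nat.sInf_mem hne
  refine ⟨c, hc, fun S hS => ?_⟩
  have : h2n n {Prrr, Prby} = h2 c := he.symm
  rw [this]
  refine le_csSup ⟨n, ?_⟩ ⟨S, hS, rfl⟩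
  rintro k ⟨S, _, rfl⟩
  simpa using S.card_le_univ

theorem h2n_lower_nat (n k : ℕ) (hk : 0 < k) :
    n ≤ (k + h2n n {Prrr, Prby} / k) * h2n n {Prrr, Prby} := by
  obtain ⟨c, hc, hS⟩ := exists_h2n n
  have hnr : NoRb c.col := by
    intro u v w huv hvw huw ⟨h1, h2, h3⟩
    have : Contains c Prby := by
      refine ⟨u, v, w, huv, hvw, huw, ?_⟩
      unfold triPattern Prby
      revert h1 h2 h3
      generalize c.col u v = x1
      generalize c.col v w = x2
      generalize c.col u w = x3
      cases x1 <;> cases x2 <;> cases x3 <;> decide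
    exact hc _ (by simp) this
  have hrr : ∀ u v w, u ≠ v → v ≠ w → u ≠ w → c.col u v = .r → c.col v w = .r → c.col u w = .r → False := by
    intro u v w huv hvw huw h1 h2 h3
    have : Contains c Prrr := by
      refine ⟨u, v, w, huv, hvw, huw, ?_⟩
      unfold triPattern Prrr
      rw [h1, h2, h3]
    exact hc _ (by simp) this
  have := lower_nat c.symm hnr hrr (h2n n {Prrr, Prby}) k hk (fun S x h => hS S ⟨x, h⟩)
  simpa using this

theorem h2n_lower : ∃ C1 : ℝ, 0 < C1 ∧ ∀ n : ℕ, 2 ≤ n →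
      C1 * (n : ℝ) ^ ((2 : ℝ) / 3) / Real.logb 2 n ^ ((3 : ℝ) / 2)
          ≤ (h2n n {Prrr, Prby} : ℝ) := by
  refine ⟨1 / 9, by norm_num, fun n hn => ?_⟩
  set X := h2n n {Prrr, Prby} with hX
  have h0 := h2n_lower_nat n (Nat.sqrt X + 1) (Nat.succ_pos _)
  rw [← hX] at h0
  have hX1 : 1 ≤ X := by
    by_contra h
    have : X = 0 := by omega
    rw [this] at h0; omega
  have hs : X / (Nat.sqrt X + 1) ≤ Nat.sqrt X := by
    rw [← Nat.lt_add_one_iff, Nat.div_lt_iff_lt_mul (Nat.succ_pos _)]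
    exact Nat.lt_succ_sqrt X
  have h1 : n ≤ (3 * Nat.sqrt X) * X := by
    refine h0.trans (Nat.mul_le_mul_right _ ?_)
    have : 1 ≤ Nat.sqrt X := Nat.sqrt_pos.2 hX1
    omega
  have h2 : n ^ 2 ≤ 9 * X ^ 3 := by
    calc n ^ 2 ≤ ((3 * Nat.sqrt X) * X) ^ 2 := Nat.pow_le_pow_left h1 2
      _ = 9 * X^2 * (Nat.sqrt X)^2 := by ring
      _ ≤ 9 * X^2 * X := Nat.mul_le_mul_left _ (Nat.sqrt_le' X)
      _ = _ := by ring
  have h3 : (n:ℝ) ^ 2 ≤ 9 * (X:ℝ) ^ 3 := by exact_mod_cast h2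
  have hn0 : (0:ℝ) ≤ n := Nat.cast_nonneg n
  have hX0 : (0:ℝ) ≤ X := Nat.cast_nonneg X
  have h4 : (n:ℝ) ^ ((2:ℝ)/3) ≤ 9 * X := by
    have e : (n:ℝ) ^ ((2:ℝ)/3) = ((n:ℝ)^2) ^ ((1:ℝ)/3) := by
      rw [← Real.rpow_natCast, ← Real.rpow_mul hn0]; norm_num
    have e2 : (9 * (X:ℝ)) = ((9 * (X:ℝ))^3) ^ ((1:ℝ)/3) := by
      rw [← Real.rpow_natCast, ← Real.rpow_mul (by positivity)]; norm_num
    rw [e, e2]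
    apply Real.rpow_le_rpow (by positivity) _ (by norm_num)
    nlinarith [pow_nonneg hX0 3]
  have hl : 1 ≤ Real.logb 2 n := by
    rw [Real.le_logb_iff_rpow_le (by norm_num) (by positivity)]
    simpa using (by exact_mod_cast hn : (2:ℝ) ≤ n)
  have hl2 : 1 ≤ Real.logb 2 n ^ ((3:ℝ)/2) := Real.one_le_rpow hl (by norm_num)
  calc _ ≤ 1 / 9 * (n : ℝ) ^ ((2 : ℝ) / 3) := div_le_self (by positivity) hl2
    _ ≤ _ := by linarith

/-! ### Elementary finite probability -/
section prob

/-- uniform expectation -/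
noncomputable def Ex {Ω : Type*} [Fintype Ω] (f : Ω → ℝ) : ℝ := (∑ w, f w) / Fintype.card Ω

open Classical in
/-- uniform probability -/
noncomputable def Pr {Ω : Type*} [Fintype Ω] (P : Ω → Prop) : ℝ :=
  Ex (fun w => if P w then (1:ℝ) else 0)

variable {Ω Ω' : Type*} [Fintype Ω] [Fintype Ω']

theorem Ex_mono {f g : Ω → ℝ} (h : ∀ w, f w ≤ g w) : Ex f ≤ Ex g := by
  unfold Ex
  gcongr with w
  exact h w

theorem Ex_nonneg {f : Ω → ℝ} (h : ∀ w, 0 ≤ f w) : 0 ≤ Ex f :=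
  div_nonneg (Finset.sum_nonneg fun w _ => h w) (Nat.cast_nonneg _)

theorem Ex_add (f g : Ω → ℝ) : Ex (fun w => f w + g w) = Ex f + Ex g := by
  unfold Ex
  rw [Finset.sum_add_distrib, add_div]

theorem Ex_mul_left (c : ℝ) (f : Ω → ℝ) : Ex (fun w => c * f w) = c * Ex f := by
  unfold Ex
  rw [← Finset.mul_sum, mul_div_assoc]

theorem Ex_sum {ι : Type*} (s : Finset ι) (f : ι → Ω → ℝ) :
    Ex (fun w => ∑ i ∈ s, f i w) = ∑ i ∈ s, Ex (f i) := by
  unfold Ex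
  rw [Finset.sum_comm, Finset.sum_div]

theorem Ex_const [Nonempty Ω] (c : ℝ) : Ex (fun _ : Ω => c) = c := by
  unfold Ex
  simp

theorem Ex_equiv (e : Ω ≃ Ω') (f : Ω' → ℝ) : Ex (fun w => f (e w)) = Ex f := by
  unfold Ex
  rw [Equiv.sum_comp e f, Fintype.card_congr e]

theorem Ex_prod {ι α : Type*} [Fintype ι] [DecidableEq ι] [Fintype α] (g : ι → α → ℝ) :
    Ex (fun w : ι → α => ∏ i, g i (w i)) = ∏ i, Ex (g i) := by
  unfold Ex
  rw [Finset.prod_div_distrib, Finset.prod_univ_sum]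
  simp

theorem Ex_pair (f : Ω × Ω' → ℝ) : Ex f = Ex (fun a => Ex (fun b => f (a, b))) := by
  unfold Ex
  rw [Fintype.sum_prod_type, ← Finset.sum_div, Fintype.card_prod]
  push_cast
  rw [div_div, mul_comm]

theorem Pr_le_Ex {P : Ω → Prop} {f : Ω → ℝ} (h0 : ∀ w, 0 ≤ f w) (h : ∀ w, P w → 1 ≤ f w) :
    Pr P ≤ Ex f := by
  apply Ex_mono
  intro w
  split_ifs with hw
  · exact h w hw
  · exact h0 w

theorem Pr_nonneg (P : Ω → Prop) : 0 ≤ Pr P := Ex_nonneg fun w => by split_ifs <;> norm_num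

theorem Pr_mono {P Q : Ω → Prop} (h : ∀ w, P w → Q w) : Pr P ≤ Pr Q := by
  apply Pr_le_Ex
  · intro w; split_ifs <;> norm_num
  · intro w hw; rw [if_pos (h w hw)]

theorem Pr_le_one [Nonempty Ω] (P : Ω → Prop) : Pr P ≤ 1 := by
  refine (Pr_le_Ex (f := fun _ => 1) (fun _ => by norm_num) (fun _ _ => le_rfl)).trans ?_
  rw [Ex_const]

theorem Pr_or (P Q : Ω → Prop) : Pr (fun w => P w ∨ Q w) ≤ Pr P + Pr Q := by
  unfold Pr
  rw [← Ex_add]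
  apply Ex_mono
  intro w
  by_cases h1 : P w <;> by_cases h2 : Q w <;> simp [h1, h2]

open Classical in
theorem Pr_exists {ι : Type*} (s : Finset ι) (P : ι → Ω → Prop) :
    Pr (fun w => ∃ i ∈ s, P i w) ≤ ∑ i ∈ s, Pr (P i) := by
  unfold Pr
  rw [← Ex_sum]
  apply Ex_mono
  intro w
  split_ifs with h
  · obtain ⟨i, hi, hp⟩ := h
    refine le_trans ?_ (Finset.single_le_sum (f := fun i => if P i w then (1:ℝ) else 0)
      (fun i _ => by split_ifs <;> norm_num) hi)
    simp [hp]
  · exact Finset.sum_nonneg fun i _ => by split_ifs <;> norm_num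

theorem Pr_exists_le {ι : Type*} (s : Finset ι) (P : ι → Ω → Prop) (c : ℝ)
    (h : ∀ i ∈ s, Pr (P i) ≤ c) : Pr (fun w => ∃ i ∈ s, P i w) ≤ s.card * c := by
  refine (Pr_exists s P).trans ?_
  simpa using Finset.sum_le_card_nsmul s _ c h

theorem exists_of_Pr_lt [Nonempty Ω] {P : Ω → Prop} (h : Pr P < 1) : ∃ w, ¬ P w := by
  by_contra hc
  push Not at hc
  have : Pr P = 1 := by
    unfold Pr
    simp only [hc, if_true]
    exact Ex_const 1
  linarith

theorem Pr_equiv (e : Ω ≃ Ω') (P : Ω' → Prop) : Pr (fun w => P (e w)) = Pr P := by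
  classical
  exact Ex_equiv e (fun w => if P w then (1:ℝ) else 0)

theorem Pr_pair_le [Nonempty Ω] {P : Ω × Ω' → Prop} {A : Ω → Prop} {c : ℝ} (hc : 0 ≤ c)
    (h : ∀ a, ¬ A a → Pr (fun b => P (a, b)) ≤ c) [Nonempty Ω'] : Pr P ≤ Pr A + c := by
  classical
  have h1 : Pr P = Ex (fun a => Pr (fun b => P (a, b))) := Ex_pair _
  rw [h1]
  have : Pr A + c = Ex (fun a => (if A a then (1:ℝ) else 0) + c) := by
    rw [Ex_add, Ex_const]
    unfold Pr
    congr 2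
  rw [this]
  apply Ex_mono
  intro a
  by_cases ha : A a
  · rw [if_pos ha]
    have := Pr_le_one (fun b => P (a, b))
    linarith
  · rw [if_neg ha, zero_add]
    exact h a ha

theorem Pr_fst [Nonempty Ω'] (P : Ω → Prop) : Pr (fun w : Ω × Ω' => P w.1) = Pr P := by
  classical
  have : Pr (fun w : Ω × Ω' => P w.1) = Ex (fun a => Ex (fun b : Ω' => if P a then (1:ℝ) else 0)) :=
    Ex_pair _
  rw [this]
  unfold Pr
  congr 1
  ext a
  exact Ex_const _

theorem Pr_snd [Nonempty Ω] (P : Ω' → Prop) : Pr (fun w : Ω × Ω' => P w.2) = Pr P := by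
  rw [← Pr_equiv (Equiv.prodComm Ω' Ω)]
  exact Pr_fst P

/-- Markov for exponentials -/
theorem Pr_chernoff (f : Ω → ℝ) (a : ℝ) :
    Pr (fun w => a < f w) ≤ Real.exp (-a) * Ex (fun w => Real.exp (f w)) := by
  rw [← Ex_mul_left]
  apply Pr_le_Ex
  · intro w; positivity
  · intro w hw
    rw [← Real.exp_add]
    apply Real.one_le_exp
    linarith

/-- Bernoulli variable -/
noncomputable def xi {m : ℕ} [NeZero m] (a : Fin m) : ℝ := if a = 0 then 1 else 0

theorem Ex_bern {m : ℕ} [NeZero m] (x y : ℝ) :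
    Ex (fun a : Fin m => if a = 0 then x else y) = x * (1 / m) + y * (1 - 1 / m) := by
  unfold Ex
  have hm : (m:ℝ) ≠ 0 := by exact_mod_cast NeZero.ne m
  have : ∀ a : Fin m, (if a = 0 then x else y) = y + (if a = 0 then x - y else 0) := by
    intro a; split_ifs <;> ring
  simp_rw [this]
  rw [Finset.sum_add_distrib]
  simp
  field_simp
  ring

theorem Pr_cyl {ι : Type*} [Fintype ι] [DecidableEq ι] {m : ℕ} [NeZero m] (A B : Finset ι)
    (h : Disjoint A B) :
    Pr (fun X : ι → Fin m => (∀ i ∈ A, X i = 0) ∧ (∀ i ∈ B, X i ≠ 0))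
      = (1 / m : ℝ) ^ A.card * (1 - 1 / m : ℝ) ^ B.card := by
  have h1 : ∀ X : ι → Fin m, (if ((∀ i ∈ A, X i = 0) ∧ (∀ i ∈ B, X i ≠ 0)) then (1:ℝ) else 0)
      = ∏ i, (fun (i : ι) (a : Fin m) => if a = 0 then (if i ∈ B then (0:ℝ) else 1)
        else (if i ∈ A then (0:ℝ) else 1)) i (X i) := by
    intro X
    split_ifs with hX
    · symm
      apply Finset.prod_eq_one
      intro i _
      dsimp only
      split_ifs with h1 h2 h3
      · exact absurd h1 (hX.2 i h2)
      · rfl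
      · exact absurd (hX.1 i h3) h1
      · rfl
    · symm
      rw [Finset.prod_eq_zero_iff]
      rw [not_and_or] at hX
      push Not at hX
      rcases hX with ⟨i, hi, hx⟩ | ⟨i, hi, hx⟩
      · exact ⟨i, Finset.mem_univ _, by simp [hx, hi]⟩
      · exact ⟨i, Finset.mem_univ _, by simp [hx, hi]⟩
  have h3 : Pr (fun X : ι → Fin m => (∀ i ∈ A, X i = 0) ∧ (∀ i ∈ B, X i ≠ 0)) = _ :=
    congrArg Ex (funext fun X => (by convert h1 X))
  refine (h3.trans (Ex_prod (fun (i : ι) (a : Fin m) => if a = 0 then (if i ∈ B then (0:ℝ) else 1)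
        else (if i ∈ A then (0:ℝ) else 1)))).trans ?_
  simp_rw [Ex_bern]
  have h2 : ∀ i, ((if i ∈ B then (0:ℝ) else 1) * (1 / m) + (if i ∈ A then (0:ℝ) else 1) * (1 - 1 / m))
      = (if i ∈ A then (1 / m : ℝ) else 1) * (if i ∈ B then (1 - 1 / m : ℝ) else 1) := by
    intro i
    by_cases ha : i ∈ A
    · have hb : i ∉ B := Finset.disjoint_left.1 h ha
      simp [ha, hb]
    · by_cases hb : i ∈ B <;> simp [ha, hb]
  simp_rw [h2]
  rw [Finset.prod_mul_distrib]
  simp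

end prob

/-! ### Alteration: deleting a maximum edge-disjoint family of triangles -/
section surv
variable {V : Type*} [Fintype V] [LinearOrder V] {m : ℕ} [NeZero m]

/-- edges of a triple -/
def tE (t : V × V × V) : Finset (V × V) := {(t.1, t.2.1), (t.2.1, t.2.2), (t.1, t.2.2)}

/-- edge-disjoint triangle families -/
def TriFam (X : V × V → Fin m) (F : Finset (V × V × V)) : Prop :=
  (∀ t ∈ F, t.1 < t.2.1 ∧ t.2.1 < t.2.2 ∧ ∀ e ∈ tE t, X e = 0) ∧
    (F : Set (V × V × V)).PairwiseDisjoint tE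

theorem exists_maxFam (X : V × V → Fin m) :
    ∃ F, TriFam X F ∧ ∀ F', TriFam X F' → F'.card ≤ F.card := by
  classical
  obtain ⟨F, hF, h⟩ := Finset.exists_max_image
    ((Finset.univ : Finset (Finset (V × V × V))).filter (TriFam X)) Finset.card
    ⟨∅, by simp [TriFam]⟩
  refine ⟨F, (Finset.mem_filter.1 hF).2, fun F' hF' => h F' ?_⟩
  simpa using hF'

/-- a maximum family -/
noncomputable def maxFam (X : V × V → Fin m) : Finset (V × V × V) := (exists_maxFam X).choose

/-- surviving edges -/
noncomputable def Surv (X : V × V → Fin m) : Finset (V × V) :=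
  Finset.univ.filter (fun e => e.1 < e.2 ∧ X e = 0 ∧ e ∉ (maxFam X).biUnion tE)

theorem Surv_lt {X : V × V → Fin m} {e : V × V} (h : e ∈ Surv X) : e.1 < e.2 ∧ X e = 0 := by
  simp only [Surv, Finset.mem_filter] at h
  exact ⟨h.2.1, h.2.2.1⟩

theorem Surv_tf {X : V × V → Fin m} {a b c : V} (h1 : (a, b) ∈ Surv X) (h2 : (b, c) ∈ Surv X)
    (h3 : (a, c) ∈ Surv X) : False := by
  obtain ⟨hF, hmax⟩ := (exists_maxFam X).choose_spec
  change TriFam X (maxFam X) at hF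
  change ∀ F', TriFam X F' → F'.card ≤ (maxFam X).card at hmax
  have q1 := Surv_lt h1
  have q2 := Surv_lt h2
  have q3 := Surv_lt h3
  simp only [Surv, Finset.mem_filter, Finset.mem_univ, true_and] at h1 h2 h3
  have hd : ∀ t ∈ maxFam X, Disjoint (tE (a, b, c)) (tE t) := by
    intro t ht
    rw [Finset.disjoint_left]
    intro e he he'
    have : e ∈ (maxFam X).biUnion tE := Finset.mem_biUnion.2 ⟨t, ht, he'⟩
    simp only [tE, Finset.mem_insert, Finset.mem_singleton] at he
    rcases he with rfl | rfl | rfl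
    · exact h1.2.2 this
    · exact h2.2.2 this
    · exact h3.2.2 this
  have hn : (a, b, c) ∉ maxFam X := by
    intro h
    have := hd _ h
    rw [disjoint_self] at this
    simp [tE] at this
  have hT : TriFam X (insert (a, b, c) (maxFam X)) := by
    refine ⟨?_, ?_⟩
    · intro t ht
      rcases Finset.mem_insert.1 ht with rfl | ht
      · refine ⟨q1.1, q2.1, ?_⟩
        intro e he
        simp only [tE, Finset.mem_insert, Finset.mem_singleton] at he
        rcases he with rfl | rfl | rfl
        · exact q1.2
        · exact q2.2
        · exact q3.2
      · exact hF.1 t ht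
    · rw [Finset.coe_insert]
      apply Set.PairwiseDisjoint.insert hF.2
      intro t ht _
      exact hd t ht
  have := hmax _ hT
  rw [Finset.card_insert_of_notMem hn] at this
  omega

theorem tE_card {t : V × V × V} (h1 : t.1 < t.2.1) (h2 : t.2.1 < t.2.2) : (tE t).card = 3 := by
  unfold tE
  rw [Finset.card_insert_of_notMem, Finset.card_insert_of_notMem, Finset.card_singleton]
  · simp only [Finset.mem_singleton, Prod.mk.injEq, not_and_or]
    exact Or.inl h1.ne'
  · simp only [Finset.mem_insert, Finset.mem_singleton, Prod.mk.injEq, not_or, not_and_or]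
    exact ⟨Or.inl h1.ne, Or.inr h2.ne⟩

theorem TQ_card (Q : Finset (V × V)) :
    ((Finset.univ : Finset (V × V × V)).filter (fun t => ¬ Disjoint (tE t) Q)).card
      ≤ 3 * (Q.card * Fintype.card V) := by
  let P : Finset ((V × V) × V) := Q ×ˢ Finset.univ
  have hP : P.card = Q.card * Fintype.card V := by simp [P]
  have : ((Finset.univ : Finset (V × V × V)).filter (fun t => ¬ Disjoint (tE t) Q))
      ⊆ P.image (fun x => (x.1.1, x.1.2, x.2)) ∪ (P.image (fun x => (x.2, x.1.1, x.1.2))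
        ∪ P.image (fun x => (x.1.1, x.2, x.1.2))) := by
    rintro ⟨a, b, c⟩ ht
    simp only [Finset.mem_filter, Finset.mem_univ, true_and] at ht
    rw [Finset.not_disjoint_iff] at ht
    obtain ⟨e, he, heQ⟩ := ht
    simp only [tE, Finset.mem_insert, Finset.mem_singleton] at he
    simp only [Finset.mem_union, Finset.mem_image, P, Finset.mem_product, Finset.mem_univ, and_true]
    rcases he with rfl | rfl | rfl
    · exact Or.inl ⟨((a, b), c), heQ, rfl⟩
    · exact Or.inr (Or.inl ⟨((b, c), a), heQ, rfl⟩)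
    · exact Or.inr (Or.inr ⟨((a, c), b), heQ, rfl⟩)
  refine (Finset.card_le_card this).trans ?_
  refine (Finset.card_union_le _ _).trans ?_
  have h1 := Finset.card_union_le (P.image (fun x => (x.2, x.1.1, x.1.2)))
    (P.image (fun x => (x.1.1, x.2, x.1.2)))
  have h2 := Finset.card_image_le (s := P) (f := fun x => (x.1.1, x.1.2, x.2))
  have h3 := Finset.card_image_le (s := P) (f := fun x => (x.2, x.1.1, x.1.2))
  have h4 := Finset.card_image_le (s := P) (f := fun x => (x.1.1, x.2, x.1.2))
  omega

theorem Pr_surv (Q : Finset (V × V)) (hQ : ∀ e ∈ Q, e.1 < e.2) (hm : 2 ≤ m)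
    (hM : 48 * Fintype.card V ≤ m ^ 2) :
    Pr (fun X : V × V → Fin m => Disjoint (Surv X) Q) ≤ Real.exp (-(Q.card / (2 * m))) := by
  classical
  let TQ := (Finset.univ : Finset (V × V × V)).filter
    (fun t => (t.1 < t.2.1 ∧ t.2.1 < t.2.2) ∧ ¬ Disjoint (tE t) Q)
  let P : Finset (V × V × V) → (V × V → Fin m) → Prop := fun F X =>
    (F : Set (V × V × V)).PairwiseDisjoint tE ∧ ((∀ e ∈ F.biUnion tE, X e = 0) ∧
      (∀ e ∈ Q \ F.biUnion tE, X e ≠ 0))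
  have hm0 : (0:ℝ) < m := by positivity
  have hm2 : (2:ℝ) ≤ m := by exact_mod_cast hm
  set p : ℝ := 1 / m with hp
  have hp0 : 0 < p := by positivity
  have hp2 : p ≤ 1 / 2 := by rw [hp]; gcongr
  have hq0 : 0 < 1 - p := by linarith
  set c : ℝ := (p / (1 - p)) ^ 3 with hc
  have hc0 : 0 ≤ c := by positivity
  have step1 : ∀ X : V × V → Fin m, Disjoint (Surv X) Q → ∃ F ∈ TQ.powerset, P F X := by
    intro X hX
    obtain ⟨hF, hmax⟩ := (exists_maxFam X).choose_spec
    change TriFam X (maxFam X) at hF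
    refine ⟨(maxFam X).filter (fun t => ¬ Disjoint (tE t) Q), ?_, ?_, ?_, ?_⟩
    · rw [Finset.mem_powerset]
      intro t ht
      rw [Finset.mem_filter] at ht
      have := hF.1 t ht.1
      simp only [TQ, Finset.mem_filter, Finset.mem_univ, true_and]
      exact ⟨⟨this.1, this.2.1⟩, ht.2⟩
    · exact hF.2.subset (Finset.coe_subset.2 (Finset.filter_subset _ _))
    · intro e he
      rw [Finset.mem_biUnion] at he
      obtain ⟨t, ht, he⟩ := he
      exact (hF.1 t (Finset.mem_filter.1 ht).1).2.2 e he
    · intro e he hXe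
      rw [Finset.mem_sdiff] at he
      have hns : e ∉ Surv X := fun h => Finset.disjoint_left.1 hX h he.1
      apply hns
      simp only [Surv, Finset.mem_filter, Finset.mem_univ, true_and]
      refine ⟨hQ e he.1, hXe, ?_⟩
      intro hb
      apply he.2
      rw [Finset.mem_biUnion] at hb ⊢
      obtain ⟨t, ht, het⟩ := hb
      refine ⟨t, ?_, het⟩
      rw [Finset.mem_filter]
      exact ⟨ht, fun hd => Finset.disjoint_left.1 hd het he.1⟩
  have step2 : ∀ F ∈ TQ.powerset, Pr (P F) ≤ (1 - p) ^ Q.card * (c ^ F.card * 1 ^ (TQ.card - F.card)) := by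
    intro F hF
    rw [Finset.mem_powerset] at hF
    rw [one_pow, mul_one]
    by_cases hd : (F : Set (V × V × V)).PairwiseDisjoint tE
    · have h1 : Pr (P F) ≤ Pr (fun X : V × V → Fin m => (∀ e ∈ F.biUnion tE, X e = 0) ∧
          (∀ e ∈ Q \ F.biUnion tE, X e ≠ 0)) := Pr_mono fun X h => h.2
      refine h1.trans ?_
      rw [Pr_cyl _ _ Finset.disjoint_sdiff, ← hp]
      have hcard : (F.biUnion tE).card = 3 * F.card := by
        rw [Finset.card_biUnion hd, Finset.sum_const_nat (m := 3), mul_comm]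
        intro t ht
        have := hF ht
        simp only [TQ, Finset.mem_filter] at this
        exact tE_card this.2.1.1 this.2.1.2
      have hcard2 : Q.card ≤ (Q \ F.biUnion tE).card + 3 * F.card := by
        have := Finset.le_card_sdiff (F.biUnion tE) Q
        omega
      rw [hcard]
      have e1 : (1 - p) ^ (Q \ F.biUnion tE).card * (1 - p) ^ (3 * F.card) ≤ (1 - p) ^ Q.card := by
        rw [← pow_add]
        exact pow_le_pow_of_le_one hq0.le (by linarith) hcard2
      have e2 : p ^ (3 * F.card) = (1 - p) ^ (3 * F.card) * c ^ F.card := by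
        rw [hc, ← pow_mul, ← mul_pow]
        congr 1
        field_simp
      rw [e2]
      calc _ = ((1 - p) ^ (Q \ F.biUnion tE).card * (1 - p) ^ (3 * F.card)) * c ^ F.card := by ring
        _ ≤ _ := by gcongr
    · have : Pr (P F) ≤ Pr (fun X : V × V → Fin m => False) := Pr_mono fun X h => hd h.1
      refine this.trans ?_
      have : Pr (fun X : V × V → Fin m => False) = 0 := by simp [Pr, Ex]
      rw [this]
      positivity
  have step3 : Pr (fun X : V × V → Fin m => Disjoint (Surv X) Q) ≤ (1 - p) ^ Q.card * (c + 1) ^ TQ.card := by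
    refine (Pr_mono step1).trans ((Pr_exists _ _).trans ((Finset.sum_le_sum step2).trans ?_))
    rw [← Finset.mul_sum, Finset.sum_pow_mul_eq_add_pow]
  refine step3.trans ?_
  have hT : (TQ.card : ℝ) ≤ 3 * (Q.card * Fintype.card V) := by
    have h1 : TQ.card ≤ 3 * (Q.card * Fintype.card V) := by
      refine le_trans (Finset.card_le_card ?_) (TQ_card Q)
      intro t ht
      simp only [TQ, Finset.mem_filter, Finset.mem_univ, true_and] at ht ⊢
      exact ht.2
    exact_mod_cast h1
  have hc8 : c ≤ 8 * p ^ 3 := by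
    have : p / (1 - p) ≤ 2 * p := by
      rw [div_le_iff₀ hq0]
      nlinarith
    calc c ≤ (2 * p) ^ 3 := by rw [hc]; gcongr
      _ = _ := by ring
  have hA : (1 - p) ^ Q.card ≤ Real.exp (-(p * Q.card)) := by
    have := Real.add_one_le_exp (-p)
    calc (1 - p) ^ Q.card ≤ (Real.exp (-p)) ^ Q.card := by gcongr; linarith
      _ = _ := by rw [← Real.exp_nat_mul]; congr 1; ring
  have hB : (c + 1) ^ TQ.card ≤ Real.exp (c * TQ.card) := by
    calc (c + 1) ^ TQ.card ≤ (Real.exp c) ^ TQ.card := by gcongr; exact Real.add_one_le_exp c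
      _ = _ := by rw [← Real.exp_nat_mul]; congr 1; ring
  calc _ ≤ Real.exp (-(p * Q.card)) * Real.exp (c * TQ.card) := by gcongr
    _ = Real.exp (-(p * Q.card) + c * TQ.card) := by rw [Real.exp_add]
    _ ≤ _ := by
      rw [Real.exp_le_exp]
      have hM' : 48 * (Fintype.card V : ℝ) ≤ m ^ 2 := by exact_mod_cast hM
      have hp2M : 48 * (p ^ 2 * Fintype.card V) ≤ 1 := by
        rw [hp]
        rw [div_pow, one_pow]
        field_simp
        linarith
      have h1 : c * TQ.card ≤ (8 * p ^ 3) * (3 * (Q.card * Fintype.card V)) := by gcongr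
      have h2 : (8 * p ^ 3) * (3 * (Q.card * Fintype.card V : ℝ)) = (48 * (p ^ 2 * Fintype.card V)) * (p * Q.card / 2) := by ring
      have h3 : (48 * (p ^ 2 * Fintype.card V)) * (p * Q.card / 2) ≤ 1 * (p * Q.card / 2) := by gcongr
      have h4 : (Q.card : ℝ) / (2 * m) = p * Q.card / 2 := by rw [hp]; field_simp
      rw [h4]
      linarith

end surv

/-! ### Moment bounds for rows of a random matrix -/
section rows
variable {V : Type*} [Fintype V] [DecidableEq V] {m : ℕ} [NeZero m]

theorem xi_nonneg (a : Fin m) : 0 ≤ xi a := by unfold xi; split_ifs <;> norm_num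

theorem xi_sq (a : Fin m) : xi a * xi a = xi a := by unfold xi; split_ifs <;> norm_num

theorem p_pos : (0:ℝ) < 1 / m := by
  have : 0 < m := Nat.pos_of_ne_zero (NeZero.ne m)
  positivity

theorem p_le_one : (1:ℝ) / m ≤ 1 := by
  have : 1 ≤ m := Nat.pos_of_ne_zero (NeZero.ne m)
  rw [div_le_one (by positivity)]
  exact_mod_cast this

theorem mgfB (ω : V → ℝ) (δ R : ℝ) (h0 : ∀ b, 0 ≤ ω b) (hR : ∀ b, ω b ≤ R) (hδ : 0 ≤ δ)
    (hδR : δ * R ≤ 1) (B : Finset V) :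
    Ex (fun Z : V → Fin m => (∏ b ∈ B, xi (Z b)) * Real.exp (δ * ∑ b, ω b * xi (Z b)))
      ≤ (1 / m : ℝ) ^ B.card * Real.exp (δ * R * B.card + 2 * (1 / m) * δ * ∑ b, ω b) := by
  have h1 : ∀ Z : V → Fin m, (∏ b ∈ B, xi (Z b)) * Real.exp (δ * ∑ b, ω b * xi (Z b))
      = ∏ b, (fun (b : V) (a : Fin m) => if a = 0 then Real.exp (δ * ω b) else
          (if b ∈ B then 0 else 1)) b (Z b) := by
    intro Z
    rw [Finset.mul_sum, Real.exp_sum,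
      show (∏ b ∈ B, xi (Z b)) = ∏ b, (if b ∈ B then xi (Z b) else 1) by simp,
      ← Finset.prod_mul_distrib]
    apply Finset.prod_congr rfl
    intro b _
    by_cases hb : b ∈ B <;> by_cases hz : Z b = 0 <;> simp [hb, hz, xi]
  rw [show (fun Z : V → Fin m => (∏ b ∈ B, xi (Z b)) * Real.exp (δ * ∑ b, ω b * xi (Z b))) = _
    from funext h1]
  refine (Ex_prod (fun (b : V) (a : Fin m) => if a = 0 then Real.exp (δ * ω b) else
          (if b ∈ B then (0:ℝ) else 1))).le.trans ?_
  simp_rw [Ex_bern]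
  have hp := p_pos (m := m)
  have hp1 := p_le_one (m := m)
  set p : ℝ := 1 / m with hpdef
  have h2 : ∀ b, Real.exp (δ * ω b) * p + (if b ∈ B then (0:ℝ) else 1) * (1 - p)
      ≤ (if b ∈ B then p * Real.exp (δ * R) else 1) * Real.exp (2 * p * δ * ω b) := by
    intro b
    have hs0 : 0 ≤ δ * ω b := mul_nonneg hδ (h0 b)
    have hs1 : δ * ω b ≤ δ * R := mul_le_mul_of_nonneg_left (hR b) hδ
    split_ifs with hb
    · have : 1 ≤ Real.exp (2 * p * δ * ω b) := by
        apply Real.one_le_exp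
        have : 2 * p * δ * ω b = 2 * p * (δ * ω b) := by ring
        rw [this]; positivity
      have h3 : Real.exp (δ * ω b) ≤ Real.exp (δ * R) := Real.exp_le_exp.2 hs1
      calc _ = p * Real.exp (δ * ω b) * 1 := by ring
        _ ≤ p * Real.exp (δ * R) * 1 := by gcongr
        _ ≤ _ := by gcongr
    · have h3 : Real.exp (δ * ω b) ≤ 1 + 2 * (δ * ω b) := by
        have := Real.abs_exp_sub_one_sub_id_le (x := δ * ω b) (by rw [abs_of_nonneg hs0]; linarith)
        have := (abs_le.1 this).2
        nlinarith
      have h4 := Real.add_one_le_exp (2 * p * δ * ω b)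
      nlinarith
  refine (Finset.prod_le_prod (fun b _ => ?_) (fun b _ => h2 b)).trans ?_
  · have : 0 ≤ 1 - p := by linarith
    split_ifs <;> positivity
  · rw [Finset.prod_mul_distrib, ← Real.exp_sum, ← Finset.mul_sum]
    have : (∏ b, (if b ∈ B then p * Real.exp (δ * R) else 1)) = (p * Real.exp (δ * R)) ^ B.card := by
      simp
    rw [this, mul_pow, ← Real.exp_nat_mul, Real.exp_add, mul_assoc]
    apply le_of_eq
    congr 3
    ring

theorem row2 (ω : V → ℝ) (δ R τ : ℝ) (h0 : ∀ b, 0 ≤ ω b) (hR : ∀ b, ω b ≤ R) (hτ : ∑ b, ω b = τ)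
    (hδ : 0 ≤ δ) (hδR : δ * R ≤ 1 / 8) (hδτ : (1 / m) * δ * τ ≤ 1 / 8) :
    Ex (fun Z : V → Fin m => (∑ b, ω b * xi (Z b)) ^ 2 * Real.exp (δ * ∑ b, ω b * xi (Z b)))
      ≤ 2 * ((1 / m : ℝ) ^ 2 * τ ^ 2 + (1 / m) * R * τ) := by
  have h1 : ∀ Z : V → Fin m,
      (∑ b, ω b * xi (Z b)) ^ 2 * Real.exp (δ * ∑ b, ω b * xi (Z b))
      = ∑ b, ∑ c, (ω b * ω c) * ((∏ a ∈ ({b, c} : Finset V), xi (Z a))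
        * Real.exp (δ * ∑ b, ω b * xi (Z b))) := by
    intro Z
    rw [sq, Finset.sum_mul_sum, Finset.sum_mul]
    apply Finset.sum_congr rfl
    intro b _
    rw [Finset.sum_mul]
    apply Finset.sum_congr rfl
    intro c _
    by_cases hbc : b = c
    · subst hbc
      simp only [Finset.mem_singleton, Finset.insert_eq_of_mem, Finset.prod_singleton]
      calc _ = (ω b * ω b) * ((xi (Z b) * xi (Z b)) * Real.exp (δ * ∑ b, ω b * xi (Z b))) := by ring
        _ = _ := by rw [xi_sq]
    · rw [Finset.prod_pair hbc]
      ring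
  simp_rw [h1]
  rw [Ex_sum]
  simp_rw [Ex_sum, Ex_mul_left]
  have hp := p_pos (m := m)
  have hp1 := p_le_one (m := m)
  set p : ℝ := 1 / m with hpdef
  have h2 : ∀ b c, Ex (fun Z : V → Fin m => (∏ a ∈ ({b, c} : Finset V), xi (Z a))
        * Real.exp (δ * ∑ b, ω b * xi (Z b))) ≤ 2 * p ^ 2 + (if b = c then 2 * p else 0) := by
    intro b c
    refine (mgfB ω δ R h0 hR hδ (by linarith) _).trans ?_
    rw [hτ, ← hpdef]
    have hδR0 : 0 ≤ δ * R := mul_nonneg hδ ((h0 b).trans (hR b))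
    have hcard : (({b, c} : Finset V).card : ℝ) ≤ 2 := by exact_mod_cast Finset.card_le_two
    have hexp : Real.exp (δ * R * (({b, c} : Finset V).card : ℝ) + 2 * p * δ * τ) ≤ 2 := by
      have h3 : δ * R * (({b, c} : Finset V).card : ℝ) + 2 * p * δ * τ ≤ 1 / 2 := by nlinarith
      refine (Real.exp_le_exp.2 h3).trans ?_
      have : Real.exp (1 / 2) ^ 2 ≤ 2 ^ 2 := by
        rw [← Real.exp_nat_mul]
        have := Real.exp_one_lt_d9
        norm_num at this ⊢
        linarith
      exact le_of_sq_le_sq this (by norm_num)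
    refine (mul_le_mul_of_nonneg_left hexp (by positivity)).trans ?_
    by_cases hbc : b = c
    · subst hbc
      simp
      nlinarith [sq_nonneg p]
    · rw [Finset.card_pair hbc, if_neg hbc]
      linarith
  calc _ ≤ ∑ b, ∑ c, (ω b * ω c) * (2 * p ^ 2 + (if b = c then 2 * p else 0)) := by
        apply Finset.sum_le_sum; intro b _
        apply Finset.sum_le_sum; intro c _
        exact mul_le_mul_of_nonneg_left (h2 b c) (mul_nonneg (h0 b) (h0 c))
    _ = ∑ b, (ω b * τ * (2 * p ^ 2) + ω b * ω b * (2 * p)) := by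
        apply Finset.sum_congr rfl; intro b _
        simp only [mul_add, Finset.sum_add_distrib, mul_ite, mul_zero, Finset.sum_ite_eq,
          Finset.mem_univ, if_true]
        rw [← Finset.sum_mul, ← Finset.mul_sum, hτ]
    _ ≤ ∑ b, (ω b * (τ * (2 * p ^ 2)) + ω b * (R * (2 * p))) := by
        apply Finset.sum_le_sum; intro b _
        have := mul_le_mul_of_nonneg_left (hR b) (h0 b)
        nlinarith
    _ = _ := by
        rw [Finset.sum_add_distrib, ← Finset.sum_mul, ← Finset.sum_mul, hτ]
        ring

theorem rowf (ω : V → ℝ) (θ J R τ : ℝ) (h0 : ∀ b, 0 ≤ ω b) (hR : ∀ b, ω b ≤ R) (hτ : ∑ b, ω b = τ)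
    (hθ : 0 ≤ θ) (hJ : 0 ≤ J) (hδR : (θ * J) * R ≤ 1 / 8) (hδτ : (1 / m) * (θ * J) * τ ≤ 1 / 8) :
    Ex (fun Z : V → Fin m => Real.exp (θ * (min (∑ b, ω b * xi (Z b)) J) ^ 2))
      ≤ Real.exp (θ * (2 * ((1 / m : ℝ) ^ 2 * τ ^ 2 + (1 / m) * R * τ))) := by
  have h1 := row2 (m := m) ω (θ * J) R τ h0 hR hτ (by positivity) hδR hδτ
  have h2 : ∀ Z : V → Fin m, Real.exp (θ * (min (∑ b, ω b * xi (Z b)) J) ^ 2)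
      ≤ 1 + θ * ((∑ b, ω b * xi (Z b)) ^ 2 * Real.exp ((θ * J) * ∑ b, ω b * xi (Z b))) := by
    intro Z
    set y := ∑ b, ω b * xi (Z b) with hy
    have hy0 : 0 ≤ y := Finset.sum_nonneg fun b _ => mul_nonneg (h0 b) (xi_nonneg _)
    have hm0 : 0 ≤ min y J := le_min hy0 hJ
    set s := θ * (min y J) ^ 2 with hs
    have hs0 : 0 ≤ s := by positivity
    have e1 : Real.exp s ≤ 1 + s * Real.exp s := by
      have := Real.add_one_le_exp (-s)
      have h3 := mul_le_mul_of_nonneg_right this (Real.exp_pos s).le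
      rw [← Real.exp_add, neg_add_cancel, Real.exp_zero] at h3
      linarith
    have e2 : s ≤ θ * y ^ 2 := by
      rw [hs]; gcongr; exact min_le_left _ _
    have e3 : s ≤ θ * J * y := by
      rw [hs, sq, mul_assoc]
      have : min y J * min y J ≤ J * y := mul_le_mul (min_le_right _ _) (min_le_left _ _) hm0 hJ
      gcongr
    have e4 : s * Real.exp s ≤ (θ * y ^ 2) * Real.exp (θ * J * y) := by gcongr
    linarith
  refine (Ex_mono h2).trans ?_
  rw [Ex_add, Ex_const, Ex_mul_left]
  have := Real.add_one_le_exp (θ * (2 * ((1 / m : ℝ) ^ 2 * τ ^ 2 + (1 / m) * R * τ)))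
  have := mul_le_mul_of_nonneg_left h1 hθ
  linarith

/-- matrix version: all rows together -/
theorem rows_tail (e : (V × V → Fin m) ≃ (V → V → Fin m)) (ω : V → ℝ) (θ J R τ : ℝ)
    (h0 : ∀ b, 0 ≤ ω b) (hR : ∀ b, ω b ≤ R) (hτ : ∑ b, ω b = τ)
    (hθ : 0 ≤ θ) (hJ : 0 ≤ J) (hδR : (θ * J) * R ≤ 1 / 8) (hδτ : (1 / m) * (θ * J) * τ ≤ 1 / 8)
    (a : ℝ) :
    Pr (fun X : V × V → Fin m => a < θ * ∑ z, (min (∑ b, ω b * xi (e X z b)) J) ^ 2)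
      ≤ Real.exp (-a + Fintype.card V * (θ * (2 * ((1 / m : ℝ) ^ 2 * τ ^ 2 + (1 / m) * R * τ)))) := by
  refine (Pr_chernoff _ a).trans ?_
  rw [Real.exp_add]
  gcongr
  rw [Ex_equiv e (fun W => Real.exp (θ * ∑ z, (min (∑ b, ω b * xi (W z b)) J) ^ 2))]
  simp_rw [Finset.mul_sum, Real.exp_sum]
  refine (Ex_prod (fun (_ : V) (Z : V → Fin m) =>
    Real.exp (θ * (min (∑ b, ω b * xi (Z b)) J) ^ 2))).le.trans ?_
  rw [Finset.prod_const, Finset.card_univ, Real.exp_nat_mul]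
  gcongr
  · exact Ex_nonneg fun _ => (Real.exp_pos _).le
  · exact rowf ω θ J R τ h0 hR hτ hθ hJ hδR hδτ

theorem Ex_marg (g : (V → Fin m) → ℝ) (z : V) : Ex (fun W : V → V → Fin m => g (W z)) = Ex g := by
  have h := Ex_prod (ι := V) (α := V → Fin m) (fun i a => if i = z then g a else 1)
  have h1 : ∀ W : V → V → Fin m, (∏ i, if i = z then g (W i) else 1) = g (W z) := by
    intro W
    simp
  simp_rw [h1] at h
  rw [h, Finset.prod_eq_single z]
  · simp
  · intro b _ hb
    simp only [hb, if_false]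
    exact Ex_const 1
  · simp

theorem rows_count (e : (V × V → Fin m) ≃ (V → V → Fin m)) :
    Pr (fun X : V × V → Fin m => ∃ z ∈ (Finset.univ : Finset V),
        4 * (1 / m : ℝ) * Fintype.card V < ∑ b, xi (e X z b))
      ≤ Fintype.card V * Real.exp (-(2 * (1 / m : ℝ) * Fintype.card V)) := by
  refine (Pr_exists_le _ _ _ fun z _ => ?_)
  refine (Pr_chernoff _ _).trans ?_
  rw [Ex_equiv e (fun W => Real.exp (∑ b, xi (W z b)))]
  rw [Ex_marg (fun Z => Real.exp (∑ b, xi (Z b))) z]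
  have := mgfB (m := m) (fun _ : V => (1:ℝ)) 1 1 (by simp) (by simp) (by simp) (by simp) ∅
  simp only [Finset.prod_empty, one_mul, Finset.card_empty, pow_zero, Nat.cast_zero, mul_zero,
    zero_add, mul_one, Finset.sum_const, Finset.card_univ, nsmul_eq_mul] at this
  refine (mul_le_mul_of_nonneg_left this (Real.exp_pos _).le).trans ?_
  rw [← Real.exp_add, Real.exp_le_exp]
  linarith

end rows

/-! ### Nice graphs -/
section nice
variable {V : Type*} [Fintype V] [LinearOrder V] {m : ℕ} [NeZero m]

/-- adjacency in the random graph -/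
def adjX (X : V × V → Fin m) (u v : V) : Prop :=
  (u < v ∧ X (u, v) = 0) ∨ (v < u ∧ X (v, u) = 0)

theorem adjX_symm {X : V × V → Fin m} {u v : V} (h : adjX X u v) : adjX X v u := by
  unfold adjX at *
  tauto

/-- rows -/
def rowEq : (V × V → Fin m) ≃ (V → V → Fin m) := Equiv.curry V V (Fin m)

/-- columns -/
def colEq : (V × V → Fin m) ≃ (V → V → Fin m) :=
  (Equiv.arrowCongr (Equiv.prodComm V V) (Equiv.refl (Fin m))).trans (Equiv.curry V V (Fin m))

theorem adjX_xi {X : V × V → Fin m} {z b : V} (h : adjX X z b) :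
    1 ≤ xi (rowEq X z b) + xi (colEq X z b) := by
  have h1 : rowEq X z b = X (z, b) := rfl
  have h2 : colEq X z b = X (b, z) := rfl
  rw [h1, h2]
  have h3 := xi_nonneg (X (z, b))
  have h4 := xi_nonneg (X (b, z))
  rcases h with ⟨_, h⟩ | ⟨_, h⟩
  · have : xi (X (z, b)) = 1 := by simp [xi, h]
    linarith
  · have : xi (X (b, z)) = 1 := by simp [xi, h]
    linarith

open Classical in
/-- degrees at most `Δ`, codegrees less than `D` -/
def Nice (Δ : ℝ) (D : ℕ) (X : V × V → Fin m) : Prop :=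
  (∀ z, ((Finset.univ.filter (fun b => adjX X z b)).card : ℝ) ≤ Δ) ∧
  ∀ z z', z ≠ z' → (Finset.univ.filter (fun b => adjX X z b ∧ adjX X z' b)).card < D

open Classical in
theorem Pr_codeg (D : ℕ) (z z' : V) (hz : z ≠ z') :
    Pr (fun X : V × V → Fin m =>
      D ≤ (Finset.univ.filter (fun b => adjX X z b ∧ adjX X z' b)).card)
      ≤ (1 / 2) ^ D * Real.exp ((1 / m : ℝ) ^ 2 * Fintype.card V) := by
  set U : Finset V := (Finset.univ.erase z).erase z' with hU
  have hp := p_pos (m := m)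
  let ev : Finset V → (V × V → Fin m) → Prop := fun B X => ∀ b ∈ B, adjX X z b ∧ adjX X z' b
  have step1 : Pr (fun X : V × V → Fin m =>
      D ≤ (Finset.univ.filter (fun b => adjX X z b ∧ adjX X z' b)).card)
      ≤ Ex (fun X => (1 / 2 : ℝ) ^ D * ∑ B ∈ U.powerset, if ev B X then (1:ℝ) else 0) := by
    apply Pr_le_Ex
    · intro X
      exact mul_nonneg (by positivity) (Finset.sum_nonneg fun _ _ => by split_ifs <;> norm_num)
    · intro X hX
      set N := Finset.univ.filter (fun b => adjX X z b ∧ adjX X z' b) with hN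
      have hsub : N.powerset ⊆ U.powerset.filter (fun B => ev B X) := by
        intro B hB
        rw [Finset.mem_powerset] at hB
        rw [Finset.mem_filter, Finset.mem_powerset]
        have hB' : ∀ b ∈ B, adjX X z b ∧ adjX X z' b := fun b hb => (Finset.mem_filter.1 (hB hb)).2
        refine ⟨fun b hb => ?_, hB'⟩
        have := hB' b hb
        simp only [hU, Finset.mem_erase, Finset.mem_univ, and_true]
        constructor
        · rintro rfl
          rcases this.2 with h | h <;> exact lt_irrefl _ h.1
        · rintro rfl
          rcases this.1 with h | h <;> exact lt_irrefl _ h.1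
      have h2 := Finset.card_le_card hsub
      rw [Finset.card_powerset] at h2
      rw [Finset.sum_boole]
      have h3 : (2:ℝ) ^ D ≤ ((U.powerset.filter (fun B => ev B X)).card : ℝ) := by
        calc (2:ℝ) ^ D ≤ 2 ^ N.card := pow_le_pow_right₀ (by norm_num) hX
          _ ≤ _ := by exact_mod_cast h2
      calc (1:ℝ) = (1 / 2) ^ D * 2 ^ D := by rw [← mul_pow]; norm_num
        _ ≤ _ := by gcongr
  refine step1.trans ?_
  rw [Ex_mul_left, Ex_sum]
  gcongr
  let ed : V → V → V × V := fun a b => (min a b, max a b)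
  have hadj : ∀ (X : V × V → Fin m) a b, adjX X a b → X (ed a b) = 0 := by
    intro X a b h
    rcases h with ⟨h, h'⟩ | ⟨h, h'⟩
    · simp only [ed, min_eq_left h.le, max_eq_right h.le]; exact h'
    · simp only [ed, min_eq_right h.le, max_eq_left h.le]; exact h'
  have hinj : ∀ a b c, ed a b = ed a c → b = c := by
    intro a b c h
    simp only [ed, Prod.mk.injEq] at h
    rcases le_total a b with h1 | h1 <;> rcases le_total a c with h2 | h2
    · simp_all
    · rw [min_eq_left h1, max_eq_right h1, min_eq_right h2, max_eq_left h2] at h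
      rw [h.2, ← h.1]
    · rw [min_eq_right h1, max_eq_left h1, min_eq_left h2, max_eq_right h2] at h
      rw [h.1, ← h.2]
    · simp_all
  have step2 : ∀ B ∈ U.powerset, Ex (fun X : V × V → Fin m => if ev B X then (1:ℝ) else 0)
      ≤ ((1 / m : ℝ) ^ 2) ^ B.card * 1 ^ (U.card - B.card) := by
    intro B hB
    rw [Finset.mem_powerset] at hB
    have hz1 : ∀ b ∈ B, b ≠ z ∧ b ≠ z' := by
      intro b hb
      have := hB hb
      simp only [hU, Finset.mem_erase, Finset.mem_univ, and_true] at this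
      exact ⟨this.2, this.1⟩
    set A := B.image (ed z) ∪ B.image (ed z') with hA
    have hAc : A.card = 2 * B.card := by
      rw [hA, Finset.card_union_of_disjoint, Finset.card_image_of_injective _ (fun b c => hinj z b c),
        Finset.card_image_of_injective _ (fun b c => hinj z' b c)]
      · ring
      · rw [Finset.disjoint_left]
        intro e he he'
        rw [Finset.mem_image] at he he'
        obtain ⟨b, hb, rfl⟩ := he
        obtain ⟨c, hc, h⟩ := he'
        have q1 := hz1 b hb
        have q2 := hz1 c hc
        simp only [ed, Prod.mk.injEq] at h
        rcases le_total z b with h1 | h1 <;> rcases le_total z' c with h2 | h2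
        · rw [min_eq_left h1, max_eq_right h1, min_eq_left h2, max_eq_right h2] at h
          exact hz h.1.symm
        · rw [min_eq_left h1, max_eq_right h1, min_eq_right h2, max_eq_left h2] at h
          exact q2.1 h.1
        · rw [min_eq_right h1, max_eq_left h1, min_eq_left h2, max_eq_right h2] at h
          exact q2.1 h.2
        · rw [min_eq_right h1, max_eq_left h1, min_eq_right h2, max_eq_left h2] at h
          exact hz h.2.symm
    have h1 : Pr (ev B) ≤ Pr (fun X : V × V → Fin m => (∀ i ∈ A, X i = 0) ∧ ∀ i ∈ (∅ : Finset (V × V)), X i ≠ 0) := by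
      apply Pr_mono
      intro X hX
      refine ⟨?_, by simp⟩
      intro e he
      rw [hA, Finset.mem_union, Finset.mem_image, Finset.mem_image] at he
      rcases he with ⟨b, hb, rfl⟩ | ⟨b, hb, rfl⟩
      · exact hadj X _ _ (hX b hb).1
      · exact hadj X _ _ (hX b hb).2
    rw [Pr_cyl _ _ (Finset.disjoint_empty_right _), hAc] at h1
    rw [one_pow, mul_one, ← pow_mul]
    refine le_trans (le_of_eq ?_) (h1.trans (le_of_eq ?_))
    · unfold Pr; congr!
    · simp
  refine (Finset.sum_le_sum step2).trans ?_
  rw [Finset.sum_pow_mul_eq_add_pow]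
  have hUc : (U.card : ℝ) ≤ Fintype.card V := by exact_mod_cast U.card_le_univ
  calc ((1 / m : ℝ) ^ 2 + 1) ^ U.card ≤ (Real.exp ((1 / m : ℝ) ^ 2)) ^ U.card := by
        gcongr; exact Real.add_one_le_exp _
    _ = Real.exp (U.card * (1 / m : ℝ) ^ 2) := by rw [← Real.exp_nat_mul]
    _ ≤ _ := by
      rw [Real.exp_le_exp, mul_comm]
      gcongr

theorem Pr_not_nice (D : ℕ) :
    Pr (fun X : V × V → Fin m => ¬ Nice (8 * (1 / m : ℝ) * Fintype.card V) D X)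
      ≤ 2 * (Fintype.card V * Real.exp (-(2 * (1 / m : ℝ) * Fintype.card V)))
        + (Fintype.card V) ^ 2 * ((1 / 2) ^ D * Real.exp ((1 / m : ℝ) ^ 2 * Fintype.card V)) := by
  classical
  have h1 := rows_count (V := V) (m := m) rowEq
  have h2 := rows_count (V := V) (m := m) colEq
  let s : Finset (V × V) := Finset.univ.filter (fun x => x.1 ≠ x.2)
  have hs : (s.card : ℝ) ≤ (Fintype.card V : ℝ) ^ 2 := by
    have : s.card ≤ Fintype.card V ^ 2 := by
      refine (Finset.card_le_univ s).trans ?_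
      rw [Fintype.card_prod, sq]
    exact_mod_cast this
  have h3 := Pr_exists_le s (fun x (X : V × V → Fin m) =>
      D ≤ (Finset.univ.filter (fun b => adjX X x.1 b ∧ adjX X x.2 b)).card)
      ((1 / 2) ^ D * Real.exp ((1 / m : ℝ) ^ 2 * Fintype.card V))
      (fun x hx => Pr_codeg D x.1 x.2 (Finset.mem_filter.1 hx).2)
  have h4 : Pr (fun X : V × V → Fin m => ¬ Nice (8 * (1 / m : ℝ) * Fintype.card V) D X) ≤
      Pr (fun X : V × V → Fin m => ((∃ z ∈ (Finset.univ : Finset V),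
        4 * (1 / m : ℝ) * Fintype.card V < ∑ b, xi (rowEq X z b)) ∨ (∃ z ∈ (Finset.univ : Finset V),
        4 * (1 / m : ℝ) * Fintype.card V < ∑ b, xi (colEq X z b))) ∨
        ∃ x ∈ s, D ≤ (Finset.univ.filter (fun b => adjX X x.1 b ∧ adjX X x.2 b)).card) := by
    apply Pr_mono
    intro X
    contrapose!
    rintro ⟨⟨a1, a2⟩, a3⟩
    refine ⟨?_, ?_⟩
    · intro z
      have : ((Finset.univ.filter (fun b => adjX X z b)).card : ℝ)
          ≤ ∑ b, xi (rowEq X z b) + ∑ b, xi (colEq X z b) := by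
        rw [← Finset.sum_add_distrib, Finset.card_filter]
        push_cast
        apply Finset.sum_le_sum
        intro b _
        split_ifs with hb
        · exact adjX_xi hb
        · exact add_nonneg (xi_nonneg _) (xi_nonneg _)
      have b1 := a1 z (Finset.mem_univ _)
      have b2 := a2 z (Finset.mem_univ _)
      calc _ ≤ _ := this
        _ ≤ _ := add_le_add b1 b2
        _ = _ := by ring
    · intro z z' hz
      convert a3 (z, z') (by simp [s, hz])
  refine h4.trans ((Pr_or _ _).trans ?_)
  have h5 := Pr_or (fun X : V × V → Fin m => ∃ z ∈ (Finset.univ : Finset V),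
        4 * (1 / m : ℝ) * Fintype.card V < ∑ b, xi (rowEq X z b)) (fun X => ∃ z ∈ (Finset.univ : Finset V),
        4 * (1 / m : ℝ) * Fintype.card V < ∑ b, xi (colEq X z b))
  have h6 : (s.card : ℝ) * ((1 / 2) ^ D * Real.exp ((1 / m : ℝ) ^ 2 * Fintype.card V)) ≤
    (Fintype.card V) ^ 2 * ((1 / 2) ^ D * Real.exp ((1 / m : ℝ) ^ 2 * Fintype.card V)) := by gcongr
  linarith

end nice

/-! ### Control of weighted common neighbourhoods -/
section weights

open Classical in
theorem heavy {V : Type*} [Fintype V] (r : V → V → Prop) (ω : V → ℝ) (R τ J Δ : ℝ) (D : ℕ)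
    (h0 : ∀ b, 0 ≤ ω b) (hR : ∀ b, ω b ≤ R) (hR0 : 0 ≤ R) (hτ : ∑ b, ω b = τ) (hJ : 0 ≤ J)
    (hΔ0 : 0 ≤ Δ)
    (hdeg : ∀ z, ((Finset.univ.filter (fun b => r z b)).card : ℝ) ≤ Δ)
    (hcod : ∀ z z', z ≠ z' → (Finset.univ.filter (fun b => r z b ∧ r z' b)).card < D)
    (hJ2 : 2 * τ * R * D ≤ J ^ 2) :
    ∑ z ∈ Finset.univ.filter (fun z => J < ∑ b, if r z b then ω b else 0),
      (∑ b, if r z b then ω b else 0) ^ 2 ≤ 2 * τ * R * Δ := by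
  set Y : V → ℝ := fun z => ∑ b, if r z b then ω b else 0 with hY
  set H := Finset.univ.filter (fun z => J < Y z) with hH
  change ∑ z ∈ H, (Y z) ^ 2 ≤ _
  have hτ0 : 0 ≤ τ := by rw [← hτ]; exact Finset.sum_nonneg fun b _ => h0 b
  have hY0 : ∀ z, 0 ≤ Y z := fun z => Finset.sum_nonneg fun b _ => by
    split_ifs
    · exact h0 b
    · exact le_rfl
  have hYR : ∀ z, Y z ≤ R * Δ := by
    intro z
    simp only [hY]
    rw [← Finset.sum_filter]
    calc _ ≤ ∑ b ∈ Finset.univ.filter (fun b => r z b), R := Finset.sum_le_sum fun b _ => hR b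
      _ = R * ((Finset.univ.filter (fun b => r z b)).card : ℝ) := by
        rw [Finset.sum_const, nsmul_eq_mul, mul_comm]
      _ ≤ _ := mul_le_mul_of_nonneg_left (hdeg z) hR0
  set T := ∑ z ∈ H, Y z with hT
  have hT0 : 0 ≤ T := Finset.sum_nonneg fun z _ => hY0 z
  let c : V → ℝ := fun b => ∑ z ∈ H, if r z b then (1:ℝ) else 0
  have hTc : T = ∑ b, ω b * c b := by
    rw [hT]
    simp only [hY, c]
    rw [Finset.sum_comm]
    apply Finset.sum_congr rfl
    intro b _
    rw [Finset.mul_sum]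
    apply Finset.sum_congr rfl
    intro z _
    split_ifs <;> simp
  have hCS : T ^ 2 ≤ τ * ∑ b, ω b * (c b) ^ 2 := by
    rw [hTc, ← hτ]
    apply Finset.sum_sq_le_sum_mul_sum_of_sq_le_mul
    · intro b _; exact h0 b
    · intro b _; exact mul_nonneg (h0 b) (sq_nonneg _)
    · intro b _; exact le_of_eq (by ring)
  have hc2 : ∑ b, ω b * (c b) ^ 2 ≤ T + (H.card : ℝ) ^ 2 * (R * D) := by
    have e1 : ∑ b, ω b * (c b) ^ 2 =
        ∑ z ∈ H, ∑ z' ∈ H, ∑ b, if (r z b ∧ r z' b) then ω b else 0 := by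
      have : ∀ b, ω b * (c b) ^ 2 = ∑ z ∈ H, ∑ z' ∈ H, if (r z b ∧ r z' b) then ω b else 0 := by
        intro b
        simp only [c]
        rw [sq, Finset.sum_mul_sum, Finset.mul_sum]
        apply Finset.sum_congr rfl
        intro z _
        rw [Finset.mul_sum]
        apply Finset.sum_congr rfl
        intro z' _
        by_cases h1 : r z b <;> by_cases h2 : r z' b <;> simp [h1, h2]
      simp_rw [this]
      rw [Finset.sum_comm]
      apply Finset.sum_congr rfl
      intro z _
      rw [Finset.sum_comm]
    rw [e1]
    have e2 : ∀ z z', (∑ b, if (r z b ∧ r z' b) then ω b else 0)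
        ≤ (if z = z' then Y z else 0) + R * D := by
      intro z z'
      by_cases h : z = z'
      · subst h
        simp only [and_self, if_true]
        have : 0 ≤ R * (D : ℝ) := by positivity
        simp only [hY]
        linarith
      · rw [if_neg h, zero_add, ← Finset.sum_filter]
        have hlt : ((Finset.univ.filter (fun b => r z b ∧ r z' b)).card : ℝ) ≤ D := by
          exact_mod_cast (hcod z z' h).le
        calc _ ≤ ∑ b ∈ Finset.univ.filter (fun b => r z b ∧ r z' b), R :=
              Finset.sum_le_sum fun b _ => hR b
          _ = R * ((Finset.univ.filter (fun b => r z b ∧ r z' b)).card : ℝ) := by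
            rw [Finset.sum_const, nsmul_eq_mul, mul_comm]
          _ ≤ _ := mul_le_mul_of_nonneg_left hlt hR0
    calc _ ≤ ∑ z ∈ H, ∑ z' ∈ H, ((if z = z' then Y z else 0) + R * D) :=
          Finset.sum_le_sum fun z _ => Finset.sum_le_sum fun z' _ => e2 z z'
      _ = ∑ z ∈ H, (Y z + H.card * (R * D)) := by
          apply Finset.sum_congr rfl
          intro z hz
          rw [Finset.sum_add_distrib, Finset.sum_ite_eq, if_pos hz, Finset.sum_const, nsmul_eq_mul]
      _ = _ := by
          rw [Finset.sum_add_distrib, Finset.sum_const, nsmul_eq_mul]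
          ring
  have hq : (H.card : ℝ) * J ≤ T := by
    rw [hT, ← nsmul_eq_mul]
    apply Finset.card_nsmul_le_sum
    intro z hz
    exact (Finset.mem_filter.1 hz).2.le
  have hq2 : (H.card : ℝ) ^ 2 * J ^ 2 ≤ T ^ 2 := by
    rw [← mul_pow]
    gcongr
  have hT2 : T ≤ 2 * τ := by
    have h1 : 2 * (τ * ((H.card : ℝ) ^ 2 * (R * D))) ≤ T ^ 2 := by
      calc _ = (H.card : ℝ) ^ 2 * (2 * τ * R * D) := by ring
        _ ≤ (H.card : ℝ) ^ 2 * J ^ 2 := by gcongr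
        _ ≤ _ := hq2
    have h2 : T ^ 2 ≤ τ * (T + (H.card : ℝ) ^ 2 * (R * D)) :=
      hCS.trans (mul_le_mul_of_nonneg_left hc2 hτ0)
    by_contra hcon
    push Not at hcon
    nlinarith
  calc ∑ z ∈ H, (Y z) ^ 2 ≤ ∑ z ∈ H, (R * Δ) * Y z := by
        apply Finset.sum_le_sum
        intro z _
        rw [sq]
        exact mul_le_mul_of_nonneg_right (hYR z) (hY0 z)
    _ = (R * Δ) * T := by rw [← Finset.mul_sum]
    _ ≤ (R * Δ) * (2 * τ) := mul_le_mul_of_nonneg_left hT2 (by positivity)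
    _ = _ := by ring

variable {V : Type*} [Fintype V] [LinearOrder V] {m : ℕ} [NeZero m]

open Classical in
theorem Wbound (ω : V → ℝ) (R τ E : ℝ) (D : ℕ)
    (h0 : ∀ b, 0 ≤ ω b) (hR : ∀ b, ω b ≤ R) (hR0 : 0 ≤ R) (hτ : ∑ b, ω b = τ) (hτ0 : 0 < τ)
    (hE : 0 < E)
    (c1 : 256 * Fintype.card V * (1 / m : ℝ) * R ≤ τ)
    (c2 : 2 ^ 19 * E ^ 2 * R ^ 3 * D ≤ τ ^ 3)
    (c3 : 2 ^ 19 * E ^ 2 * R * D * (1 / m : ℝ) ^ 2 ≤ τ)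
    (c4 : 256 * ((1 / m : ℝ) ^ 2 * Fintype.card V) ≤ 1) :
    Pr (fun X : V × V → Fin m => Nice (8 * (1 / m : ℝ) * Fintype.card V) D X ∧
        τ ^ 2 / 4 < ∑ z, (∑ b, if adjX X z b then ω b else 0) ^ 2)
      ≤ 2 * Real.exp (-E) := by
  have hp := p_pos (m := m)
  set p : ℝ := 1 / m with hpdef
  set M : ℝ := (Fintype.card V : ℝ) with hM
  have hM0 : 0 ≤ M := Nat.cast_nonneg _
  set J := Real.sqrt (2 * τ * R * D) with hJdef
  have hJ0 : 0 ≤ J := Real.sqrt_nonneg _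
  have hJ2 : J ^ 2 = 2 * τ * R * D := Real.sq_sqrt (by positivity)
  set θ := 64 * E / τ ^ 2 with hθdef
  have hθ : 0 < θ := by positivity
  have hθτ : θ * τ ^ 2 = 64 * E := by rw [hθdef]; field_simp
  have hδR : (θ * J) * R ≤ 1 / 8 := by
    apply le_of_sq_le_sq _ (by norm_num)
    have : ((θ * J) * R) ^ 2 = (2 ^ 19 * E ^ 2 * R ^ 3 * D) / τ ^ 3 / 64 := by
      calc ((θ * J) * R) ^ 2 = θ ^ 2 * J ^ 2 * R ^ 2 := by ring
        _ = _ := by rw [hJ2, hθdef]; field_simp; ring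
    rw [this]
    have h1 : (2 ^ 19 * E ^ 2 * R ^ 3 * D) / τ ^ 3 ≤ 1 := by
      rw [div_le_one (by positivity)]; exact c2
    linarith
  have hδτ : p * (θ * J) * τ ≤ 1 / 8 := by
    apply le_of_sq_le_sq _ (by norm_num)
    have : (p * (θ * J) * τ) ^ 2 = (2 ^ 19 * E ^ 2 * R * D * p ^ 2) / τ / 64 := by
      calc (p * (θ * J) * τ) ^ 2 = p ^ 2 * θ ^ 2 * J ^ 2 * τ ^ 2 := by ring
        _ = _ := by rw [hJ2, hθdef]; field_simp; ring
    rw [this]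
    have h1 : (2 ^ 19 * E ^ 2 * R * D * p ^ 2) / τ ≤ 1 := by
      rw [div_le_one (by positivity)]; exact c3
    linarith
  have tail : ∀ e : (V × V → Fin m) ≃ (V → V → Fin m),
      Pr (fun X : V × V → Fin m => 2 * E < θ * ∑ z, (min (∑ b, ω b * xi (e X z b)) J) ^ 2)
        ≤ Real.exp (-E) := by
    intro e
    refine (rows_tail e ω θ J R τ h0 hR hτ hθ.le hJ0 hδR hδτ (2 * E)).trans ?_
    rw [Real.exp_le_exp, ← hpdef, ← hM]
    have h1 : M * (θ * (2 * (p ^ 2 * τ ^ 2 + p * R * τ)))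
        = (2 * (p ^ 2 * M)) * (θ * τ ^ 2) + 2 * (M * p * R) * (θ * τ) := by ring
    have h2 : (2 * (p ^ 2 * M)) * (θ * τ ^ 2) ≤ (1 / 128) * (θ * τ ^ 2) := by
      gcongr; linarith
    have h3 : 2 * (M * p * R) * (θ * τ) ≤ (τ / 128) * (θ * τ) := by
      gcongr; linarith
    have h4 : (τ / 128) * (θ * τ) = (1 / 128) * (θ * τ ^ 2) := by ring
    rw [h1]
    rw [hθτ] at h2 h4
    rw [hθτ]
    linarith
  have hsub : Pr (fun X : V × V → Fin m => Nice (8 * p * M) D X ∧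
        τ ^ 2 / 4 < ∑ z, (∑ b, if adjX X z b then ω b else 0) ^ 2) ≤
      Pr (fun X : V × V → Fin m => (2 * E < θ * ∑ z, (min (∑ b, ω b * xi (rowEq X z b)) J) ^ 2) ∨
        (2 * E < θ * ∑ z, (min (∑ b, ω b * xi (colEq X z b)) J) ^ 2)) := by
    apply Pr_mono
    rintro X ⟨hN, hbig⟩
    by_contra hcon
    push Not at hcon
    obtain ⟨g1, g2⟩ := hcon
    have hconv : ∀ F : ℝ, θ * F ≤ 2 * E → F ≤ τ ^ 2 / 32 := by
      intro F hF
      have : θ * F ≤ θ * (τ ^ 2 / 32) := by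
        calc θ * F ≤ 2 * E := hF
          _ = (θ * τ ^ 2) / 32 := by rw [hθτ]; ring
          _ = _ := by ring
      exact le_of_mul_le_mul_left this hθ
    have g1' := hconv _ g1
    have g2' := hconv _ g2
    have hh := heavy (adjX X) ω R τ J (8 * p * M) D h0 hR hR0 hτ hJ0 (by positivity)
      (by convert hN.1) (by convert hN.2) hJ2.ge
    have hheavy : 2 * τ * R * (8 * p * M) ≤ τ ^ 2 / 16 := by
      calc _ = (256 * M * p * R) * τ / 16 := by ring
        _ ≤ τ * τ / 16 := by gcongr
        _ = _ := by ring
    set Y : V → ℝ := fun z => ∑ b, if adjX X z b then ω b else 0 with hY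
    have hlight : ∑ z ∈ Finset.univ.filter (fun z => ¬ J < Y z), (Y z) ^ 2 ≤
        ∑ z, 2 * ((min (∑ b, ω b * xi (rowEq X z b)) J) ^ 2
          + (min (∑ b, ω b * xi (colEq X z b)) J) ^ 2) := by
      refine (Finset.sum_le_sum (g := fun z => 2 * ((min (∑ b, ω b * xi (rowEq X z b)) J) ^ 2
          + (min (∑ b, ω b * xi (colEq X z b)) J) ^ 2)) ?_).trans
          (Finset.sum_le_sum_of_subset_of_nonneg (Finset.filter_subset _ _) ?_)
      · intro z hz
        have hz' : Y z ≤ J := not_lt.1 (Finset.mem_filter.1 hz).2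
        have hYle : Y z ≤ ∑ b, ω b * xi (rowEq X z b) + ∑ b, ω b * xi (colEq X z b) := by
          rw [← Finset.sum_add_distrib]
          apply Finset.sum_le_sum
          intro b _
          rw [← mul_add]
          split_ifs with hb
          · exact le_mul_of_one_le_right (h0 b) (adjX_xi hb)
          · exact mul_nonneg (h0 b) (add_nonneg (xi_nonneg _) (xi_nonneg _))
        have hr0 : 0 ≤ ∑ b, ω b * xi (rowEq X z b) :=
          Finset.sum_nonneg fun b _ => mul_nonneg (h0 b) (xi_nonneg _)
        have hc0 : 0 ≤ ∑ b, ω b * xi (colEq X z b) :=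
          Finset.sum_nonneg fun b _ => mul_nonneg (h0 b) (xi_nonneg _)
        have hY0 : 0 ≤ Y z := Finset.sum_nonneg fun b _ => by
          split_ifs
          · exact h0 b
          · exact le_rfl
        generalize (∑ b, ω b * xi (rowEq X z b)) = x at *
        generalize (∑ b, ω b * xi (colEq X z b)) = y at *
        have h5 : Y z ≤ min x J + min y J := by
          rcases le_total x J with h | h <;> rcases le_total y J with h' | h' <;>
            simp only [min_eq_left, min_eq_right, h, h'] <;> linarith
        have h6 : (Y z) ^ 2 ≤ (min x J + min y J) ^ 2 := by gcongr
        nlinarith [sq_nonneg (min x J - min y J)]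
      · intro z _ _
        positivity
    rw [← Finset.mul_sum, Finset.sum_add_distrib] at hlight
    have hsum := Finset.sum_filter_add_sum_filter_not Finset.univ (fun z => J < Y z) (fun z => (Y z) ^ 2)
    have hbig' : τ ^ 2 / 4 < ∑ z, (Y z) ^ 2 := hbig
    have : 0 < τ ^ 2 := by positivity
    linarith
  refine hsub.trans ((Pr_or _ _).trans ?_)
  have := tail rowEq
  have := tail colEq
  linarith

end weights

/-! ### The main probabilistic estimate for a fixed set -/
section unified

/-- common neighbour -/
def commonX {V : Type*} [LinearOrder V] {m : ℕ} [NeZero m] (X : V × V → Fin m) (a b : V) : Prop :=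
  ∃ z, adjX X z a ∧ adjX X z b

theorem commonX_symm {V : Type*} [LinearOrder V] {m : ℕ} [NeZero m] {X : V × V → Fin m} {a b : V}
    (h : commonX X a b) : commonX X b a := by
  obtain ⟨z, h1, h2⟩ := h
  exact ⟨z, h2, h1⟩

theorem unified {U Ve Vb : Type*} [DecidableEq U] [Fintype Ve] [Fintype Vb] [LinearOrder Ve]
    [LinearOrder Vb] {me mb : ℕ} [NeZero me] [NeZero mb] (S : Finset U) (πe : U → Ve) (πb : U → Vb)
    (hinj : Set.InjOn πe S) (R E : ℝ) (D : ℕ) (hR0 : 0 ≤ R)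
    (hfib : ∀ b, ((S.filter (fun u => πb u = b)).card : ℝ) ≤ R) (hS : 2 ≤ S.card) (hE : 0 < E)
    (c1 : 256 * Fintype.card Vb * (1 / mb : ℝ) * R ≤ S.card)
    (c2 : 2 ^ 19 * E ^ 2 * R ^ 3 * D ≤ (S.card : ℝ) ^ 3)
    (c3 : 2 ^ 19 * E ^ 2 * R * D * (1 / mb : ℝ) ^ 2 ≤ S.card)
    (c4 : 256 * ((1 / mb : ℝ) ^ 2 * Fintype.card Vb) ≤ 1)
    (hme : 2 ≤ me) (hMe : 48 * Fintype.card Ve ≤ me ^ 2)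
    (c5 : 16 * me * E ≤ (S.card : ℝ) ^ 2) :
    Pr (fun w : (Vb × Vb → Fin mb) × (Ve × Ve → Fin me) =>
      Nice (8 * (1 / mb : ℝ) * Fintype.card Vb) D w.1 ∧
      ∀ u ∈ S, ∀ v ∈ S, (πe u, πe v) ∈ Surv w.2 → commonX w.1 (πb u) (πb v)) ≤ 3 * Real.exp (-E) := by
  classical
  let ω : Vb → ℝ := fun b => ((S.filter (fun u => πb u = b)).card : ℝ)
  have hτ : ∑ b, ω b = (S.card : ℝ) := by
    have := Finset.card_eq_sum_card_fiberwise (s := S) (f := πb) (t := Finset.univ) (by simp)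
    simp only [ω]
    rw [this]
    push_cast
    rfl
  have hτ2 : (2:ℝ) ≤ S.card := by exact_mod_cast hS
  have hW := Wbound (m := mb) ω R (S.card : ℝ) E D (fun b => Nat.cast_nonneg _) hfib hR0 hτ
    (by linarith) hE c1 c2 c3 c4
  have key := Pr_pair_le (Ω := Vb × Vb → Fin mb) (Ω' := Ve × Ve → Fin me)
    (P := fun w : (Vb × Vb → Fin mb) × (Ve × Ve → Fin me) =>
      Nice (8 * (1 / mb : ℝ) * Fintype.card Vb) D w.1 ∧
      ∀ u ∈ S, ∀ v ∈ S, (πe u, πe v) ∈ Surv w.2 → commonX w.1 (πb u) (πb v))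
    (A := fun X => Nice (8 * (1 / mb : ℝ) * Fintype.card Vb) D X ∧
        (S.card : ℝ) ^ 2 / 4 < ∑ z, (∑ b, if adjX X z b then ω b else 0) ^ 2)
    (c := Real.exp (-E)) (Real.exp_pos _).le ?_
  · linarith
  intro X hX
  by_cases hN : Nice (8 * (1 / mb : ℝ) * Fintype.card Vb) D X
  swap
  · have : Pr (fun b : Ve × Ve → Fin me => Nice (8 * (1 / mb : ℝ) * Fintype.card Vb) D X ∧
      ∀ u ∈ S, ∀ v ∈ S, (πe u, πe v) ∈ Surv b → commonX X (πb u) (πb v)) ≤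
        Pr (fun b : Ve × Ve → Fin me => False) := Pr_mono fun _ h => hN h.1
    refine this.trans ?_
    have : Pr (fun X : Ve × Ve → Fin me => False) = 0 := by simp [Pr, Ex]
    rw [this]
    positivity
  have hsmall : ∑ z, (∑ b, if adjX X z b then ω b else 0) ^ 2 ≤ (S.card : ℝ) ^ 2 / 4 := by
    by_contra h
    exact hX ⟨hN, not_le.1 h⟩
  have hYz : ∀ z, (∑ b, if adjX X z b then ω b else 0)
      = ((S.filter (fun u => adjX X z (πb u))).card : ℝ) := by
    intro z
    have := Finset.card_eq_sum_card_fiberwise (s := S.filter (fun u => adjX X z (πb u))) (f := πb)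
      (t := Finset.univ) (by simp)
    rw [this]
    push_cast
    apply Finset.sum_congr rfl
    intro b _
    split_ifs with hb
    · simp only [ω]
      congr 2
      ext u
      simp only [Finset.mem_filter]
      constructor
      · rintro ⟨h1, rfl⟩; exact ⟨⟨h1, hb⟩, rfl⟩
      · rintro ⟨⟨h1, _⟩, h2⟩; exact ⟨h1, h2⟩
    · symm
      rw [Nat.cast_eq_zero, Finset.card_eq_zero]
      ext u
      simp only [Finset.mem_filter, Finset.notMem_empty, iff_false, not_and]
      rintro ⟨_, h⟩ rfl
      exact hb h
  simp_rw [hYz] at hsmall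
  let bad := (S ×ˢ S).filter (fun x => commonX X (πb x.1) (πb x.2))
  have hbad : (bad.card : ℝ) ≤ (S.card : ℝ) ^ 2 / 4 := by
    refine le_trans ?_ hsmall
    have h1 : bad ⊆ Finset.univ.biUnion (fun z => (S.filter (fun u => adjX X z (πb u))) ×ˢ
        (S.filter (fun u => adjX X z (πb u)))) := by
      rintro ⟨u, v⟩ h
      simp only [bad, Finset.mem_filter, Finset.mem_product] at h
      obtain ⟨⟨hu, hv⟩, z, hz1, hz2⟩ := h
      simp only [Finset.mem_biUnion, Finset.mem_univ, true_and, Finset.mem_product, Finset.mem_filter]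
      exact ⟨z, ⟨hu, hz1⟩, ⟨hv, hz2⟩⟩
    have h2 := (Finset.card_le_card h1).trans Finset.card_biUnion_le
    have h3 : (bad.card : ℝ) ≤ ((∑ z, ((S.filter (fun u => adjX X z (πb u))) ×ˢ
        (S.filter (fun u => adjX X z (πb u)))).card : ℕ) : ℝ) := by exact_mod_cast h2
    refine h3.trans (le_of_eq ?_)
    push_cast
    apply Finset.sum_congr rfl
    intro z _
    rw [Finset.card_product]
    push_cast
    ring
  let Q0 := (S ×ˢ S).filter (fun x => πe x.1 < πe x.2 ∧ ¬ commonX X (πb x.1) (πb x.2))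
  have hcov : S ×ˢ S ⊆ (bad ∪ S.image (fun u => (u, u))) ∪ (Q0 ∪ Q0.image Prod.swap) := by
    rintro ⟨u, v⟩ h
    have h' := h
    rw [Finset.mem_product] at h'
    by_cases hc : commonX X (πb u) (πb v)
    · apply Finset.mem_union_left; apply Finset.mem_union_left
      exact Finset.mem_filter.2 ⟨h, hc⟩
    rcases lt_trichotomy (πe u) (πe v) with hlt | heq | hgt
    · apply Finset.mem_union_right; apply Finset.mem_union_left
      exact Finset.mem_filter.2 ⟨h, hlt, hc⟩
    · apply Finset.mem_union_left; apply Finset.mem_union_right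
      have := hinj h'.1 h'.2 heq
      dsimp only at this
      subst this
      exact Finset.mem_image.2 ⟨u, h'.1, rfl⟩
    · apply Finset.mem_union_right; apply Finset.mem_union_right
      refine Finset.mem_image.2 ⟨(v, u), Finset.mem_filter.2 ⟨?_, hgt, fun h => hc (commonX_symm h)⟩, rfl⟩
      exact Finset.mem_product.2 ⟨h'.2, h'.1⟩
  have hcount : (S.card : ℝ) ^ 2 ≤ (bad.card : ℝ) + S.card + 2 * Q0.card := by
    have h1 := Finset.card_le_card hcov
    have h2 := Finset.card_union_le (bad ∪ S.image (fun u => (u, u))) (Q0 ∪ Q0.image Prod.swap)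
    have h3 := Finset.card_union_le bad (S.image (fun u => (u, u)))
    have h4 := Finset.card_union_le Q0 (Q0.image Prod.swap)
    have h5 := Finset.card_image_le (s := S) (f := fun u => (u, u))
    have h6 := Finset.card_image_le (s := Q0) (f := Prod.swap)
    rw [Finset.card_product] at h1
    have : S.card ^ 2 ≤ bad.card + S.card + 2 * Q0.card := by rw [sq]; omega
    exact_mod_cast this
  let Q := Q0.image (fun x => (πe x.1, πe x.2))
  have hQc : Q.card = Q0.card := by
    apply Finset.card_image_of_injOn
    rintro ⟨u, v⟩ h1 ⟨u', v'⟩ h2 h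
    simp only [Q0, Finset.coe_filter, Set.mem_ofPred_eq, Finset.mem_product] at h1 h2
    simp only [Prod.mk.injEq] at h ⊢
    exact ⟨hinj h1.1.1 h2.1.1 h.1, hinj h1.1.2 h2.1.2 h.2⟩
  have hQlt : ∀ e ∈ Q, e.1 < e.2 := by
    intro e he
    obtain ⟨x, hx, rfl⟩ := Finset.mem_image.1 he
    exact (Finset.mem_filter.1 hx).2.1
  have hPr := Pr_surv (m := me) Q hQlt hme hMe
  have hm : Pr (fun b : Ve × Ve → Fin me => Nice (8 * (1 / mb : ℝ) * Fintype.card Vb) D X ∧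
      ∀ u ∈ S, ∀ v ∈ S, (πe u, πe v) ∈ Surv b → commonX X (πb u) (πb v)) ≤
        Pr (fun b : Ve × Ve → Fin me => Disjoint (Surv b) Q) := by
    apply Pr_mono
    rintro b ⟨_, h⟩
    rw [Finset.disjoint_left]
    intro e he heQ
    obtain ⟨x, hx, rfl⟩ := Finset.mem_image.1 heQ
    have hx' := Finset.mem_filter.1 hx
    have hx1 := Finset.mem_product.1 hx'.1
    exact hx'.2.2 (h x.1 hx1.1 x.2 hx1.2 he)
  refine hm.trans (hPr.trans ?_)
  rw [Real.exp_le_exp, neg_le_neg_iff, hQc]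
  have hme0 : (0:ℝ) < me := by positivity
  rw [le_div_iff₀ (by positivity)]
  nlinarith

end unified

/-! ### Existence of the triangle-free graph -/
section graph

theorem nice_num {V : Type*} [Fintype V] [LinearOrder V] (v L : ℕ) [NeZero (16 * v)]
    (hV : Fintype.card V = v ^ 2) (hv : 2 ^ 26 ≤ v) (hL : 16 ≤ L) (hvL : v ^ 2 ≤ 2 ^ L) :
    Pr (fun X : V × V → Fin (16 * v) =>
      ¬ Nice (8 * (1 / (16 * v : ℕ) : ℝ) * Fintype.card V) (3 * L) X) ≤ 1 / 5 := by
  refine (Pr_not_nice (V := V) (m := 16 * v) (3 * L)).trans ?_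
  rw [hV]
  push_cast
  have hv' : (2:ℝ) ^ 26 ≤ v := by exact_mod_cast hv
  have hv0 : (0:ℝ) < v := by linarith [show (0:ℝ) < 2 ^ 26 by norm_num]
  have e1 : -(2 * (1 / (16 * (v:ℝ))) * (v:ℝ) ^ 2) = -((v:ℝ) / 8) := by field_simp; ring
  have e2 : (1 / (16 * (v:ℝ))) ^ 2 * (v:ℝ) ^ 2 = 1 / 256 := by field_simp; norm_num
  rw [e1, e2]
  have h1 : Real.exp (-((v:ℝ) / 8)) ≤ 3072 / (v:ℝ) ^ 3 := by
    rw [Real.exp_neg, inv_le_comm₀ (Real.exp_pos _) (by positivity), inv_div]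
    have := Real.pow_div_factorial_le_exp ((v:ℝ) / 8) (by positivity) 3
    refine le_trans (le_of_eq ?_) this
    norm_num [Nat.factorial]
    ring
  have h2 : 2 * ((v:ℝ) ^ 2 * Real.exp (-((v:ℝ) / 8))) ≤ 1 / 10 := by
    calc _ ≤ 2 * ((v:ℝ) ^ 2 * (3072 / (v:ℝ) ^ 3)) := by gcongr
      _ = 6144 / v := by field_simp; ring
      _ ≤ 1 / 10 := by
        rw [div_le_div_iff₀ hv0 (by norm_num)]
        norm_num at hv' ⊢
        linarith
  have hvL' : (v:ℝ) ^ 2 ≤ 2 ^ L := by exact_mod_cast hvL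
  have h3 : ((v:ℝ) ^ 2) ^ 2 * (1 / 2) ^ (3 * L) ≤ (1 / 2) ^ 16 := by
    calc _ ≤ ((2:ℝ) ^ L) ^ 2 * (1 / 2) ^ (3 * L) := by gcongr
      _ = (1 / 2) ^ L := by
        rw [show 3 * L = L + L + L by ring, pow_add, pow_add]
        have : (2:ℝ) ^ L * (1 / 2) ^ L = 1 := by rw [← mul_pow]; norm_num
        calc _ = ((2:ℝ) ^ L * (1 / 2) ^ L) * ((2:ℝ) ^ L * (1 / 2) ^ L) * (1 / 2) ^ L := by ring
          _ = _ := by rw [this]; ring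
      _ ≤ _ := pow_le_pow_of_le_one (by norm_num) (by norm_num) hL
  have h4 : Real.exp (1 / 256) ≤ 3 := by
    have : Real.exp (1 / 256) ≤ Real.exp 1 := Real.exp_le_exp.2 (by norm_num)
    linarith [Real.exp_one_lt_d9]
  have h5 : ((v:ℝ) ^ 2) ^ 2 * ((1 / 2) ^ (3 * L) * Real.exp (1 / 256)) ≤ 1 / 10 := by
    calc _ = (((v:ℝ) ^ 2) ^ 2 * (1 / 2) ^ (3 * L)) * Real.exp (1 / 256) := by ring
      _ ≤ (1 / 2) ^ 16 * 3 := by gcongr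
      _ ≤ _ := by norm_num
  linarith

theorem exp_num (c K : ℕ) (hc : c ≤ 2 ^ (2 * K)) (hK : 16 ≤ K) :
    (c : ℝ) * (3 * Real.exp (-(3 * K : ℝ))) ≤ 1 / 10 := by
  have hc' : (c : ℝ) ≤ 2 ^ (2 * K) := by exact_mod_cast hc
  have h1 : Real.exp (-(3 * K : ℝ)) ≤ (1 / 2) ^ (3 * K) := by
    have : (-(3 * K : ℝ)) = ((3 * K : ℕ) : ℝ) * (-1) := by push_cast; ring
    rw [this, Real.exp_nat_mul]
    gcongr
    rw [Real.exp_neg, inv_le_comm₀ (Real.exp_pos _) (by norm_num)]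
    have := Real.exp_one_gt_d9
    norm_num at this ⊢
    linarith
  calc _ ≤ (2:ℝ) ^ (2 * K) * (3 * (1 / 2) ^ (3 * K)) := by gcongr
    _ = 3 * (1 / 2) ^ K := by
        rw [show 3 * K = 2 * K + K by ring, pow_add]
        have : (2:ℝ) ^ (2 * K) * (1 / 2) ^ (2 * K) = 1 := by rw [← mul_pow]; norm_num
        calc _ = 3 * ((2:ℝ) ^ (2 * K) * (1 / 2) ^ (2 * K)) * (1 / 2) ^ K := by ring
          _ = _ := by rw [this]; ring
    _ ≤ 3 * (1 / 2) ^ 16 := by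
        gcongr 3 * ?_
        exact pow_le_pow_of_le_one (by norm_num) (by norm_num) hK
    _ ≤ _ := by norm_num

theorem exists_transversal {α β : Type*} [DecidableEq α] [DecidableEq β] (f : α → β) (S : Finset α)
    (s : ℕ) (h : s ≤ (S.image f).card) : ∃ T ⊆ S, T.card = s ∧ Set.InjOn f T := by
  obtain ⟨W, hW, hc⟩ := Finset.exists_subset_card_eq h
  have : ∀ b : W, ∃ a ∈ S, f a = b := fun b => Finset.mem_image.1 (hW b.2)
  choose g hg1 hg2 using this
  refine ⟨Finset.univ.image g, ?_, ?_, ?_⟩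
  · intro a ha
    obtain ⟨b, _, rfl⟩ := Finset.mem_image.1 ha
    exact hg1 b
  · rw [Finset.card_image_of_injective, Finset.card_univ, Fintype.card_coe, hc]
    intro b c hbc
    apply Subtype.ext
    rw [← hg2 b, ← hg2 c, hbc]
  · intro a ha a' ha' haa
    simp only [Finset.coe_image, Finset.coe_univ, Set.image_univ, Set.mem_range] at ha ha'
    obtain ⟨b, rfl⟩ := ha
    obtain ⟨b', rfl⟩ := ha'
    congr 1
    apply Subtype.ext
    rw [← hg2 b, ← hg2 b', haa]

/-- symmetrised surviving edges -/
def SS {V : Type*} [Fintype V] [LinearOrder V] {m : ℕ} [NeZero m] (X : V × V → Fin m) (a b : V) : Prop :=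
  (a, b) ∈ Surv X ∨ (b, a) ∈ Surv X

theorem SS_symm {V : Type*} [Fintype V] [LinearOrder V] {m : ℕ} [NeZero m] {X : V × V → Fin m}
    {a b : V} (h : SS X a b) : SS X b a := h.symm

theorem SS_adj {V : Type*} [Fintype V] [LinearOrder V] {m : ℕ} [NeZero m] {X : V × V → Fin m}
    {a b : V} (h : SS X a b) : adjX X a b := by
  rcases h with h | h
  · exact Or.inl (Surv_lt h)
  · exact Or.inr (Surv_lt h)

theorem SS_tf {V : Type*} [Fintype V] [LinearOrder V] {m : ℕ} [NeZero m] {X : V × V → Fin m}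
    {a b c : V} (h1 : SS X a b) (h2 : SS X b c) (h3 : SS X a c) : False := by
  have tr : ∀ {a b c : V}, (a, b) ∈ Surv X → (b, c) ∈ Surv X → SS X a c → False := by
    intro a b c h1 h2 h3
    rcases h3 with h3 | h3
    · exact Surv_tf h1 h2 h3
    · have a1 := (Surv_lt h1).1
      have a2 := (Surv_lt h2).1
      have a3 := (Surv_lt h3).1
      exact lt_irrefl _ (a1.trans (a2.trans a3))
  rcases h1 with h1 | h1 <;> rcases h2 with h2 | h2
  · exact tr h1 h2 h3
  · rcases h3 with h3 | h3
    · exact tr h3 h2 (Or.inl h1)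
    · exact tr h3 h1 (Or.inl h2)
  · rcases h3 with h3 | h3
    · exact tr h1 h3 (Or.inl h2)
    · exact tr h2 h3 (Or.inl h1)
  · exact tr h2 h1 h3.symm

theorem combine_tf {V1 V2 : Type*} [Fintype V1] [Fintype V2] [LinearOrder V1] [LinearOrder V2]
    {m1 m2 : ℕ} [NeZero m1] [NeZero m2] (π : V2 → V1) (X1 : V1 × V1 → Fin m1)
    (X2 : V2 × V2 → Fin m2) (G : V2 → V2 → Prop)
    (hG : ∀ u v, G u v ↔ (SS X1 (π u) (π v) ∧ ¬ commonX X2 u v) ∨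
      (SS X2 u v ∧ ¬ commonX X1 (π u) (π v))) :
    (∀ u v, G u v → G v u) ∧ (∀ u, ¬ G u u) ∧ ∀ u v w, G u v → G v w → G u w → False := by
  have hsymm : ∀ u v, G u v → G v u := by
    intro u v h
    rw [hG] at h ⊢
    rcases h with ⟨h1, h2⟩ | ⟨h1, h2⟩
    · exact Or.inl ⟨h1.symm, fun h => h2 (commonX_symm h)⟩
    · exact Or.inr ⟨h1.symm, fun h => h2 (commonX_symm h)⟩
  have key1 : ∀ u v w, SS X1 (π u) (π v) → SS X1 (π v) (π w) → G u w → False := by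
    intro u v w h1 h2 h3
    rw [hG] at h3
    rcases h3 with ⟨h3, _⟩ | ⟨_, h3⟩
    · exact SS_tf h1 h2 h3
    · exact h3 ⟨π v, adjX_symm (SS_adj h1), SS_adj h2⟩
  have key2 : ∀ u v w, SS X2 u v → SS X2 v w → G u w → False := by
    intro u v w h1 h2 h3
    rw [hG] at h3
    rcases h3 with ⟨_, h3⟩ | ⟨h3, _⟩
    · exact h3 ⟨v, adjX_symm (SS_adj h1), SS_adj h2⟩
    · exact SS_tf h1 h2 h3
  refine ⟨hsymm, ?_, ?_⟩
  · intro u h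
    rw [hG] at h
    rcases h with ⟨h | h, _⟩ | ⟨h | h, _⟩ <;> exact lt_irrefl _ (Surv_lt h).1
  · intro u v w h1 h2 h3
    have h1' := (hG _ _).1 h1
    have h2' := (hG _ _).1 h2
    have h3' := (hG _ _).1 h3
    rcases h1' with ⟨a1, _⟩ | ⟨a1, _⟩ <;> rcases h2' with ⟨a2, _⟩ | ⟨a2, _⟩
    · exact key1 u v w a1 a2 h3
    · rcases h3' with ⟨a3, _⟩ | ⟨a3, _⟩
      · exact key1 v u w a1.symm a3 h2
      · exact key2 u w v a3 a2.symm h1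
    · rcases h3' with ⟨a3, _⟩ | ⟨a3, _⟩
      · exact key1 u w v a3 a2.symm h1
      · exact key2 v u w a1.symm a3 h2
    · exact key2 u v w a1 a2 h3

end graph

section existsGraph

theorem caseA (x w : ℕ) (hx : 2 ≤ x) (hw : 2 ^ 26 * x ^ 19 ≤ w)
    [NeZero (16 * w)] [NeZero (16 * (w * x ^ 2))] (π : Fin (w ^ 2 * x ^ 4) → Fin (w ^ 2))
    (S : Finset (Fin (w ^ 2 * x ^ 4))) (hS : S.card = 768 * x ^ 4 * w) (hinj : Set.InjOn π S) :
    Pr (fun p : (Fin (w ^ 2 * x ^ 4) × Fin (w ^ 2 * x ^ 4) → Fin (16 * (w * x ^ 2))) ×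
        (Fin (w ^ 2) × Fin (w ^ 2) → Fin (16 * w)) =>
      Nice (8 * (1 / (16 * (w * x ^ 2) : ℕ) : ℝ) * Fintype.card (Fin (w ^ 2 * x ^ 4))) (3 * x ^ 4) p.1 ∧
      ∀ u ∈ S, ∀ v ∈ S, (π u, π v) ∈ Surv p.2 → commonX p.1 u v) ≤
      3 * Real.exp (-(3 * (768 * x ^ 4 * w * x ^ 4 : ℕ) : ℝ)) := by
  have hx1 : (1:ℝ) ≤ x := by exact_mod_cast (by omega : 1 ≤ x)
  have hx0 : (0:ℝ) < x := by linarith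
  have hwR : (2:ℝ) ^ 26 * (x:ℝ) ^ 19 ≤ w := by exact_mod_cast hw
  have hw12 : (2:ℝ) ^ 26 * (x:ℝ) ^ 12 ≤ w := by
    refine le_trans ?_ hwR
    gcongr 2 ^ 26 * ?_
    exact pow_le_pow_right₀ hx1 (by norm_num)
  have hw0 : (0:ℝ) < w := lt_of_lt_of_le (by positivity) hwR
  have hwn : 1 ≤ w := by exact_mod_cast hw0
  have hSR : (S.card : ℝ) = 768 * x ^ 4 * w := by rw [hS]; push_cast; ring
  have hxx : (1:ℝ) ≤ (x:ℝ) ^ 2 := one_le_pow₀ hx1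
  have hx4 : (1:ℝ) ≤ (x:ℝ) ^ 4 := one_le_pow₀ hx1
  refine unified (U := Fin (w ^ 2 * x ^ 4)) S π id hinj 1 _ (3 * x ^ 4) (by norm_num) ?_ ?_ ?_ ?_ ?_ ?_ ?_ ?_ ?_ ?_
  · intro b
    have : (S.filter (fun u => id u = b)).card ≤ 1 := by
      rw [Finset.card_le_one]
      intro a ha c hc
      simp at ha hc
      rw [ha.2, hc.2]
    exact_mod_cast this
  · rw [hS]
    have : 1 ≤ x ^ 4 * w := Nat.mul_pos (by positivity) hwn
    nlinarith
  · positivity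
  · rw [hSR, Fintype.card_fin]
    push_cast
    have : 256 * ((w:ℝ) ^ 2 * (x:ℝ) ^ 4) * (1 / (16 * (w * (x:ℝ) ^ 2))) * 1 = 16 * (w * x ^ 2) := by
      field_simp; ring
    rw [this]
    nlinarith [mul_pos hw0 (pow_pos hx0 2), mul_nonneg (mul_nonneg hw0.le (pow_pos hx0 2).le) (sub_nonneg.2 hxx)]
  · rw [hSR]
    push_cast
    have : (2:ℝ) ^ 19 * 27 * x ^ 12 ≤ 768 * x ^ 4 * w := by nlinarith [mul_nonneg hw0.le (sub_nonneg.2 hx4)]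
    calc _ = (768 * (x:ℝ) ^ 4 * w) ^ 2 * (2 ^ 19 * 27 * x ^ 12) := by ring
      _ ≤ (768 * (x:ℝ) ^ 4 * w) ^ 2 * (768 * x ^ 4 * w) := by gcongr
      _ = _ := by ring
  · rw [hSR]
    push_cast
    have e : (2:ℝ) ^ 19 * (3 * (768 * (x:ℝ) ^ 4 * w * x ^ 4)) ^ 2 * 1 * (3 * x ^ 4) * (1 / (16 * (w * (x:ℝ) ^ 2))) ^ 2
      = 768 * x ^ 4 * (2 ^ 19 * 81 * x ^ 12) := by field_simp; ring
    rw [e]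
    gcongr
    nlinarith [pow_pos hx0 12]
  · rw [Fintype.card_fin]
    push_cast
    have : 256 * ((1 / (16 * (w * (x:ℝ) ^ 2))) ^ 2 * ((w:ℝ) ^ 2 * (x:ℝ) ^ 4)) = 1 := by
      field_simp; norm_num
    rw [this]
  · omega
  · rw [Fintype.card_fin]; nlinarith [Nat.zero_le (w^2)]
  · rw [hSR]
    push_cast
    apply le_of_eq
    ring

theorem caseA' (x w : ℕ) (hx : 2 ≤ x) (hw : 2 ^ 26 * x ^ 19 ≤ w)
    [NeZero (16 * w)] [NeZero (16 * (w * x ^ 2))] (π : Fin (w ^ 2 * x ^ 4) → Fin (w ^ 2))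
    (S : Finset (Fin (w ^ 2 * x ^ 4))) (hS : S.card = 768 * x ^ 4 * w) (hinj : Set.InjOn π S) :
    Pr (fun p : (Fin (w ^ 2) × Fin (w ^ 2) → Fin (16 * w)) ×
        (Fin (w ^ 2 * x ^ 4) × Fin (w ^ 2 * x ^ 4) → Fin (16 * (w * x ^ 2))) =>
      Nice (8 * (1 / (16 * (w * x ^ 2) : ℕ) : ℝ) * Fintype.card (Fin (w ^ 2 * x ^ 4))) (3 * x ^ 4) p.2 ∧
      ∀ u ∈ S, ∀ v ∈ S, (π u, π v) ∈ Surv p.1 → commonX p.2 u v) ≤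
      3 * Real.exp (-(3 * (768 * x ^ 4 * w * x ^ 4 : ℕ) : ℝ)) := by
  have h := caseA x w hx hw π S hS hinj
  rw [← Pr_equiv (Equiv.prodComm (Fin (w ^ 2) × Fin (w ^ 2) → Fin (16 * w))
    (Fin (w ^ 2 * x ^ 4) × Fin (w ^ 2 * x ^ 4) → Fin (16 * (w * x ^ 2))))] at h
  exact h

theorem caseB (x w : ℕ) (hx : 2 ≤ x) (hw : 2 ^ 26 * x ^ 19 ≤ w)
    [NeZero (16 * w)] [NeZero (16 * (w * x ^ 2))] (π : Fin (w ^ 2 * x ^ 4) → Fin (w ^ 2))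
    (hfib : ∀ b, (Finset.univ.filter (fun u => π u = b)).card ≤ x ^ 4)
    (S : Finset (Fin (w ^ 2 * x ^ 4))) (hS : S.card = 768 * x ^ 5 * w) :
    Pr (fun p : (Fin (w ^ 2) × Fin (w ^ 2) → Fin (16 * w)) ×
        (Fin (w ^ 2 * x ^ 4) × Fin (w ^ 2 * x ^ 4) → Fin (16 * (w * x ^ 2))) =>
      Nice (8 * (1 / (16 * w : ℕ) : ℝ) * Fintype.card (Fin (w ^ 2))) (3 * x ^ 4) p.1 ∧
      ∀ u ∈ S, ∀ v ∈ S, (u, v) ∈ Surv p.2 → commonX p.1 (π u) (π v)) ≤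
      3 * Real.exp (-(3 * (768 * x ^ 4 * w * x ^ 4 : ℕ) : ℝ)) := by
  have hx1 : (1:ℝ) ≤ x := by exact_mod_cast (by omega : 1 ≤ x)
  have hx0 : (0:ℝ) < x := by linarith
  have hwR : (2:ℝ) ^ 26 * (x:ℝ) ^ 19 ≤ w := by exact_mod_cast hw
  have hw17 : (2:ℝ) ^ 26 * (x:ℝ) ^ 17 ≤ w := by
    refine le_trans ?_ hwR
    gcongr 2 ^ 26 * ?_
    exact pow_le_pow_right₀ hx1 (by norm_num)
  have hw0 : (0:ℝ) < w := lt_of_lt_of_le (by positivity) hwR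
  have hwn : 1 ≤ w := by exact_mod_cast hw0
  have hSR : (S.card : ℝ) = 768 * x ^ 5 * w := by rw [hS]; push_cast; ring
  refine unified (U := Fin (w ^ 2 * x ^ 4)) S id π (Set.injOn_id _) ((x:ℝ) ^ 4) _ (3 * x ^ 4) (by positivity) ?_ ?_ ?_ ?_ ?_ ?_ ?_ ?_ ?_ ?_
  · intro b
    have : (S.filter (fun u => π u = b)).card ≤ x ^ 4 :=
      (Finset.card_le_card (Finset.filter_subset_filter _ (Finset.subset_univ S))).trans (hfib b)
    exact_mod_cast this
  · rw [hS]
    have : 1 ≤ x ^ 5 * w := Nat.mul_pos (by positivity) hwn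
    nlinarith
  · positivity
  · rw [hSR, Fintype.card_fin]
    push_cast
    have : 256 * ((w:ℝ) ^ 2) * (1 / (16 * w)) * (x:ℝ) ^ 4 = 16 * (w * x ^ 4) := by
      field_simp; ring
    rw [this]
    nlinarith [mul_pos hw0 (pow_pos hx0 4), mul_nonneg (mul_nonneg hw0.le (pow_pos hx0 4).le) (sub_nonneg.2 hx1)]
  · rw [hSR]
    push_cast
    have : (2:ℝ) ^ 19 * 27 * x ^ 17 ≤ 768 * w := by nlinarith [pow_pos hx0 17]
    calc _ = (768 * (x:ℝ) ^ 4 * w) ^ 2 * x ^ 7 * (2 ^ 19 * 27 * x ^ 17) := by ring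
      _ ≤ (768 * (x:ℝ) ^ 4 * w) ^ 2 * x ^ 7 * (768 * w) := by gcongr
      _ = _ := by ring
  · rw [hSR]
    push_cast
    have e : (2:ℝ) ^ 19 * (3 * (768 * (x:ℝ) ^ 4 * w * x ^ 4)) ^ 2 * x ^ 4 * (3 * x ^ 4) * (1 / (16 * (w:ℝ))) ^ 2
      = 768 * x ^ 5 * (2 ^ 19 * 81 * x ^ 19) := by field_simp; ring
    rw [e]
    gcongr
    nlinarith [pow_pos hx0 19]
  · rw [Fintype.card_fin]
    push_cast
    have : 256 * ((1 / (16 * (w:ℝ))) ^ 2 * ((w:ℝ) ^ 2)) = 1 := by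
      field_simp; norm_num
    rw [this]
  · have : 1 ≤ w * x ^ 2 := Nat.mul_pos hwn (by positivity)
    omega
  · rw [Fintype.card_fin]
    have : (16 * (w * x ^ 2)) ^ 2 = 256 * (w ^ 2 * x ^ 4) := by ring
    rw [this]
    gcongr
    norm_num
  · rw [hSR]
    push_cast
    apply le_of_eq
    ring

theorem exists_graph (x w : ℕ) (hx : 2 ≤ x) (hw : 2 ^ 26 * x ^ 19 ≤ w)
    (hpow : w ^ 2 * x ^ 4 ≤ 2 ^ (x ^ 4)) :
    ∃ G : Fin (w ^ 2 * x ^ 4) → Fin (w ^ 2 * x ^ 4) → Prop,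
      ((∀ u v, G u v → G v u) ∧ (∀ u, ¬ G u u) ∧ ∀ u v z, G u v → G v z → G u z → False) ∧
      ∀ S : Finset (Fin (w ^ 2 * x ^ 4)), S.card = 768 * x ^ 5 * w → ∃ u ∈ S, ∃ v ∈ S, G u v := by
  classical
  have hx19 : 1 ≤ x ^ 19 := Nat.one_le_pow _ _ (by omega)
  have hx2 : 1 ≤ x ^ 2 := Nat.one_le_pow _ _ (by omega)
  have hx4 : 16 ≤ x ^ 4 := le_trans (by norm_num) (Nat.pow_le_pow_left hx 4)
  have hw26 : 2 ^ 26 ≤ w := le_trans (by omega) hw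
  have hwn : 1 ≤ w := le_trans (by norm_num) hw26
  have hwx : w ≤ w * x ^ 2 := Nat.le_mul_of_pos_right _ hx2
  have : NeZero (16 * w) := ⟨by omega⟩
  have : NeZero (16 * (w * x ^ 2)) := ⟨by omega⟩
  set π : Fin (w ^ 2 * x ^ 4) → Fin (w ^ 2) := fun u => (finProdFinEquiv.symm u).1 with hπ
  have hfib : ∀ b, (Finset.univ.filter (fun u => π u = b)).card ≤ x ^ 4 := by
    intro b
    have : (Finset.univ.filter (fun u => π u = b)).card ≤ (Finset.univ : Finset (Fin (x ^ 4))).card := by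
      apply Finset.card_le_card_of_injOn (fun u => (finProdFinEquiv.symm u).2) (fun _ _ => Finset.mem_coe.2 (Finset.mem_univ _))
      intro u hu v hv huv
      simp only [Finset.coe_filter, Finset.mem_univ, true_and, Set.mem_ofPred_eq] at hu hv
      apply finProdFinEquiv.symm.injective
      exact Prod.ext (hu.trans hv.symm) huv
    simpa using this
  set s := 768 * x ^ 4 * w with hs
  set t := 768 * x ^ 5 * w with ht
  have hsL : 16 ≤ s * x ^ 4 := by
    have : 1 ≤ s := by
      have h4 : 1 ≤ x ^ 4 * w := Nat.mul_pos (by positivity) hwn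
      rw [hs]; nlinarith
    nlinarith
  let Ω := (Fin (w ^ 2) × Fin (w ^ 2) → Fin (16 * w)) ×
        (Fin (w ^ 2 * x ^ 4) × Fin (w ^ 2 * x ^ 4) → Fin (16 * (w * x ^ 2)))
  let N1 : Ω → Prop := fun p =>
    Nice (8 * (1 / (16 * w : ℕ) : ℝ) * Fintype.card (Fin (w ^ 2))) (3 * x ^ 4) p.1
  let N2 : Ω → Prop := fun p =>
    Nice (8 * (1 / (16 * (w * x ^ 2) : ℕ) : ℝ) * Fintype.card (Fin (w ^ 2 * x ^ 4))) (3 * x ^ 4) p.2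
  let FA : Finset (Finset (Fin (w ^ 2 * x ^ 4))) :=
    (Finset.powersetCard s Finset.univ).filter (fun S => Set.InjOn π S)
  let FB : Finset (Finset (Fin (w ^ 2 * x ^ 4))) :=
    ((Finset.powersetCard s (Finset.univ : Finset (Fin (w ^ 2)))).biUnion
      (fun W => (Finset.univ.filter (fun u => π u ∈ W)).powerset)).filter (fun S => S.card = t)
  let PA : Finset (Fin (w ^ 2 * x ^ 4)) → Ω → Prop := fun S p =>
    N2 p ∧ ∀ u ∈ S, ∀ v ∈ S, (π u, π v) ∈ Surv p.1 → commonX p.2 u v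
  let PB : Finset (Fin (w ^ 2 * x ^ 4)) → Ω → Prop := fun S p =>
    N1 p ∧ ∀ u ∈ S, ∀ v ∈ S, (u, v) ∈ Surv p.2 → commonX p.1 (π u) (π v)
  have hpw1 : w ^ 2 ≤ 2 ^ (x ^ 4) := le_trans (Nat.le_mul_of_pos_right _ (by omega)) hpow
  have b1 : Pr (fun p : Ω => ¬ N1 p) ≤ 1 / 5 := by
    have := nice_num (V := Fin (w ^ 2)) w (x ^ 4) (by simp) hw26 hx4 hpw1
    refine le_trans (le_of_eq ?_) this
    exact Pr_fst (Ω' := (Fin (w ^ 2 * x ^ 4) × Fin (w ^ 2 * x ^ 4) → Fin (16 * (w * x ^ 2))))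
      (fun X : Fin (w ^ 2) × Fin (w ^ 2) → Fin (16 * w) =>
        ¬ Nice (8 * (1 / (16 * w : ℕ) : ℝ) * Fintype.card (Fin (w ^ 2))) (3 * x ^ 4) X)
  have b2 : Pr (fun p : Ω => ¬ N2 p) ≤ 1 / 5 := by
    have := nice_num (V := Fin (w ^ 2 * x ^ 4)) (w * x ^ 2) (x ^ 4) (by simp; ring) (hw26.trans hwx) hx4
      (le_trans (le_of_eq (by ring)) hpow)
    refine le_trans (le_of_eq ?_) this
    exact Pr_snd (Ω := (Fin (w ^ 2) × Fin (w ^ 2) → Fin (16 * w)))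
      (fun X : Fin (w ^ 2 * x ^ 4) × Fin (w ^ 2 * x ^ 4) → Fin (16 * (w * x ^ 2)) =>
        ¬ Nice (8 * (1 / (16 * (w * x ^ 2) : ℕ) : ℝ) * Fintype.card (Fin (w ^ 2 * x ^ 4))) (3 * x ^ 4) X)
  have cA : FA.card ≤ 2 ^ (2 * (s * x ^ 4)) := by
    calc FA.card ≤ (Finset.powersetCard s (Finset.univ : Finset (Fin (w ^ 2 * x ^ 4)))).card := Finset.card_filter_le _ _
      _ = (w ^ 2 * x ^ 4).choose s := by rw [Finset.card_powersetCard, Finset.card_univ, Fintype.card_fin]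
      _ ≤ (w ^ 2 * x ^ 4) ^ s := Nat.choose_le_pow _ _
      _ ≤ (2 ^ (x ^ 4)) ^ s := Nat.pow_le_pow_left hpow _
      _ = 2 ^ (s * x ^ 4) := by rw [← pow_mul, mul_comm]
      _ ≤ _ := Nat.pow_le_pow_right (by norm_num) (by omega)
  have cB : FB.card ≤ 2 ^ (2 * (s * x ^ 4)) := by
    calc FB.card ≤ _ := Finset.card_filter_le _ _
      _ ≤ (Finset.powersetCard s (Finset.univ : Finset (Fin (w ^ 2)))).card * 2 ^ (s * x ^ 4) := by
        apply Finset.card_biUnion_le_card_mul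
        intro W hW
        rw [Finset.card_powerset]
        apply Nat.pow_le_pow_right (by norm_num)
        have hWc := (Finset.mem_powersetCard.1 hW).2
        rw [← hWc]
        refine le_trans ?_ (le_of_eq (mul_comm _ _))
        refine Finset.card_le_mul_card_image_of_maps_to (f := π) (fun u hu => (Finset.mem_filter.1 hu).2) _ ?_
        intro b hb
        exact (Finset.card_le_card (Finset.filter_subset_filter _ (Finset.subset_univ _))).trans (hfib b)
      _ = (w ^ 2).choose s * 2 ^ (s * x ^ 4) := by rw [Finset.card_powersetCard, Finset.card_univ, Fintype.card_fin]
      _ ≤ (w ^ 2) ^ s * 2 ^ (s * x ^ 4) := Nat.mul_le_mul_right _ (Nat.choose_le_pow _ _)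
      _ ≤ (2 ^ (x ^ 4)) ^ s * 2 ^ (s * x ^ 4) := Nat.mul_le_mul_right _ (Nat.pow_le_pow_left hpw1 _)
      _ = _ := by rw [← pow_mul, ← pow_add]; congr 1; ring
  have b3 : Pr (fun p : Ω => ∃ S ∈ FA, PA S p) ≤ 1 / 10 := by
    refine le_trans (Pr_exists_le FA PA _ ?_) (exp_num FA.card (s * x ^ 4) cA hsL)
    intro S hS
    obtain ⟨hS1, hS2⟩ := Finset.mem_filter.1 hS
    exact caseA' x w hx hw π S (Finset.mem_powersetCard.1 hS1).2 hS2
  have b4 : Pr (fun p : Ω => ∃ S ∈ FB, PB S p) ≤ 1 / 10 := by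
    refine le_trans (Pr_exists_le FB PB _ ?_) (exp_num FB.card (s * x ^ 4) cB hsL)
    intro S hS
    obtain ⟨hS1, hS2⟩ := Finset.mem_filter.1 hS
    exact caseB x w hx hw π hfib S hS2
  have hlt : Pr (fun p : Ω => (¬ N1 p ∨ ¬ N2 p) ∨ ((∃ S ∈ FA, PA S p) ∨ ∃ S ∈ FB, PB S p)) < 1 := by
    have h1 := Pr_or (fun p : Ω => ¬ N1 p ∨ ¬ N2 p) (fun p => (∃ S ∈ FA, PA S p) ∨ ∃ S ∈ FB, PB S p)
    have h2 := Pr_or (fun p : Ω => ¬ N1 p) (fun p => ¬ N2 p)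
    have h3 := Pr_or (fun p : Ω => ∃ S ∈ FA, PA S p) (fun p => ∃ S ∈ FB, PB S p)
    linarith
  obtain ⟨p, hp⟩ := exists_of_Pr_lt hlt
  push Not at hp
  obtain ⟨⟨hN1, hN2⟩, hA, hB⟩ := hp
  refine ⟨fun u v => (SS p.1 (π u) (π v) ∧ ¬ commonX p.2 u v) ∨
      (SS p.2 u v ∧ ¬ commonX p.1 (π u) (π v)), combine_tf π p.1 p.2 _ (fun u v => Iff.rfl), ?_⟩
  intro S hS
  by_cases hc : s ≤ (S.image π).card
  · obtain ⟨T, hT, hTc, hTi⟩ := exists_transversal π S s hc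
    have := hA T (Finset.mem_filter.2 ⟨Finset.mem_powersetCard.2 ⟨Finset.subset_univ _, hTc⟩, hTi⟩)
    have h2 : ¬ ∀ u ∈ T, ∀ v ∈ T, (π u, π v) ∈ Surv p.1 → commonX p.2 u v := fun h => this ⟨hN2, h⟩
    push Not at h2
    obtain ⟨u, hu, v, hv, h3, h4⟩ := h2
    exact ⟨u, hT hu, v, hT hv, Or.inl ⟨Or.inl h3, h4⟩⟩
  · have hsw : s ≤ (Finset.univ : Finset (Fin (w ^ 2))).card := by
      rw [Finset.card_univ, Fintype.card_fin, hs, sq]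
      apply Nat.mul_le_mul_right
      refine le_trans ?_ hw
      have : x ^ 4 ≤ x ^ 19 := Nat.pow_le_pow_right (by omega) (by norm_num)
      omega
    obtain ⟨W, hW1, -, hW3⟩ := Finset.exists_subsuperset_card_eq (Finset.subset_univ (S.image π)) (by omega) hsw
    have := hB S (Finset.mem_filter.2 ⟨Finset.mem_biUnion.2 ⟨W, Finset.mem_powersetCard.2 ⟨Finset.subset_univ _, hW3⟩, ?_⟩, hS⟩)
    · have h2 : ¬ ∀ u ∈ S, ∀ v ∈ S, (u, v) ∈ Surv p.2 → commonX p.1 (π u) (π v) := fun h => this ⟨hN1, h⟩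
      push Not at h2
      obtain ⟨u, hu, v, hv, h3, h4⟩ := h2
      exact ⟨u, hu, v, hv, Or.inr ⟨Or.inl h3, h4⟩⟩
    · rw [Finset.mem_powerset]
      intro u hu
      exact Finset.mem_filter.2 ⟨Finset.mem_univ _, hW1 (Finset.mem_image_of_mem _ hu)⟩

end existsGraph

/-! ### The coloring and the upper bound -/
section upper

theorem pat_rrr : ∀ a b c : Col, ({a, b, c} : Multiset Col) = Prrr → a = Col.r ∧ b = Col.r ∧ c = Col.r := by
  intro a b c
  unfold Prrr
  cases a <;> cases b <;> cases c <;> decide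

theorem pat_rby : ∀ a b c : Col, ({a, b, c} : Multiset Col) = Prby → a ≠ b ∧ b ≠ c ∧ a ≠ c := by
  intro a b c
  unfold Prby
  cases a <;> cases b <;> cases c <;> decide

open Classical in
/-- disjoint copies of the red graph `G`, yellow edges between different copies -/
noncomputable def gcol {k M : ℕ} (G : Fin M → Fin M → Prop) (a b : Fin k × Fin M) : Col :=
  if a.1 = b.1 then (if G a.2 b.2 then Col.r else Col.b) else Col.y

theorem upper_nat (n k M t : ℕ) (ht : 2 < t) (hM : M ≤ t * k) (hn : n ≤ k * M) (G : Fin M → Fin M → Prop)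
    (hG1 : ∀ u v, G u v → G v u) (hG2 : ∀ u, ¬ G u u) (hG3 : ∀ u v z, G u v → G v z → G u z → False)
    (hG : ∀ S : Finset (Fin M), S.card = t → ∃ u ∈ S, ∃ v ∈ S, G u v) :
    h2n n {Prrr, Prby} ≤ t * k := by
  classical
  let f : Fin n → Fin k × Fin M := fun i => finProdFinEquiv.symm (Fin.castLE hn i)
  have hf : Function.Injective f := finProdFinEquiv.symm.injective.comp (Fin.castLE_injective hn)
  have hr : ∀ a b : Fin k × Fin M, gcol G a b = Col.r → a.1 = b.1 ∧ G a.2 b.2 := by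
    intro a b h
    unfold gcol at h
    split_ifs at h with h1 h2
    exact ⟨h1, h2⟩
  have hy : ∀ a b : Fin k × Fin M, a.1 ≠ b.1 → gcol G a b = Col.y := by
    intro a b h
    simp [gcol, h]
  have hb : ∀ a b : Fin k × Fin M, a.1 = b.1 → gcol G a b = Col.r ∨ gcol G a b = Col.b := by
    intro a b h
    unfold gcol
    split_ifs <;> simp
  have hsy : ∀ a b : Fin k × Fin M, gcol G a b = gcol G b a := by
    intro a b
    unfold gcol
    have : G a.2 b.2 ↔ G b.2 a.2 := ⟨hG1 _ _, hG1 _ _⟩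
    simp only [this, eq_comm (a := a.1)]
  let c : Coloring n := ⟨fun i j => gcol G (f i) (f j), fun i j => hsy _ _⟩
  refine h2n_le_of c ?_ _ ?_
  · intro P hP
    rintro ⟨u, v, w, -, -, -, h⟩
    rcases hP with rfl | hP
    · obtain ⟨h1, h2, h3⟩ := pat_rrr _ _ _ h
      exact hG3 _ _ _ (hr _ _ h1).2 (hr _ _ h2).2 (hr _ _ h3).2
    · rw [Set.mem_singleton_iff] at hP
      subst hP
      obtain ⟨h1, h2, h3⟩ := pat_rby _ _ _ h
      change gcol G (f u) (f v) ≠ gcol G (f v) (f w) at h1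
      change gcol G (f v) (f w) ≠ gcol G (f u) (f w) at h2
      change gcol G (f u) (f v) ≠ gcol G (f u) (f w) at h3
      by_cases a1 : (f u).1 = (f v).1
      · by_cases a2 : (f v).1 = (f w).1
        · rcases hb _ _ a1 with e1 | e1 <;> rcases hb _ _ a2 with e2 | e2 <;>
            rcases hb _ _ (a1.trans a2) with e3 | e3 <;> simp_all
        · exact h2 (by rw [hy _ _ a2, hy _ _ (fun h => a2 (a1.symm.trans h))])
      · by_cases a2 : (f v).1 = (f w).1
        · exact h3 (by rw [hy _ _ a1, hy _ _ (fun h => a1 (h.trans a2.symm))])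
        · exact h1 (by rw [hy _ _ a1, hy _ _ a2])
  · rintro S ⟨x, hx⟩
    change ∀ i ∈ S, ∀ j ∈ S, i ≠ j → gcol G (f i) (f j) ≠ x at hx
    have fibers : (∀ q : Fin k, (S.filter (fun i => (f i).1 = q)).card ≤ t) → S.card ≤ t * k := by
      intro h
      have := Finset.card_le_mul_card_image_of_maps_to (f := fun i => (f i).1) (s := S)
        (t := (Finset.univ : Finset (Fin k))) (fun i _ => Finset.mem_univ _) t (fun q _ => h q)
      simpa using this
    cases x with
    | r =>
      apply fibers
      intro q
      by_contra hlt
      push Not at hlt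
      set T := S.filter (fun i => (f i).1 = q) with hT
      have hinj : Set.InjOn (fun i => (f i).2) (T : Set (Fin n)) := by
        intro i hi j hj hij
        rw [Finset.mem_coe, hT, Finset.mem_filter] at hi hj
        exact hf (Prod.ext (hi.2.trans hj.2.symm) hij)
      have hc : t ≤ (T.image (fun i => (f i).2)).card := by
        rw [Finset.card_image_of_injOn hinj]; exact hlt.le
      obtain ⟨R, hR, hRc⟩ := Finset.exists_subset_card_eq hc
      obtain ⟨u, hu, v, hv, huv⟩ := hG R hRc
      obtain ⟨i, hi, rfl⟩ := Finset.mem_image.1 (hR hu)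
      obtain ⟨j, hj, rfl⟩ := Finset.mem_image.1 (hR hv)
      rw [hT, Finset.mem_filter] at hi hj
      refine hx i hi.1 j hj.1 ?_ ?_
      · rintro rfl
        exact hG2 _ huv
      · unfold gcol
        rw [if_pos (hi.2.trans hj.2.symm), if_pos huv]
    | b =>
      apply fibers
      intro q
      by_contra hlt
      push Not at hlt
      obtain ⟨i, hi, j, hj, l, hl, hij, hil, hjl⟩ := Finset.two_lt_card.1 (ht.trans hlt)
      rw [Finset.mem_filter] at hi hj hl
      have key : ∀ i j, i ∈ S ∧ (f i).1 = q → j ∈ S ∧ (f j).1 = q → i ≠ j → G (f i).2 (f j).2 := by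
        intro i j hi hj hij
        rcases hb (f i) (f j) (hi.2.trans hj.2.symm) with h | h
        · exact (hr _ _ h).2
        · exact absurd h (hx i hi.1 j hj.1 hij)
      exact hG3 _ _ _ (key i j hi hj hij) (key j l hj hl hjl) (key i l hi hl hil)
    | y =>
      refine le_trans ?_ hM
      have : S.card ≤ (Finset.univ : Finset (Fin M)).card := by
        apply Finset.card_le_card_of_injOn (fun i => (f i).2) (fun _ _ => Finset.mem_coe.2 (Finset.mem_univ _))
        intro i hi j hj hij
        by_contra hne
        refine hx i hi j hj hne (hy _ _ fun h => hne (hf (Prod.ext h hij)))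
      simpa using this

theorem upper_param (n k x : ℕ) (hx : 2 ≤ x) (hk : 2 ^ 26 * x ^ 18 ≤ k)
    (hpow : k ^ 2 * x ^ 6 ≤ 2 ^ (x ^ 4)) (hn : n ≤ k ^ 3 * x ^ 6) :
    h2n n {Prrr, Prby} ≤ 768 * k ^ 2 * x ^ 6 := by
  have hx18 : 1 ≤ x ^ 18 := Nat.one_le_pow _ _ (by omega)
  have hk1 : 1 ≤ k := le_trans (by omega) hk
  obtain ⟨G, ⟨h1, h2, h3⟩, h4⟩ := exists_graph x (k * x) hx
    (by calc 2 ^ 26 * x ^ 19 = 2 ^ 26 * x ^ 18 * x := by ring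
          _ ≤ k * x := Nat.mul_le_mul_right _ hk)
    (le_trans (le_of_eq (by ring)) hpow)
  have := upper_nat n k _ (768 * x ^ 5 * (k * x))
    (by
      have : 1 ≤ x ^ 5 * (k * x) := Nat.mul_pos (by positivity) (Nat.mul_pos hk1 (by omega))
      nlinarith)
    (by
      have : 768 * x ^ 5 * (k * x) * k = 768 * ((k * x) ^ 2 * x ^ 4) := by ring
      omega) (le_trans hn (le_of_eq (by ring))) G h1 h2 h3 h4
  exact this.trans (le_of_eq (by ring))

theorem h2n_upper : ∃ n0 : ℕ, ∀ n : ℕ, n0 ≤ n →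
    (h2n n {Prrr, Prby} : ℝ) ≤ 12288 * (n : ℝ) ^ ((2 : ℝ) / 3) * Real.sqrt (Real.logb 2 n) := by
  have hev : ∀ᶠ z : ℝ in Filter.atTop, (2:ℝ) ^ 138 * Real.logb 2 z ^ 15 ≤ z := by
    have h := (Real.isLittleO_pow_log_id_atTop (n := 15)).bound
      (show (0:ℝ) < Real.log 2 ^ 15 / 2 ^ 138 by have := Real.log_pos (by norm_num : (1:ℝ) < 2); positivity)
    filter_upwards [h, Filter.eventually_ge_atTop (1:ℝ)] with z hz hz1
    have hl := Real.log_nonneg hz1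
    have hl2 := Real.log_pos (by norm_num : (1:ℝ) < 2)
    rw [id, Real.norm_of_nonneg (by positivity), Real.norm_of_nonneg (by linarith)] at hz
    unfold Real.logb
    rw [div_pow]
    calc (2:ℝ) ^ 138 * (Real.log z ^ 15 / Real.log 2 ^ 15) ≤
        2 ^ 138 * (Real.log 2 ^ 15 / 2 ^ 138 * z / Real.log 2 ^ 15) := by gcongr
      _ = z := by field_simp
  have hev' := tendsto_natCast_atTop_atTop.eventually hev (α := ℕ)
  obtain ⟨n1, hn1⟩ := Filter.eventually_atTop.1 hev'
  refine ⟨max n1 4, fun n hn => ?_⟩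
  have hlog := hn1 n (le_trans (le_max_left _ _) hn)
  have hn4 : 4 ≤ n := le_trans (le_max_right _ _) hn
  have hn4R : (4:ℝ) ≤ n := by exact_mod_cast hn4
  have hn0 : (0:ℝ) < n := by linarith
  set l := Real.logb 2 n with hl
  have hl2 : 2 ≤ l := by
    rw [hl, Real.le_logb_iff_rpow_le (by norm_num) hn0]
    norm_num; exact hn4
  have hl0 : 0 < l := by linarith
  obtain ⟨p, hp0, hp⟩ : ∃ p : ℝ, 0 < p ∧ p ^ 4 = l :=
    ⟨l ^ ((1:ℝ) / 4), by positivity, by rw [← Real.rpow_natCast, ← Real.rpow_mul hl0.le]; norm_num⟩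
  have hp1 : 1 < p := by
    by_contra h
    push Not at h
    have := pow_le_one₀ hp0.le h (n := 4)
    linarith
  set x := ⌈p⌉₊ with hxdef
  have hxp : p ≤ x := Nat.le_ceil p
  have hx2 : 2 ≤ x := by
    have : (1:ℝ) < x := lt_of_lt_of_le hp1 hxp
    exact_mod_cast this
  have hxu : (x:ℝ) ≤ 2 * p := by
    have := Nat.ceil_lt_add_one hp0.le
    linarith
  have hx0 : (0:ℝ) < x := by linarith
  have hx1 : (1:ℝ) ≤ x := by linarith
  obtain ⟨q, hq0, hq⟩ : ∃ q : ℝ, 0 < q ∧ q ^ 3 * x ^ 6 = n :=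
    ⟨((n:ℝ) / x ^ 6) ^ ((1:ℝ) / 3), by positivity, by
      rw [← Real.rpow_natCast, ← Real.rpow_mul (by positivity)]; norm_num; field_simp⟩
  have hx60 : (2:ℝ) ^ 78 * x ^ 60 ≤ n := by
    calc (2:ℝ) ^ 78 * x ^ 60 ≤ 2 ^ 78 * (2 * p) ^ 60 := by gcongr
      _ = 2 ^ 138 * (p ^ 4) ^ 15 := by ring
      _ ≤ n := by rw [hp]; exact hlog
  have hqx : (2:ℝ) ^ 26 * x ^ 18 ≤ q := by
    refine le_of_pow_le_pow_left₀ (n := 3) (by norm_num) hq0.le ?_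
    refine le_of_mul_le_mul_right (a := (x:ℝ) ^ 6) ?_ (by positivity)
    rw [hq]
    exact le_trans (le_of_eq (by ring)) hx60
  have hq1 : 1 ≤ q := by
    have : (1:ℝ) ≤ (x:ℝ) ^ 18 := one_le_pow₀ hx1
    linarith
  set k := ⌈q⌉₊ with hkdef
  have hkq : q ≤ k := Nat.le_ceil q
  have hku : (k:ℝ) ≤ 2 * q := by
    have := Nat.ceil_lt_add_one hq0.le
    linarith
  have hpow2 : (n:ℝ) ≤ 2 ^ (x ^ 4) := by
    have : l ≤ ((x ^ 4 : ℕ) : ℝ) := by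
      push_cast
      rw [← hp]
      gcongr
    rw [hl, Real.logb_le_iff_le_rpow (by norm_num) hn0, Real.rpow_natCast] at this
    exact this
  have hkx : (k:ℝ) ^ 2 * x ^ 6 ≤ n := by
    calc (k:ℝ) ^ 2 * x ^ 6 ≤ (2 * q) ^ 2 * x ^ 6 := by gcongr
      _ = q ^ 2 * 4 * x ^ 6 := by ring
      _ ≤ q ^ 2 * q * x ^ 6 := by
        gcongr
        have : (1:ℝ) ≤ (x:ℝ) ^ 18 := one_le_pow₀ hx1
        linarith
      _ = n := by rw [← hq]; ring
  have hmain := upper_param n k x hx2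
    (by have := hqx.trans hkq; exact_mod_cast this)
    (by have := hkx.trans hpow2; exact_mod_cast this)
    (by
      have : (n:ℝ) ≤ k ^ 3 * x ^ 6 := by rw [← hq]; gcongr
      exact_mod_cast this)
  have hmainR : (h2n n {Prrr, Prby} : ℝ) ≤ 768 * k ^ 2 * x ^ 6 := by exact_mod_cast hmain
  have hn23 : (n:ℝ) ^ ((2:ℝ) / 3) = q ^ 2 * x ^ 4 := by
    have e : (n:ℝ) = (q * x ^ 2) ^ (3:ℕ) := by rw [← hq]; ring
    rw [e, ← Real.rpow_natCast, ← Real.rpow_mul (by positivity)]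
    norm_num
    ring
  have hsq : Real.sqrt l = p ^ 2 := by
    rw [← hp, show p ^ 4 = (p ^ 2) ^ 2 by ring, Real.sqrt_sq (by positivity)]
  rw [hn23, hsq]
  calc _ ≤ _ := hmainR
    _ ≤ 768 * (2 * q) ^ 2 * x ^ 6 := by gcongr
    _ = 3072 * q ^ 2 * x ^ 4 * x ^ 2 := by ring
    _ ≤ 3072 * q ^ 2 * x ^ 4 * (2 * p) ^ 2 := by gcongr
    _ = _ := by ring

end upper

theorem stmt7 :
    ∃ C1 C2 : ℝ, 0 < C1 ∧ 0 < C2 ∧ ∃ n0 : ℕ, ∀ n : ℕ, n0 ≤ n →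
      C1 * (n : ℝ) ^ ((2 : ℝ) / 3) / Real.logb 2 n ^ ((3 : ℝ) / 2)
          ≤ (h2n n {Prrr, Prby} : ℝ) ∧
      (h2n n {Prrr, Prby} : ℝ)
          ≤ C2 * (n : ℝ) ^ ((2 : ℝ) / 3) * Real.sqrt (Real.logb 2 n) := by
  obtain ⟨C1, hC1, h1⟩ := h2n_lower
  obtain ⟨n0, h2⟩ := h2n_upper
  exact ⟨C1, 12288, hC1, by norm_num, max n0 2, fun n hn =>
    ⟨h1 n (le_trans (le_max_right _ _) hn), h2 n (le_trans (le_max_left _ _) hn)⟩⟩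
end

section
/- Let H = {rrb, bbr, yyr} (the patterns: a triangle with two red edges and one blue edge, a triangle with two blue edges and one red edge, and a triangle with two yellow edges and one red edge). Then for every integer n ≥ 3, h_2(n, H) = ⌈n/2⌉. -/
/-- The triangle conditions extracted from avoiding the three patterns. -/
lemma avoid_tri {n : ℕ} (c : Coloring n) (h : Avoids c {Prrb, Pbbr, Pyyr}) (u v w : Fin n)
    (huv : u ≠ v) (hvw : v ≠ w) (huw : u ≠ w) :
    ¬ (c.col u v = Col.r ∧ c.col v w = Col.r ∧ c.col u w = Col.b) ∧
    ¬ (c.col u v = Col.b ∧ c.col v w = Col.r ∧ c.col u w = Col.r) ∧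
    ¬ (c.col u v = Col.b ∧ c.col v w = Col.r ∧ c.col u w = Col.b) ∧
    ¬ (c.col u v = Col.y ∧ c.col v w = Col.r ∧ c.col u w = Col.y) := by
  have h1 := h Prrb (by simp)
  have h2 := h Pbbr (by simp)
  have h3 := h Pyyr (by simp)
  refine ⟨?_, ?_, ?_, ?_⟩
  · rintro ⟨a, b, d⟩
    exact h1 ⟨u, v, w, huv, hvw, huw, by rw [triPattern, a, b, d]; decide⟩
  · rintro ⟨a, b, d⟩
    exact h1 ⟨u, v, w, huv, hvw, huw, by rw [triPattern, a, b, d]; decide⟩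
  · rintro ⟨a, b, d⟩
    exact h2 ⟨u, v, w, huv, hvw, huw, by rw [triPattern, a, b, d]; decide⟩
  · rintro ⟨a, b, d⟩
    exact h3 ⟨u, v, w, huv, hvw, huw, by rw [triPattern, a, b, d]; decide⟩

/-- The red graph. -/
def redG {n : ℕ} (c : Coloring n) : SimpleGraph (Fin n) where
  Adj i j := i ≠ j ∧ c.col i j = Col.r
  symm := ⟨fun i j h => ⟨h.1.symm, by rw [c.symm]; exact h.2⟩⟩
  loopless := ⟨fun _ h => h.1 rfl⟩

lemma walk_inv {n : ℕ} (c : Coloring n) (h : Avoids c {Prrb, Pbbr, Pyyr})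
    (ht : ∀ u v w : Fin n, u ≠ v → v ≠ w → u ≠ w →
      ¬ (c.col u v = Col.r ∧ c.col v w = Col.r ∧ c.col u w = Col.r))
    (v u : Fin n) (p : (redG c).Walk v u) :
    (Even p.length → u = v ∨ c.col u v = Col.y) ∧
    (Odd p.length → u ≠ v ∧ c.col u v ≠ Col.y) := by
  induction p with
  | nil => simp
  | @cons x v u hx p ih =>
    have hxv : x ≠ v := hx.1
    have hr : c.col x v = Col.r := hx.2
    have hr' : c.col v x = Col.r := by rw [c.symm]; exact hr
    have hs := c.symm u x
    have hs' := c.symm u v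
    rw [SimpleGraph.Walk.length_cons]
    constructor
    · intro he
      have ho : Odd p.length := by grind
      obtain ⟨h1, h2⟩ := ih.2 ho
      by_cases hux : u = x
      · exact Or.inl hux
      right
      have T := avoid_tri c h u v x h1 hxv.symm hux
      have T2 := ht u v x h1 hxv.symm hux
      cases h3 : c.col u v <;> cases h4 : c.col u x <;> simp_all
    · intro ho
      have he : Even p.length := by grind
      rcases ih.1 he with h1 | h1
      · subst h1
        exact ⟨hxv.symm, by rw [hr']; decide⟩
      · have huv : u ≠ v ∨ u = v := by tauto
        rcases huv with huv | huv
        · have hux : u ≠ x := by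
            rintro rfl
            rw [hr] at h1; cases h1
          have T := avoid_tri c h u v x huv hxv.symm hux
          exact ⟨hux, fun hy => T.2.2.2 ⟨h1, hr', hy⟩⟩
        · subst huv
          exact ⟨hxv.symm, by rw [hr']; decide⟩

lemma lower {n : ℕ} (c : Coloring n) (h : Avoids c {Prrb, Pbbr, Pyyr}) :
    ∃ S : Finset (Fin n), TwoColored c S ∧ n ≤ 2 * S.card := by
  by_cases ht : ∀ u v w : Fin n, u ≠ v → v ≠ w → u ≠ w →
      ¬ (c.col u v = Col.r ∧ c.col v w = Col.r ∧ c.col u w = Col.r)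
  · have h2 : (redG c).Colorable 2 := by
      rw [SimpleGraph.two_colorable_iff_forall_loop_even]
      intro u w
      by_contra hne
      exact ((walk_inv c h ht u u w).2 (Nat.not_even_iff_odd.1 hne)).1 rfl
    obtain ⟨f⟩ := h2
    have key : ∀ k, TwoColored c (Finset.univ.filter fun i => f i = k) := by
      intro k
      refine ⟨Col.r, fun i hi j hj hij hc => ?_⟩
      simp at hi hj
      exact f.valid (show (redG c).Adj i j from ⟨hij, hc⟩) (hi.trans hj.symm)
    have hsum : n = (Finset.univ.filter fun i => f i = 0).card
        + (Finset.univ.filter fun i => f i = 1).card := by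
      have h1 := Finset.card_filter_add_card_filter_not (s := (Finset.univ : Finset (Fin n)))
        (fun i => f i = 0)
      have h3 : (Finset.univ.filter fun i => ¬ f i = 0)
        = (Finset.univ.filter fun i => f i = 1) := by
        ext i
        simp
        have := (f i).isLt
        omega
      rw [h3] at h1
      simpa using h1.symm
    by_cases hle : (Finset.univ.filter fun i => f i = 0).card
        ≤ (Finset.univ.filter fun i => f i = 1).card
    · exact ⟨_, key 1, by omega⟩
    · exact ⟨_, key 0, by omega⟩
  · push Not at ht
    obtain ⟨a, b, d, hab, hbd, had, rab, rbd, rad⟩ := ht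
    refine ⟨Finset.univ, ⟨Col.b, fun i _ j _ hij hc => ?_⟩, by simp; omega⟩
    -- no common red neighbour of i and j, and no vertex with a non-red pair towards the triangle
    have T := avoid_tri c h
    have S := c.symm
    have com : ∀ t, t ≠ i → t ≠ j → c.col i t = Col.r → c.col j t = Col.r → False := by
      intro t h1 h2 h3 h4
      exact (T i t j h1.symm h2 hij).1 ⟨h3, by rw [S]; exact h4, hc⟩
    have E : ∀ u v w, u ≠ v → v ≠ w → u ≠ w → c.col v w = Col.r →
        (c.col u v = Col.r ∧ c.col u w ≠ Col.b) ∨ (c.col u w = Col.r ∧ c.col u v ≠ Col.b) ∨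
        (c.col u v = Col.b ∧ c.col u w = Col.y) ∨ (c.col u v = Col.y ∧ c.col u w = Col.b) := by
      intro u v w h1 h2 h3 h4
      have t1 := T u v w h1 h2 h3
      have t2 := T u w v h3 h2.symm h1
      rw [S w v, h4] at t2
      rw [h4] at t1
      clear T S com h4
      generalize c.col u v = p at *
      generalize c.col u w = q at *
      revert t1 t2
      cases p <;> cases q <;> simp
    have E3 : ∀ u, u ≠ a → u ≠ b → u ≠ d →
        (c.col u a = Col.r ∧ c.col u b = Col.r) ∨ (c.col u a = Col.r ∧ c.col u d = Col.r) ∨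
        (c.col u b = Col.r ∧ c.col u d = Col.r) := by
      intro u h1 h2 h3
      have e1 := E u a b h1 hab h2 rab
      have e2 := E u b d h2 hbd h3 rbd
      have e3 := E u a d h1 had h3 rad
      clear E T S com
      revert e1 e2 e3
      generalize c.col u a = p
      generalize c.col u b = q
      generalize c.col u d = s
      cases p <;> cases q <;> cases s <;> simp
    have i3 := E3 i
    have j3 := E3 j
    have ca := com a
    have cb := com b
    have cd := com d
    have sij := S i j
    have sab := S a b
    have sad := S a d
    have sbd := S b d
    clear E E3 T S com h
    by_cases hia : i = a <;> by_cases hib : i = b <;> by_cases hid : i = d <;>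
    by_cases hja : j = a <;> by_cases hjb : j = b <;> by_cases hjd : j = d <;>
    grind

/-- The extremal coloring: a red matching, blue inside sides, yellow across. -/
def extC (n : ℕ) : Coloring n where
  col i j := if i.val / 2 = j.val / 2 then Col.r else
    if i.val % 2 = j.val % 2 then Col.b else Col.y
  symm i j := by simp only [eq_comm]

lemma extC_avoids (n : ℕ) : Avoids (extC n) {Prrb, Pbbr, Pyyr} := by
  rintro P hP ⟨u, v, w, huv, hvw, huw, h⟩
  have h1 : u.val ≠ v.val := fun e => huv (Fin.ext e)
  have h2 : v.val ≠ w.val := fun e => hvw (Fin.ext e)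
  have h3 : u.val ≠ w.val := fun e => huw (Fin.ext e)
  simp only [triPattern, extC] at h
  simp only [Set.mem_insert_iff, Set.mem_singleton_iff] at hP
  split_ifs at h <;> first
    | omega
    | (exfalso; subst h; revert hP; decide)

lemma extC_upper (n : ℕ) (hn : 3 ≤ n) (S : Finset (Fin n)) (hS : TwoColored (extC n) S) :
    S.card ≤ (n + 1) / 2 := by
  -- injectivity of i / 2 suffices
  have inj2 : (∀ i ∈ S, ∀ j ∈ S, i.val / 2 = j.val / 2 → i = j) → S.card ≤ (n + 1) / 2 := by
    intro h
    have := Finset.card_le_card_of_injOn (s := S) (t := Finset.range ((n + 1) / 2))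
      (fun i => i.val / 2) (fun i _ => by
        have := i.isLt
        simp; omega) (fun i hi j hj e => h i hi j hj e)
    simpa using this
  obtain ⟨x, hx⟩ := hS
  simp only [extC] at hx
  cases x with
  | r =>
    apply inj2
    intro i hi j hj e
    by_contra hne
    exact hx i hi j hj hne (by simp [e])
  | b =>
    have := Finset.card_le_card_of_injOn (s := S) (t := Finset.range 2)
      (fun i => i.val % 2) (fun i _ => by simp; omega) (fun i hi j hj e => by
        by_contra hne
        have hv : i.val ≠ j.val := fun e => hne (Fin.ext e)
        have e' : i.val % 2 = j.val % 2 := e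
        exact hx i hi j hj hne (by rw [if_neg (by omega), if_pos e']))
    simp at this
    omega
  | y =>
    by_cases hp : ∃ i ∈ S, ∃ j ∈ S, i.val / 2 = j.val / 2 ∧ i ≠ j
    · obtain ⟨i, hi, j, hj, e, hne⟩ := hp
      have hv : i.val ≠ j.val := fun e => hne (Fin.ext e)
      have hsub : S ⊆ {i, j} := by
        intro k hk
        by_contra hk'
        simp at hk'
        have k1 : k.val ≠ i.val := fun e => hk'.1 (Fin.ext e)
        have k2 : k.val ≠ j.val := fun e => hk'.2 (Fin.ext e)
        have a1 := hx k hk i hi hk'.1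
        have a2 := hx k hk j hj hk'.2
        split_ifs at a1 a2 <;> first | omega | simp at a1 a2
      have := (Finset.card_le_card hsub).trans Finset.card_le_two
      omega
    · apply inj2
      intro i hi j hj e
      by_contra hne
      exact hp ⟨i, hi, j, hj, e, hne⟩

theorem stmt8 (n : ℕ) (hn : 3 ≤ n) :
    h2n n {Prrb, Pbbr, Pyyr} = (n + 1) / 2 := by
  have hlow : ∀ c : Coloring n, Avoids c {Prrb, Pbbr, Pyyr} → (n + 1) / 2 ≤ h2 c := by
    intro c hc
    obtain ⟨S, hS, hcard⟩ := lower c hc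
    have : S.card ≤ h2 c := by
      apply le_csSup
      · refine ⟨n, ?_⟩
        rintro k ⟨T, -, rfl⟩
        simpa using Finset.card_le_univ T
      · exact ⟨S, hS, rfl⟩
    omega
  have hup : h2 (extC n) ≤ (n + 1) / 2 := by
    apply csSup_le
    · exact ⟨0, ∅, ⟨Col.r, by simp⟩, rfl⟩
    · rintro k ⟨T, hT, rfl⟩
      exact extC_upper n hn T hT
  apply le_antisymm
  · refine le_trans (Nat.sInf_le ?_) hup
    exact ⟨extC n, extC_avoids n, rfl⟩
  · apply le_csInf
    · exact ⟨_, extC n, extC_avoids n, rfl⟩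
    · rintro m ⟨c, hc, rfl⟩
      exact hlow c hc
end

section
/- Let H = {rrb, bby, yyr} (the patterns: a triangle with two red edges and one blue edge, a triangle with two blue edges and one yellow edge, and a triangle with two yellow edges and one red edge). Then h_2(n, H) = ⌈n/2⌉ for every integer n ≥ 3 with n ≠ 7, and h_2(7, H) = 3. -/
section Lower

set_option linter.unusedSectionVars false

variable {V : Type*} [DecidableEq V]

/-- Avoiding `ppq`, `qqs`, `ssp`. -/
structure Good (f : V → V → Col) (p q s : Col) : Prop where
  symm : ∀ i j, f i j = f j i
  tri : ∀ x : Col, x = p ∨ x = q ∨ x = s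
  h1 : ∀ u v w, u ≠ v → v ≠ w → u ≠ w → f u v = p → f v w = p → f u w ≠ q
  h2 : ∀ u v w, u ≠ v → v ≠ w → u ≠ w → f u v = q → f v w = q → f u w ≠ s
  h3 : ∀ u v w, u ≠ v → v ≠ w → u ≠ w → f u v = s → f v w = s → f u w ≠ p
  pq : p ≠ q
  qs : q ≠ s
  ps : p ≠ s

theorem Good.rot {f : V → V → Col} {p q s : Col} (h : Good f p q s) : Good f q s p where
  symm := h.symm
  tri x := by rcases h.tri x with h | h | h <;> simp [h]
  h1 := h.h2
  h2 := h.h3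
  h3 := h.h1
  pq := h.qs
  qs := h.ps.symm
  ps := h.pq.symm

/-- `R`, `B` are (parts of) the `p`- and `q`-neighbourhoods of a vertex `v`. -/
structure Nb (f : V → V → Col) (p q s : Col) (v : V) (R B : Finset V) : Prop where
  vR : ∀ u ∈ R, u ≠ v ∧ f v u = p
  vB : ∀ u ∈ B, u ≠ v ∧ f v u = q

variable {f : V → V → Col} {p q s : Col} {v : V} {R B : Finset V}

theorem Nb.disj (g : Good f p q s) (h : Nb f p q s v R B) : ∀ u ∈ R, ∀ w ∈ B, u ≠ w := by
  rintro u hu w hw rfl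
  exact g.pq ((h.vR u hu).2.symm.trans (h.vB u hw).2)

theorem Nb.inR (g : Good f p q s) (h : Nb f p q s v R B) :
    ∀ u ∈ R, ∀ w ∈ R, u ≠ w → f u w = p ∨ f u w = s := by
  intro u hu w hw huw
  obtain ⟨a1, a2⟩ := h.vR u hu
  obtain ⟨b1, b2⟩ := h.vR w hw
  have := g.h1 u v w a1 b1.symm huw (by rw [g.symm, a2]) b2
  have := g.tri (f u w)
  tauto

theorem Nb.inB (g : Good f p q s) (h : Nb f p q s v R B) :
    ∀ u ∈ B, ∀ w ∈ B, u ≠ w → f u w = q ∨ f u w = p := by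
  intro u hu w hw huw
  obtain ⟨a1, a2⟩ := h.vB u hu
  obtain ⟨b1, b2⟩ := h.vB w hw
  have := g.h2 u v w a1 b1.symm huw (by rw [g.symm, a2]) b2
  have := g.tri (f u w)
  tauto

theorem Nb.cross (g : Good f p q s) (h : Nb f p q s v R B) :
    ∀ u ∈ R, ∀ w ∈ B, f u w = q ∨ f u w = s := by
  intro u hu w hw
  have huw := h.disj g u hu w hw
  obtain ⟨a1, a2⟩ := h.vR u hu
  obtain ⟨b1, b2⟩ := h.vB w hw
  have h1 : f u w ≠ p := by
    intro h
    exact g.h1 v u w a1.symm huw b1.symm a2 h b2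
  have := g.tri (f u w)
  tauto

/-- If `B` has a `q`-pair, then each `p`-pair in `B` has a common `q`-neighbour in `B`. -/
theorem Nb.common (g : Good f p q s) (h : Nb f p q s v R B)
    (hB : ∃ w1 ∈ B, ∃ w2 ∈ B, w1 ≠ w2 ∧ f w1 w2 = q) :
    ∀ w ∈ B, ∀ w' ∈ B, w ≠ w' → f w w' = p →
      ∃ x ∈ B, x ≠ w ∧ x ≠ w' ∧ f w x = q ∧ f w' x = q := by
  obtain ⟨w1, hw1, w2, hw2, h12, hq⟩ := hB
  intro w hw w' hw' hww hp
  have hpq := g.pq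
  have key : ∀ a ∈ B, a ≠ w → f w a = q → a ≠ w' ∧ f w' a = q := by
    intro a ha haw hfa
    have e : a ≠ w' := by rintro rfl; exact hpq (hp.symm.trans hfa)
    refine ⟨e, ?_⟩
    rcases h.inB g w' hw' a ha e.symm with h' | h'
    · exact h'
    · exact absurd hfa (g.h1 w w' a hww e.symm haw.symm hp h')
  have key2 : ∃ x ∈ B, x ≠ w ∧ f w x = q := by
    by_cases e1 : w1 = w
    · subst e1; exact ⟨w2, hw2, h12.symm, hq⟩
    by_cases e2 : w2 = w
    · subst e2; exact ⟨w1, hw1, h12, by rw [g.symm]; exact hq⟩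
    rcases h.inB g w hw w1 hw1 (Ne.symm e1) with h' | h'
    · exact ⟨w1, hw1, e1, h'⟩
    rcases h.inB g w hw w2 hw2 (Ne.symm e2) with h'' | h''
    · exact ⟨w2, hw2, e2, h''⟩
    · exact absurd hq (g.h1 w1 w w2 e1 (Ne.symm e2) h12 (by rw [g.symm]; exact h') h'')
  obtain ⟨x, hx, hxw, hfx⟩ := key2
  obtain ⟨a, b⟩ := key x hx hxw hfx
  exact ⟨x, hx, hxw, a, hfx, b⟩

theorem Nb.const (g : Good f p q s) (h : Nb f p q s v R B)
    (hB : ∃ w1 ∈ B, ∃ w2 ∈ B, w1 ≠ w2 ∧ f w1 w2 = q) :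
    ∀ u ∈ R, ∀ w ∈ B, ∀ w' ∈ B, f u w = s → f u w' = s := by
  have base : ∀ u ∈ R, ∀ w ∈ B, ∀ w' ∈ B, w ≠ w' → f w w' = q → f u w = s → f u w' = s := by
    intro u hu w hw w' hw' hww hq hs
    rcases h.cross g u hu w' hw' with h' | h'
    · exact absurd hs (g.h2 u w' w (h.disj g u hu w' hw') hww.symm (h.disj g u hu w hw) h'
        (by rw [g.symm]; exact hq))
    · exact h'
  intro u hu w hw w' hw' hs
  by_cases e : w = w'
  · exact e ▸ hs
  rcases h.inB g w hw w' hw' e with h' | h'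
  · exact base u hu w hw w' hw' e h' hs
  · obtain ⟨x, hx, hxw, hxw', q1, q2⟩ := h.common g hB w hw w' hw' e h'
    exact base u hu x hx w' hw' hxw' (by rw [g.symm]; exact q2)
      (base u hu w hw x hx hxw.symm q1 hs)

/-- at a `p`-pair in `B`, no two `s` from `u`. -/
theorem Nb.noss (g : Good f p q s) (h : Nb f p q s v R B) :
    ∀ u ∈ R, ∀ w ∈ B, ∀ w' ∈ B, w ≠ w' → f w w' = p → f u w = s → f u w' ≠ s := by
  intro u hu w hw w' hw' hww hp h1 h2
  exact g.h3 w u w' (h.disj g u hu w hw).symm (h.disj g u hu w' hw') hww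
    (by rw [g.symm]; exact h1) h2 hp

/-- at an `s`-pair in `R`, no two `q` from `w`. -/
theorem Nb.noqq (g : Good f p q s) (h : Nb f p q s v R B) :
    ∀ u ∈ R, ∀ u' ∈ R, ∀ w ∈ B, u ≠ u' → f u u' = s → f u w = q → f u' w ≠ q := by
  intro u hu u' hu' w hw huu hs h1 h2
  exact g.h2 u w u' (h.disj g u hu w hw) (h.disj g u' hu' w hw).symm huu
    h1 (by rw [g.symm]; exact h2) hs

/-- If `R` is an `s`-clique then contradiction. -/
theorem Nb.caseA {k : ℕ} (g : Good f p q s) (h : Nb f p q s v R B)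
    (hk : ∀ (x : Col) (S : Finset V), (∀ i ∈ S, ∀ j ∈ S, i ≠ j → f i j ≠ x) → S.card < k)
    (hR2 : 2 ≤ R.card) (hB2 : 2 ≤ B.card) (h5 : 5 ≤ R.card + B.card) (hsum : k ≤ R.card + B.card)
    (hR : ∀ u ∈ R, ∀ w ∈ R, u ≠ w → f u w = s) : False := by
  by_cases hB : ∃ w1 ∈ B, ∃ w2 ∈ B, w1 ≠ w2 ∧ f w1 w2 = q
  · have hBq : ∀ w ∈ B, ∀ w' ∈ B, w ≠ w' → f w w' = q := by
      intro w hw w' hw' hww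
      rcases h.inB g w hw w' hw' hww with h' | h'
      · exact h'
      exfalso
      have hall : ∀ u ∈ R, f u w = q := by
        intro u hu
        rcases h.cross g u hu w hw with h'' | h''
        · exact h''
        · exact absurd (h.const g hB u hu w hw w' hw' h'') (h.noss g u hu w hw w' hw' hww h' h'')
      obtain ⟨u1, hu1, u2, hu2, hne⟩ := Finset.one_lt_card.1 hR2
      exact h.noqq g u1 hu1 u2 hu2 w hw hne (hR u1 hu1 u2 hu2 hne) (hall u1 hu1) (hall u2 hu2)
    have hd : Disjoint R B := Finset.disjoint_left.2 fun a ha hb => h.disj g a ha a hb rfl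
    have := hk p (R ∪ B) (by
      intro i hi j hj hij
      have := g.pq; have := g.ps
      rcases Finset.mem_union.1 hi with hi | hi <;> rcases Finset.mem_union.1 hj with hj | hj
      · rw [hR i hi j hj hij]; exact g.ps.symm
      · rcases h.cross g i hi j hj with e | e <;> rw [e] <;> tauto
      · rw [g.symm]; rcases h.cross g j hj i hi with e | e <;> rw [e] <;> tauto
      · rw [hBq i hi j hj hij]; exact g.pq.symm)
    rw [Finset.card_union_of_disjoint hd] at this
    omega
  · have hBp : ∀ w ∈ B, ∀ w' ∈ B, w ≠ w' → f w w' = p := by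
      intro w hw w' hw' hww
      rcases h.inB g w hw w' hw' hww with h' | h'
      · exact absurd ⟨w, hw, w', hw', hww, h'⟩ hB
      · exact h'
    have A : ∀ u ∈ R, ∀ w ∈ B, ∀ w' ∈ B, w ≠ w' → f u w = q ∨ f u w' = q := by
      intro u hu w hw w' hw' hww
      have := h.noss g u hu w hw w' hw' hww (hBp w hw w' hw' hww)
      have := h.cross g u hu w hw
      have := h.cross g u hu w' hw'
      tauto
    have C : ∀ u ∈ R, ∀ u' ∈ R, ∀ w ∈ B, u ≠ u' → f u w = q → f u' w ≠ q := by
      intro u hu u' hu' w hw huu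
      exact h.noqq g u hu u' hu' w hw huu (hR u hu u' hu' huu)
    rcases (by omega : 2 < R.card ∨ 2 < B.card) with h3 | h3
    · obtain ⟨u1, u2, u3, m1, m2, m3, n12, n13, n23⟩ := Finset.two_lt_card_iff.1 h3
      obtain ⟨w1, k1, w2, k2, hne⟩ := Finset.one_lt_card.1 hB2
      have a1 := A u1 m1 w1 k1 w2 k2 hne
      have a2 := A u2 m2 w1 k1 w2 k2 hne
      have a3 := A u3 m3 w1 k1 w2 k2 hne
      have c1 := C u1 m1 u2 m2 w1 k1 n12
      have c2 := C u1 m1 u3 m3 w1 k1 n13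
      have c3 := C u2 m2 u3 m3 w1 k1 n23
      have c4 := C u1 m1 u2 m2 w2 k2 n12
      have c5 := C u1 m1 u3 m3 w2 k2 n13
      have c6 := C u2 m2 u3 m3 w2 k2 n23
      clear A C hR hk hB hBp
      grind
    · obtain ⟨w1, w2, w3, m1, m2, m3, n12, n13, n23⟩ := Finset.two_lt_card_iff.1 h3
      obtain ⟨u1, k1, u2, k2, hne⟩ := Finset.one_lt_card.1 hR2
      have a1 := A u1 k1 w1 m1 w2 m2 n12
      have a2 := A u1 k1 w1 m1 w3 m3 n13
      have a3 := A u1 k1 w2 m2 w3 m3 n23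
      have a4 := A u2 k2 w1 m1 w2 m2 n12
      have a5 := A u2 k2 w1 m1 w3 m3 n13
      have a6 := A u2 k2 w2 m2 w3 m3 n23
      have c1 := C u1 k1 u2 k2 w1 m1 hne
      have c2 := C u1 k1 u2 k2 w2 m2 hne
      have c3 := C u1 k1 u2 k2 w3 m3 hne
      clear A C hR hk hB hBp
      grind

theorem Nb.pair {k : ℕ} (g : Good f p q s) (h : Nb f p q s v R B)
    (hk : ∀ (x : Col) (S : Finset V), (∀ i ∈ S, ∀ j ∈ S, i ≠ j → f i j ≠ x) → S.card < k)
    (hR2 : 2 ≤ R.card) (hB2 : 2 ≤ B.card) (h5 : 5 ≤ R.card + B.card)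
    (hsum : k ≤ R.card + B.card) :
    ∃ w1 ∈ R, ∃ w2 ∈ R, w1 ≠ w2 ∧ f w1 w2 = p := by
  by_contra hc
  refine h.caseA g hk hR2 hB2 h5 hsum ?_
  intro u hu w hw huw
  rcases h.inR g u hu w hw huw with h' | h'
  · exact absurd ⟨u, hu, w, hw, huw, h'⟩ hc
  · exact h'

theorem Nb.exists_s {k : ℕ} (g : Good f p q s) (h : Nb f p q s v R B)
    (hk : ∀ (x : Col) (S : Finset V), (∀ i ∈ S, ∀ j ∈ S, i ≠ j → f i j ≠ x) → S.card < k)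
    (hsum : k ≤ R.card + B.card)
    (hR : ∃ u1 ∈ R, ∃ u2 ∈ R, u1 ≠ u2 ∧ f u1 u2 = p)
    (hB : ∃ w1 ∈ B, ∃ w2 ∈ B, w1 ≠ w2 ∧ f w1 w2 = q) :
    ∃ u ∈ R, ∀ w ∈ B, f u w = s := by
  by_contra hc
  push Not at hc
  have hall : ∀ u ∈ R, ∀ w ∈ B, f u w = q := by
    intro u hu w hw
    rcases h.cross g u hu w hw with h' | h'
    · exact h'
    · obtain ⟨w', hw', hn⟩ := hc u hu
      exact absurd (h.const g hB u hu w hw w' hw' h') hn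
  have hd : Disjoint R B := Finset.disjoint_left.2 fun a ha hb => h.disj g a ha a hb rfl
  have := g.qs
  have := g.ps
  obtain ⟨w, hw, -⟩ := hB
  have := hk s (R ∪ B) (by
    intro i hi j hj hij
    rcases Finset.mem_union.1 hi with hi | hi <;> rcases Finset.mem_union.1 hj with hj | hj
    · intro hs
      exact h.noqq g i hi j hj w hw hij hs (hall i hi w hw) (hall j hj w hw)
    · rw [hall i hi j hj]; tauto
    · rw [g.symm, hall j hj i hi]; tauto
    · rcases h.inB g i hi j hj hij with e | e <;> rw [e] <;> tauto)
  rw [Finset.card_union_of_disjoint hd] at this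
  omega

theorem Nb.mono {k : ℕ} (g : Good f p q s) (h : Nb f p q s v R B)
    (hk : ∀ (x : Col) (S : Finset V), (∀ i ∈ S, ∀ j ∈ S, i ≠ j → f i j ≠ x) → S.card < k)
    (hsum : k ≤ R.card + B.card)
    (hR : ∃ u1 ∈ R, ∃ u2 ∈ R, u1 ≠ u2 ∧ f u1 u2 = p)
    (hB : ∃ w1 ∈ B, ∃ w2 ∈ B, w1 ≠ w2 ∧ f w1 w2 = q) :
    ∀ w ∈ B, ∀ w' ∈ B, w ≠ w' → f w w' = q := by
  obtain ⟨u, hu, hs⟩ := h.exists_s g hk hsum hR hB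
  intro w hw w' hw' hww
  rcases h.inB g w hw w' hw' hww with h' | h'
  · exact h'
  · exact absurd (hs w' hw') (h.noss g u hu w hw w' hw' hww h' (hs w hw))

theorem Nb.final {k : ℕ} (g : Good f p q s) (h : Nb f p q s v R B)
    (hk : ∀ (x : Col) (S : Finset V), (∀ i ∈ S, ∀ j ∈ S, i ≠ j → f i j ≠ x) → S.card < k)
    (hsum : k ≤ R.card + B.card)
    (hR : ∃ u1 ∈ R, ∃ u2 ∈ R, u1 ≠ u2 ∧ f u1 u2 = p)
    (hB : ∃ w1 ∈ B, ∃ w2 ∈ B, w1 ≠ w2 ∧ f w1 w2 = q)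
    (hRp : ∀ w ∈ R, ∀ w' ∈ R, w ≠ w' → f w w' = p) : False := by
  have hBq := h.mono g hk hsum hR hB
  obtain ⟨u0, hu0, hs⟩ := h.exists_s g hk hsum hR hB
  have hcr : ∀ u ∈ R.erase u0, ∀ w ∈ B, f u w = q := by
    intro u hu w hw
    obtain ⟨hne, hu⟩ := Finset.mem_erase.1 hu
    rcases h.cross g u hu w hw with h' | h'
    · exact h'
    · exact absurd (hRp u hu u0 hu0 hne) (g.h3 u w u0 (h.disj g u hu w hw)
        (h.disj g u0 hu0 w hw).symm hne h' (by rw [g.symm]; exact hs w hw))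
  have hd : Disjoint (R.erase u0) B :=
    Finset.disjoint_left.2 fun a ha hb => h.disj g a (Finset.mem_of_mem_erase ha) a hb rfl
  have hv : v ∉ R.erase u0 ∪ B := by
    intro hv
    rcases Finset.mem_union.1 hv with hv | hv
    · exact (h.vR v (Finset.mem_of_mem_erase hv)).1 rfl
    · exact (h.vB v hv).1 rfl
  have e1 := g.qs
  have e2 := g.ps
  have hvS : ∀ i ∈ R.erase u0 ∪ B, f v i ≠ s := by
    intro i hi
    rcases Finset.mem_union.1 hi with hi | hi
    · rw [(h.vR i (Finset.mem_of_mem_erase hi)).2]; exact e2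
    · rw [(h.vB i hi).2]; exact e1
  have := hk s (insert v (R.erase u0 ∪ B)) (by
    intro i hi j hj hij
    rcases Finset.mem_insert.1 hi with rfl | hi' <;> rcases Finset.mem_insert.1 hj with rfl | hj'
    · exact absurd rfl hij
    · exact hvS j hj'
    · rw [g.symm]; exact hvS i hi'
    rcases Finset.mem_union.1 hi' with hi | hi <;> rcases Finset.mem_union.1 hj' with hj | hj
    · rw [hRp i (Finset.mem_of_mem_erase hi) j (Finset.mem_of_mem_erase hj) hij]; exact e2
    · rw [hcr i hi j hj]; exact e1
    · rw [g.symm, hcr j hj i hi]; exact e1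
    · rw [hBq i hi j hj hij]; exact e1)
  rw [Finset.card_insert_of_notMem hv, Finset.card_union_of_disjoint hd,
    Finset.card_erase_of_mem hu0] at this
  have := Finset.card_pos.2 ⟨u0, hu0⟩
  omega

theorem lower_abs [Fintype V] (k : ℕ) (g : Good f p q s) (v : V) (hk2 : 2 ≤ k)
    (hn : 2 * k - 1 ≤ Fintype.card V) (h7 : k = 4 → 8 ≤ Fintype.card V)
    (hk : ∀ (x : Col) (S : Finset V), (∀ i ∈ S, ∀ j ∈ S, i ≠ j → f i j ≠ x) → S.card < k) :
    False := by
  let N : Col → Finset V := fun x => {u | u ≠ v ∧ f v u = x}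
  have hN : ∀ x, ∀ u ∈ N x, u ≠ v ∧ f v u = x := by intro x u hu; simpa [N] using hu
  have nb1 : Nb f p q s v (N p) (N q) := ⟨hN p, hN q⟩
  have nb2 : Nb f q s p v (N q) (N s) := ⟨hN q, hN s⟩
  have nb3 : Nb f s p q v (N s) (N p) := ⟨hN s, hN p⟩
  have g2 := g.rot
  have g3 := g2.rot
  have hs : (Finset.univ : Finset V) = insert v (N p ∪ N q ∪ N s) := by
    ext u
    have := g.tri (f v u)
    simp [N]
    tauto
  have hcard : Fintype.card V ≤ (N p).card + (N q).card + (N s).card + 1 := by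
    rw [← Finset.card_univ, hs]
    have a1 := Finset.card_insert_le v (N p ∪ N q ∪ N s)
    have a2 := Finset.card_union_le (N p ∪ N q) (N s)
    have a3 := Finset.card_union_le (N p) (N q)
    omega
  have deg : ∀ x z, z ≠ x → (∀ i ∈ N x, ∀ j ∈ N x, i ≠ j → f i j ≠ z) → (N x).card + 1 < k := by
    intro x z hz hx
    have hv : v ∉ N x := fun hv => (hN x v hv).1 rfl
    rw [← Finset.card_insert_of_notMem hv]
    refine hk z _ ?_
    intro i hi j hj hij
    rcases Finset.mem_insert.1 hi with rfl | hi' <;> rcases Finset.mem_insert.1 hj with rfl | hj'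
    · exact absurd rfl hij
    · rw [(hN x j hj').2]; exact hz.symm
    · rw [g.symm, (hN x i hi').2]; exact hz.symm
    · exact hx i hi' j hj' hij
  have d1 := deg p q g.pq.symm (by
    intro i hi j hj hij
    have := g.pq; have := g.qs
    rcases nb1.inR g i hi j hj hij with e | e <;> rw [e] <;> tauto)
  have d2 := deg q s g.qs.symm (by
    intro i hi j hj hij
    have := g2.pq; have := g2.qs
    rcases nb2.inR g2 i hi j hj hij with e | e <;> rw [e] <;> tauto)
  have d3 := deg s p g.ps (by
    intro i hi j hj hij
    have := g3.pq; have := g3.qs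
    rcases nb3.inR g3 i hi j hj hij with e | e <;> rw [e] <;> tauto)
  have p1 := nb1.pair g hk (by omega) (by omega) (by omega) (by omega)
  have p2 := nb2.pair g2 hk (by omega) (by omega) (by omega) (by omega)
  have p3 := nb3.pair g3 hk (by omega) (by omega) (by omega) (by omega)
  exact nb1.final g hk (by omega) p1 p2 (nb3.mono g3 hk (by omega) p3 p1)

end Lower

theorem good_of_avoids {n : ℕ} (c : Coloring n) (h : Avoids c {Prrb, Pbby, Pyyr}) :
    Good c.col Col.r Col.b Col.y where
  symm := c.symm
  tri x := by cases x <;> simp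
  h1 u v w a b d e1 e2 e3 := h Prrb (by simp) ⟨u, v, w, a, b, d, by simp [triPattern, Prrb, *]⟩
  h2 u v w a b d e1 e2 e3 := h Pbby (by simp) ⟨u, v, w, a, b, d, by simp [triPattern, Pbby, *]⟩
  h3 u v w a b d e1 e2 e3 := h Pyyr (by simp) ⟨u, v, w, a, b, d, by simp [triPattern, Pyyr, *]⟩
  pq := by simp
  qs := by simp
  ps := by simp

theorem le_h2 {n : ℕ} (c : Coloring n) (h : Avoids c {Prrb, Pbby, Pyyr}) (k : ℕ) (hk2 : 2 ≤ k)
    (hn : 2 * k - 1 ≤ n) (h7 : k = 4 → 8 ≤ n) : k ≤ h2 c := by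
  by_contra hlt
  have hb : BddAbove {k | ∃ S : Finset (Fin n), TwoColored c S ∧ S.card = k} := by
    refine ⟨n, ?_⟩
    rintro _ ⟨S, -, rfl⟩
    simpa using Finset.card_le_univ S
  refine lower_abs k (good_of_avoids c h) ⟨0, by omega⟩ hk2 (by simpa using hn)
    (by simpa using h7) ?_
  intro x S hS
  have : S.card ≤ h2 c := le_csSup hb ⟨S, ⟨x, hS⟩, rfl⟩
  omega

theorem h2_le {n : ℕ} (c : Coloring n) (m : ℕ)
    (h : ∀ (x : Col) (S : Finset (Fin n)), (∀ i ∈ S, ∀ j ∈ S, i ≠ j → c.col i j ≠ x) →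
      S.card ≤ m) : h2 c ≤ m := by
  refine csSup_le ⟨0, ∅, ⟨Col.r, by simp⟩, by simp⟩ ?_
  rintro _ ⟨S, ⟨x, hx⟩, rfl⟩
  exact h x S hx

theorem h2n_eq {n : ℕ} (k : ℕ) (hk2 : 2 ≤ k)
    (hn : 2 * k - 1 ≤ n) (h7 : k = 4 → 8 ≤ n) (c : Coloring n)
    (hc : Avoids c {Prrb, Pbby, Pyyr})
    (h : ∀ (x : Col) (S : Finset (Fin n)), (∀ i ∈ S, ∀ j ∈ S, i ≠ j → c.col i j ≠ x) →
      S.card ≤ k) : h2n n {Prrb, Pbby, Pyyr} = k := by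
  apply le_antisymm
  · have h0 : h2n n {Prrb, Pbby, Pyyr} ≤ h2 c := Nat.sInf_le ⟨c, hc, rfl⟩
    exact h0.trans (h2_le c k h)
  · refine le_csInf ⟨_, c, hc, rfl⟩ ?_
    rintro _ ⟨c', hc', rfl⟩
    exact le_h2 c' hc' k hk2 hn h7

/-- The general construction. -/
def cgen (n : ℕ) : Coloring n where
  col i j := if i.val % 2 = j.val % 2 then Col.r else if i.val / 2 = j.val / 2 then Col.y else Col.b
  symm i j := by simp only [eq_comm]

/-- The cyclic coloring of `K_7`. -/
def cseven : Coloring 7 where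
  col i j := if i = j + 1 ∨ j = i + 1 then Col.r else if i = j + 2 ∨ j = i + 2 then Col.y else Col.b
  symm i j := by simp only [or_comm]

theorem avoids_of {n : ℕ} (c : Coloring n)
    (h : ∀ u v w : Fin n, u ≠ v → v ≠ w → u ≠ w →
      triPattern c u v w ≠ Prrb ∧ triPattern c u v w ≠ Pbby ∧ triPattern c u v w ≠ Pyyr) :
    Avoids c {Prrb, Pbby, Pyyr} := by
  rintro P hP ⟨u, v, w, a, b, d, e⟩
  have := h u v w a b d
  simp only [Set.mem_insert_iff, Set.mem_singleton_iff] at hP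
  rcases hP with rfl | rfl | rfl <;> tauto

theorem cseven_avoids : Avoids cseven {Prrb, Pbby, Pyyr} := by
  apply avoids_of
  decide +kernel

theorem cgen_avoids (n : ℕ) : Avoids (cgen n) {Prrb, Pbby, Pyyr} := by
  apply avoids_of
  intro u v w a b d
  have a' : u.val ≠ v.val := fun h => a (Fin.ext h)
  have b' : v.val ≠ w.val := fun h => b (Fin.ext h)
  have d' : u.val ≠ w.val := fun h => d (Fin.ext h)
  simp only [triPattern, cgen]
  split_ifs <;> first | (exfalso; omega) | decide

theorem cseven_free (x : Col) (S : Finset (Fin 7))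
    (hS : ∀ i ∈ S, ∀ j ∈ S, i ≠ j → cseven.col i j ≠ x) : S.card ≤ 3 := by
  have key : ∃ d : Fin 7, ∀ i, i + d ≠ i ∧ cseven.col (i + d) i = x := by
    cases x
    · exact ⟨1, by decide⟩
    · exact ⟨3, by decide⟩
    · exact ⟨2, by decide⟩
  obtain ⟨d, hd⟩ := key
  have hdis : Disjoint S (S.image (· + d)) := by
    refine Finset.disjoint_left.2 ?_
    intro a ha hb
    obtain ⟨j, hj, rfl⟩ := Finset.mem_image.1 hb
    exact hS _ ha j hj (hd j).1 (hd j).2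
  have h1 := Finset.card_union_of_disjoint hdis
  rw [Finset.card_image_of_injective _ (add_left_injective d)] at h1
  have h2 := Finset.card_le_univ (S ∪ S.image (· + d))
  simp only [Fintype.card_fin] at h2
  omega

theorem cgen_free (n : ℕ) (hn : 3 ≤ n) (x : Col) (S : Finset (Fin n))
    (hS : ∀ i ∈ S, ∀ j ∈ S, i ≠ j → (cgen n).col i j ≠ x) : S.card ≤ (n + 1) / 2 := by
  have half : (∀ i ∈ S, ∀ j ∈ S, i.val / 2 = j.val / 2 → i = j) → S.card ≤ (n + 1) / 2 := by
    intro h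
    rw [← Finset.card_range ((n + 1) / 2)]
    refine Finset.card_le_card_of_injOn (fun i => i.val / 2) ?_ ?_
    · intro i _
      have := i.isLt
      simp
      omega
    · intro i hi j hj hij
      exact h i hi j hj hij
  simp only [cgen] at hS
  cases x
  · have : S.card ≤ (Finset.range 2).card := by
      refine Finset.card_le_card_of_injOn (fun i => i.val % 2) ?_ ?_
      · intro i _
        simp
        omega
      · intro i hi j hj hij
        by_contra hne
        exact hS i hi j hj hne (if_pos hij)
    simp at this
    omega
  · by_cases hp : ∀ i ∈ S, ∀ j ∈ S, i.val % 2 = j.val % 2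
    · apply half
      intro i hi j hj hij
      have := hp i hi j hj
      ext
      omega
    · push Not at hp
      obtain ⟨i, hi, j, hj, hij⟩ := hp
      have key : ∀ a ∈ S, ∀ b ∈ S, a.val % 2 ≠ b.val % 2 → a.val / 2 = b.val / 2 := by
        intro a ha b hb hab
        by_contra hne
        exact hS a ha b hb (by rintro rfl; exact hab rfl) (by rw [if_neg hab, if_neg hne])
      have hsub : S ⊆ {i, j} := by
        intro a ha
        have h1 := key i hi j hj hij
        have h2 := key a ha i hi
        have h3 := key a ha j hj
        simp only [Finset.mem_insert, Finset.mem_singleton, Fin.ext_iff]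
        omega
      have := (Finset.card_le_card hsub).trans Finset.card_le_two
      omega
  · apply half
    intro i hi j hj hij
    by_contra hne
    have : i.val ≠ j.val := fun h => hne (Fin.ext h)
    exact hS i hi j hj hne (by rw [if_neg (by omega), if_pos hij])

theorem stmt9 :
    (∀ n : ℕ, 3 ≤ n → n ≠ 7 → h2n n {Prrb, Pbby, Pyyr} = (n + 1) / 2) ∧
    h2n 7 {Prrb, Pbby, Pyyr} = 3 := by
  constructor
  · intro n hn h7
    exact h2n_eq _ (by omega) (by omega) (by omega) (cgen n) (cgen_avoids n) (cgen_free n hn)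
  · exact h2n_eq 3 (by omega) (by omega) (by omega) cseven cseven_avoids cseven_free
end

section
/- Let H = {rrb, bbr, rby} (the patterns: a triangle with two red edges and one blue edge, a triangle with two blue edges and one red edge, and a rainbow triangle with one edge of each color). Then for every integer n ≥ 3, h_2(n, H) = ⌈n/2⌉ + 1. -/
lemma h2_bdd {n : ℕ} (c : Coloring n) :
    BddAbove {k | ∃ S : Finset (Fin n), TwoColored c S ∧ S.card = k} := by
  refine ⟨n, ?_⟩
  rintro k ⟨S, -, rfl⟩
  simpa using S.card_le_univ

lemma le_h2_s10 {n : ℕ} (c : Coloring n) (S : Finset (Fin n)) (h : TwoColored c S) :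
    S.card ≤ h2 c := le_csSup (h2_bdd c) ⟨S, h, rfl⟩

lemma h2_le_s10 {n : ℕ} (c : Coloring n) (k : ℕ) (h : ∀ S, TwoColored c S → S.card ≤ k) :
    h2 c ≤ k := by
  apply csSup_le
  · exact ⟨0, ∅, ⟨Col.r, by simp⟩, by simp⟩
  · rintro _ ⟨S, hS, rfl⟩
    exact h S hS

/-- No vertex is incident with both a red and a blue edge. -/
lemma no_both {n : ℕ} (c : Coloring n) (h : Avoids c {Prrb, Pbbr, Prby}) (u v w : Fin n)
    (huv : u ≠ v) (huw : u ≠ w) (h1 : c.col u v = Col.r) (h2 : c.col u w = Col.b) : False := by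
  have hvw : v ≠ w := by
    rintro rfl
    rw [h1] at h2
    cases h2
  cases h3 : c.col v w with
  | r =>
    refine h Prrb (by simp) ⟨u, v, w, huv, hvw, huw, ?_⟩
    simp only [triPattern, Prrb, h1, h2, h3]
  | b =>
    refine h Pbbr (by simp) ⟨u, v, w, huv, hvw, huw, ?_⟩
    simp only [triPattern, Pbbr, h1, h2, h3]
    decide
  | y =>
    refine h Prby (by simp) ⟨u, v, w, huv, hvw, huw, ?_⟩
    simp only [triPattern, Prby, h1, h2, h3]
    decide

open Classical in
/-- The vertices incident with an edge of color `x`. -/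
noncomputable def inc {n : ℕ} (c : Coloring n) (x : Col) : Finset (Fin n) :=
  Finset.univ.filter (fun u => ∃ v, u ≠ v ∧ c.col u v = x)

lemma mem_inc {n : ℕ} (c : Coloring n) (x : Col) (u : Fin n) :
    u ∈ inc c x ↔ ∃ v, u ≠ v ∧ c.col u v = x := by simp [inc]

lemma inc_bound {n : ℕ} (c : Coloring n) (x : Col) :
    n ≤ h2 c ∨ n + 1 ≤ h2 c + (inc c x).card := by
  rcases (inc c x).eq_empty_or_nonempty with he | ⟨w, hw⟩
  · left
    have := le_h2_s10 c Finset.univ ⟨x, fun i _ j _ hij hx => by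
      have : i ∈ inc c x := (mem_inc c x i).2 ⟨j, hij, hx⟩
      simp [he] at this⟩
    simpa using this
  · right
    have := le_h2_s10 c (insert w (inc c x)ᶜ) ⟨x, fun i hi j hj hij hx => by
      have h1 : i ∈ inc c x := (mem_inc c x i).2 ⟨j, hij, hx⟩
      have h2 : j ∈ inc c x := (mem_inc c x j).2 ⟨i, hij.symm, by rw [c.symm, hx]⟩
      simp [h1] at hi
      simp [h2] at hj
      exact hij (hi.trans hj.symm)⟩
    rw [Finset.card_insert_of_notMem (by simpa using hw), Finset.card_compl,
      Fintype.card_fin] at this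
    omega

lemma lower_s10 {n : ℕ} (hn : 3 ≤ n) (c : Coloring n) (h : Avoids c {Prrb, Pbbr, Prby}) :
    (n + 1) / 2 + 1 ≤ h2 c := by
  have hd : Disjoint (inc c Col.r) (inc c Col.b) := by
    rw [Finset.disjoint_left]
    intro u h1 h2
    obtain ⟨v, huv, hv⟩ := (mem_inc _ _ _).1 h1
    obtain ⟨w, huw, hw⟩ := (mem_inc _ _ _).1 h2
    exact no_both c h u v w huv huw hv hw
  have hc := Finset.card_le_univ (inc c Col.r ∪ inc c Col.b)
  rw [Finset.card_union_of_disjoint hd, Fintype.card_fin] at hc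
  have h1 := inc_bound c Col.r
  have h2 := inc_bound c Col.b
  omega

/-- The extremal coloring: a red clique, a blue clique, yellow in between. -/
def ext (n : ℕ) : Coloring n where
  col i j := if i.val < n / 2 then (if j.val < n / 2 then Col.r else Col.y)
    else (if j.val < n / 2 then Col.y else Col.b)
  symm i j := by split_ifs <;> rfl

lemma ext_avoids (n : ℕ) : Avoids (ext n) {Prrb, Pbbr, Prby} := by
  rintro P hP ⟨u, v, w, -, -, -, h⟩
  simp only [Set.mem_insert_iff, Set.mem_singleton_iff] at hP
  rcases hP with rfl | rfl | rfl <;> revert h <;>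
    simp only [triPattern, ext, Prrb, Pbbr, Prby] <;> split_ifs <;> decide

lemma ext_upper (n : ℕ) (hn : 3 ≤ n) : h2 (ext n) ≤ (n + 1) / 2 + 1 := by
  apply h2_le_s10
  rintro S ⟨x, hx⟩
  have hs := Finset.card_filter_add_card_filter_not (s := S) (fun i => i.val < n / 2)
  have hA : (S.filter (fun i => i.val < n / 2)).card ≤ n / 2 := by
    have := Finset.card_le_card_of_injOn (s := S.filter (fun i => i.val < n / 2))
      (t := Finset.range (n / 2)) Fin.val (by intro i hi; simp at hi ⊢; exact hi.2)
      Fin.val_injective.injOn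
    simpa using this
  have hB : (S.filter (fun i => ¬ i.val < n / 2)).card ≤ n - n / 2 := by
    have := Finset.card_le_card_of_injOn (s := S.filter (fun i => ¬ i.val < n / 2))
      (t := Finset.Ico (n / 2) n) Fin.val (by intro i hi; simp at hi ⊢; exact hi.2)
      Fin.val_injective.injOn
    simpa using this
  cases x with
  | r =>
    have : (S.filter (fun i => i.val < n / 2)).card ≤ 1 := by
      rw [Finset.card_le_one]
      intro i hi j hj
      rw [Finset.mem_filter] at hi hj
      by_contra hij
      exact hx i hi.1 j hj.1 hij (by simp [ext, hi.2, hj.2])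
    omega
  | b =>
    have : (S.filter (fun i => ¬ i.val < n / 2)).card ≤ 1 := by
      rw [Finset.card_le_one]
      intro i hi j hj
      rw [Finset.mem_filter] at hi hj
      by_contra hij
      exact hx i hi.1 j hj.1 hij (by simp only [ext, if_neg hi.2, if_neg hj.2])
    omega
  | y =>
    rcases (S.filter (fun i => i.val < n / 2)).eq_empty_or_nonempty with he | ⟨i, hi⟩
    · rw [he, Finset.card_empty] at hs
      omega
    · have : S.filter (fun i => ¬ i.val < n / 2) = ∅ := by
        rw [Finset.eq_empty_iff_forall_notMem]
        intro j hj
        rw [Finset.mem_filter] at hi hj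
        refine hx i hi.1 j hj.1 ?_ (by simp only [ext, if_pos hi.2, if_neg hj.2])
        rintro rfl
        exact hj.2 hi.2
      rw [this, Finset.card_empty] at hs
      omega

theorem stmt10 (n : ℕ) (hn : 3 ≤ n) :
    h2n n {Prrb, Pbbr, Prby} = (n + 1) / 2 + 1 := by
  apply le_antisymm
  · refine le_trans (b := h2 (ext n)) ?_ (ext_upper n hn)
    unfold h2n
    exact Nat.sInf_le ⟨ext n, ext_avoids n, rfl⟩
  · unfold h2n
    refine le_csInf ⟨h2 (ext n), ext n, ext_avoids n, rfl⟩ ?_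
    rintro _ ⟨c, hc, rfl⟩
    exact lower_s10 hn c hc
end
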